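/- arXiv:1704.07111 — 3 statements merged into one kernel-verified Lean document; each statement's English description precedes it below -/
import Mathlib

section
/- Let G be a 2-edge-connected graph and T ⊆ V(G). Then G contains a T-join if and only if T is infinite or |T| is even. -/
namespace SimpleGraph

variable {V : Type*}

/-- A `T`-join in `G`: a set `P` of (oriented) paths, pairwise edge-disjoint, each with two
distinct endpoints lying in `T`, such that every vertex of `T` is an endpoint of exactly one
path of `P`. -/
def IsTJoin (G : SimpleGraph V) (T : Set V) (P : Set (Σ u : V, Σ v : V, G.Walk u v)) : Prop :=
  (∀ p ∈ P, p.2.2.IsPath ∧ p.1 ≠ p.2.1 ∧ p.1 ∈ T ∧ p.2.1 ∈ T) ∧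
  (∀ p ∈ P, ∀ q ∈ P, p ≠ q → ∀ e ∈ p.2.2.edges, e ∉ q.2.2.edges) ∧
  (∀ t ∈ T, ∃! p, p ∈ P ∧ (p.1 = t ∨ p.2.1 = t))

/-- `G` contains a `T`-join. -/
def HasTJoin (G : SimpleGraph V) (T : Set V) : Prop := ∃ P, G.IsTJoin T P

end SimpleGraph

namespace SimpleGraph

variable {V : Type*}

/-- A graph is 2-edge-connected if it is connected and stays connected after deleting any
single edge. -/
def TwoEdgeConnected (G : SimpleGraph V) : Prop :=
  G.Connected ∧ ∀ e ∈ G.edgeSet, (G.deleteEdges {e}).Connected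

end SimpleGraph

namespace TJ

open SimpleGraph
universe u
variable {V : Type u} {G : SimpleGraph V}

theorem family {ι : Type*} (x : ι × Bool → V) (hx : Function.Injective x) (T : Set V)
    (hT : Set.range x = T) (w : ∀ i, G.Walk (x (i, false)) (x (i, true)))
    (hw : ∀ i j, i ≠ j → ∀ e ∈ (w i).edges, e ∉ (w j).edges) : G.HasTJoin T := by
  classical
  refine ⟨Set.range (fun i => ⟨x (i, false), x (i, true), (w i).bypass⟩), ?_, ?_, ?_⟩
  · rintro _ ⟨i, rfl⟩
    refine ⟨(w i).bypass_isPath, ?_, ?_, ?_⟩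
    · intro h
      have := hx h
      simp at this
    · exact hT ▸ ⟨_, rfl⟩
    · exact hT ▸ ⟨_, rfl⟩
  · rintro _ ⟨i, rfl⟩ _ ⟨j, rfl⟩ hij e he he'
    refine hw i j ?_ e ((w i).edges_bypass_subset_edges he) ((w j).edges_bypass_subset_edges he')
    rintro rfl; exact hij rfl
  · intro t ht
    rw [← hT] at ht
    obtain ⟨⟨i, b⟩, rfl⟩ := ht
    refine ⟨_, ⟨⟨i, rfl⟩, ?_⟩, ?_⟩
    · cases b <;> simp
    · rintro _ ⟨⟨j, rfl⟩, h⟩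
      have : j = i := by
        rcases h with h | h <;> · have := hx h; simp at this; exact this.1
      subst this; rfl

theorem even_of_hasTJoin {T : Set V} (h : G.HasTJoin T) : Even T.ncard := by
  obtain ⟨P, h1, h2, h3⟩ := h
  let f : P × Bool → T := fun p => bif p.2 then ⟨p.1.1.1, (h1 _ p.1.2).2.2.1⟩ else
    ⟨p.1.1.2.1, (h1 _ p.1.2).2.2.2⟩
  have hf : Function.Bijective f := by
    constructor
    · rintro ⟨⟨p, hp⟩, b⟩ ⟨⟨q, hq⟩, c⟩ h
      have e : p = q := by
        have := congrArg Subtype.val h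
        refine (h3 (f ⟨⟨p, hp⟩, b⟩) (f ⟨⟨p, hp⟩, b⟩).2).unique ⟨hp, ?_⟩ ⟨hq, ?_⟩
        · cases b <;> simp [f]
        · rw [h]; cases c <;> simp [f]
      subst e
      have := (h1 _ hp).2.1
      cases b <;> cases c <;> first | rfl | skip
      · exact absurd (congrArg Subtype.val h).symm this
      · exact absurd (congrArg Subtype.val h) this
    · rintro ⟨t, ht⟩
      obtain ⟨p, ⟨hp, h⟩, -⟩ := h3 t ht
      rcases h with h | h
      · exact ⟨⟨⟨p, hp⟩, true⟩, by simp [f, h]⟩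
      · exact ⟨⟨⟨p, hp⟩, false⟩, by simp [f, h]⟩
  have := Nat.card_congr (Equiv.ofBijective f hf)
  rw [Nat.card_prod] at this
  have h4 : T.ncard = Nat.card P * 2 := by
    rw [← Nat.card_coe_set_eq, ← this]; simp
  rw [h4]; simp

theorem pairing (K : Type u) (h : Infinite K ∨ (Finite K ∧ Even (Nat.card K))) :
    ∃ ι : Type u, Nonempty (K ≃ ι × Bool) := by
  rcases h with h | ⟨h, n, hn⟩
  · refine ⟨K, ?_⟩
    rw [← Cardinal.lift_mk_eq']
    have := Cardinal.mul_eq_left (Cardinal.aleph0_le_mk K)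
      ((Cardinal.natCast_lt_aleph0 (n := 2)).le.trans (Cardinal.aleph0_le_mk K)) (by simp)
    simpa using this.symm
  · have := Finite.equivFin K
    refine ⟨ULift (Fin n), ⟨(Finite.equivFin K).trans ?_⟩⟩
    have e : ULift.{u} (Fin n) × Bool ≃ Fin (Nat.card K) := by
      refine (Equiv.prodCongr Equiv.ulift (finTwoEquiv.symm)).trans ?_
      refine finProdFinEquiv.trans (finCongr (by omega))
    exact e.symm

theorem token (K : Type u) (loc owner : K → V) (ho : Function.Injective owner) (T : Set V)
    (hT : Set.range owner = T) (w : ∀ k, G.Walk (owner k) (loc k))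
    (hw : ∀ i j, i ≠ j → ∀ e ∈ (w i).edges, e ∉ (w j).edges)
    (hf : ∀ v, {k | loc k = v}.Infinite ∨ ({k | loc k = v}.Finite ∧ Even {k | loc k = v}.ncard)) :
    G.HasTJoin T := by
  have h1 : ∀ v, ∃ ι : Type u, Nonempty ({k // loc k = v} ≃ ι × Bool) := by
    intro v
    apply pairing
    rcases hf v with h | h
    · exact Or.inl (Set.infinite_coe_iff.2 h)
    · exact Or.inr h
  choose ι hι using h1
  let φ := fun v => (hι v).some
  let y : (Σ v, ι v) × Bool → K := fun i => ((φ i.1.1).symm (i.1.2, i.2)).1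
  have hy : ∀ i, loc (y i) = i.1.1 := fun i => ((φ i.1.1).symm (i.1.2, i.2)).2
  have hyi : Function.Injective y := by
    rintro ⟨⟨v, a⟩, b⟩ ⟨⟨v', a'⟩, b'⟩ h
    have : v = v' := by
      have := congrArg loc h
      simpa [hy] using this
    subst this
    have := (φ v).symm.injective (Subtype.ext h)
    simp at this
    simp [this]
  have hys : Function.Surjective y := by
    intro k
    refine ⟨⟨⟨loc k, (φ (loc k) ⟨k, rfl⟩).1⟩, (φ (loc k) ⟨k, rfl⟩).2⟩, ?_⟩
    simp [y]
  refine family (ι := Σ v, ι v) (fun i => owner (y i)) (ho.comp hyi) T ?_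
    (fun i => (w (y (i, false))).append
      ((w (y (i, true))).reverse.copy ((hy _).trans (hy (i, false)).symm) rfl)) ?_
  · rw [← hT]
    exact hys.range_comp owner
  · intro i j hij e he he'
    simp only [Walk.edges_append, Walk.edges_copy, Walk.edges_reverse, List.mem_append,
      List.mem_reverse] at he he'
    have : ∀ b c, y (i, b) ≠ y (j, c) := fun b c h => hij (congrArg Prod.fst (hyi h))
    rcases he with he | he <;> rcases he' with he' | he' <;> exact hw _ _ (this _ _) e he he'

end TJ

namespace TJ

open SimpleGraph
universe u

section Tree
variable {V : Type u}

/-- The children of `v` lying in `U`. -/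
def ch (π : V → V) (U : Set V) (v : V) : Set V := {c | c ∈ U ∧ π c = v}

/-- The parity condition at `v`, with `b` saying whether `v` sends a path up. -/
def Cond (π : V → V) (T U : Set V) (v : V) (b : Prop) : Prop :=
  (ch π U v).Infinite ∨ (Even (ch π U v).ncard ↔ (v ∈ T ↔ b))

/-- A vertex of `T` is reachable going down through `U`. -/
inductive Rch (π : V → V) (T U : Set V) : V → Prop
  | base (v : V) (h : v ∈ T) : Rch π T U v
  | step (c : V) (h : c ∈ U) (hc : Rch π T U c) : Rch π T U (π c)

theorem Rch.mono {π : V → V} {T U U' : Set V} (h : U ⊆ U') {v : V} (hv : Rch π T U v) :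
    Rch π T U' v := by
  induction hv with
  | base v h => exact .base v h
  | step c hc _ ih => exact .step c (h hc) ih

/-- Partial solutions. -/
structure Good (π : V → V) (r : V) (T W U : Set V) : Prop where
  sub : U ⊆ W
  root : r ∉ W
  down : ∀ c, c ≠ r → π c ∈ W → c ∈ W
  cond : ∀ v ∈ W, Cond π T U v (v ∈ U)
  rch : ∀ v ∈ U, Rch π T U v

theorem ch_eq {π : V → V} {r : V} {T W U U' : Set V} (h : Good π r T W U) (hr : r ∉ U')
    (he : U' ∩ W = U) {v : V} (hv : v ∈ W) : ch π U' v = ch π U v := by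
  ext c
  simp only [ch, Set.mem_ofPred_eq, ← he, Set.mem_inter_iff]
  constructor
  · rintro ⟨h1, rfl⟩
    refine ⟨⟨h1, h.down c ?_ hv⟩, rfl⟩
    rintro rfl; exact hr h1
  · rintro ⟨⟨h1, _⟩, h2⟩; exact ⟨h1, h2⟩

theorem exists_max (π : V → V) (r : V) (T : Set V) : ∃ W U, Good π r T W U ∧
    ∀ W' U', Good π r T W' U' → W ⊆ W' → U' ∩ W = U → W' ⊆ W := by
  let P := {p : Set V × Set V // Good π r T p.1 p.2}
  let R : P → P → Prop := fun p q => p.1.1 ⊆ q.1.1 ∧ q.1.2 ∩ p.1.1 = p.1.2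
  have key : ∃ m : P, ∀ a, R m a → R a m := by
    apply exists_maximal_of_chains_bounded
    · intro c hc
      have hU : ∀ p ∈ c, (⋃ q ∈ c, q.1.2) ∩ p.1.1 = p.1.2 := by
        intro p hp
        ext x
        simp only [Set.mem_inter_iff, Set.mem_iUnion, exists_prop]
        constructor
        · rintro ⟨⟨q, hq, hx⟩, hxp⟩
          by_cases hpq : p = q
          · subst hpq; exact hx
          rcases hc hp hq hpq with h | h
          · rw [← h.2]; exact ⟨hx, hxp⟩
          · have : x ∈ p.1.2 ∩ q.1.1 := by rw [h.2]; exact hx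
            exact this.1
        · intro h
          exact ⟨⟨p, hp, h⟩, p.2.sub h⟩
      have hr : r ∉ ⋃ q ∈ c, q.1.2 := by
        simp only [Set.mem_iUnion, not_exists]
        intro q hq h
        exact q.2.root (q.2.sub h)
      refine ⟨⟨(⋃ p ∈ c, p.1.1, ⋃ p ∈ c, p.1.2), ?_⟩, ?_⟩
      · constructor
        · intro x hx
          simp only [Set.mem_iUnion, exists_prop] at hx ⊢
          obtain ⟨p, hp, hx⟩ := hx
          exact ⟨p, hp, p.2.sub hx⟩
        · simp only [Set.mem_iUnion, not_exists]
          intro q hq h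
          exact q.2.root h
        · intro x hx hπ
          simp only [Set.mem_iUnion, exists_prop] at hπ ⊢
          obtain ⟨p, hp, h⟩ := hπ
          exact ⟨p, hp, p.2.down x hx h⟩
        · intro v hv
          simp only [Set.mem_iUnion, exists_prop] at hv
          obtain ⟨p, hp, h⟩ := hv
          have h1 := p.2.cond v h
          have h2 := ch_eq p.2 hr (hU p hp) h
          have h3 : v ∈ (⋃ p ∈ c, p.1.2) ↔ v ∈ p.1.2 := by
            rw [← hU p hp]; simp [h]
          simp only [Cond, h3, h2] at h1 ⊢
          exact h1
        · intro v hv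
          have hv' := hv
          simp only [Set.mem_iUnion, exists_prop] at hv'
          obtain ⟨p, hp, h⟩ := hv'
          refine (p.2.rch v h).mono ?_
          exact Set.subset_biUnion_of_mem (u := fun p : P => p.1.2) hp
      · intro p hp
        exact ⟨Set.subset_biUnion_of_mem (u := fun p : P => p.1.1) hp, hU p hp⟩
    · rintro a b c ⟨h1, h2⟩ ⟨h3, h4⟩
      refine ⟨h1.trans h3, ?_⟩
      rw [← h2, ← h4, Set.inter_assoc, Set.inter_eq_self_of_subset_right h1]
  obtain ⟨m, hm⟩ := key
  exact ⟨m.1.1, m.1.2, m.2, fun W' U' h1 h2 h3 => (hm ⟨(W', U'), h1⟩ ⟨h2, h3⟩).1⟩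

/-- Rank used in the second step. -/
def DD (π : V → V) (r : V) (T W U : Set V) : ℕ → V → Prop
  | 0, v => ¬ Cond π T U v False
  | n + 1, v => ∃ c, c ≠ r ∧ c ∉ W ∧ π c = v ∧ DD π r T W U n c

/-- The top-down extension. -/
def upn (π : V → V) (r : V) (T W U : Set V) (κ : V → V) : ℕ → V → Prop
  | 0, _ => False
  | n + 1, v => v ≠ r ∧ v ∉ W ∧ π v ≠ r ∧ π v ∉ W ∧ κ (π v) = v ∧
      ¬ Cond π T U (π v) (upn π r T W U κ n (π v))

/-- Rank for reachability. -/
def RN (π : V → V) (T U : Set V) : ℕ → V → Prop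
  | 0, v => v ∈ T
  | n + 1, v => ∃ c ∈ U, π c = v ∧ RN π T U n c

theorem Rch.rn {π : V → V} {T U : Set V} {v : V} (hv : Rch π T U v) : ∃ n, RN π T U n v := by
  induction hv with
  | base v h => exact ⟨0, h⟩
  | step c hc _ ih => obtain ⟨n, hn⟩ := ih; exact ⟨n + 1, c, hc, rfl, hn⟩

theorem ulemma (π : V → V) (r : V) (d : V → ℕ) (hd : ∀ v, v ≠ r → d v = d (π v) + 1)
    (T : Set V) : ∃ U : Set V, r ∉ U ∧ (∀ v, v ≠ r → Cond π T U v (v ∈ U)) ∧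
      ∃ (κ : V → V) (ρ : V → ℕ), ∀ v ∈ U, v ∉ T → κ v ∈ U ∧ π (κ v) = v ∧ ρ (κ v) < ρ v := by
  classical
  suffices ∃ U : Set V, r ∉ U ∧ (∀ v, v ≠ r → Cond π T U v (v ∈ U)) ∧ ∀ v ∈ U, Rch π T U v by
    obtain ⟨U, h1, h2, h3⟩ := this
    refine ⟨U, h1, h2, ?_⟩
    have h4 : ∀ v ∈ U, ∃ n, RN π T U n v := fun v hv => (h3 v hv).rn
    let ρ : V → ℕ := fun v => if h : v ∈ U then Nat.find (h4 v h) else 0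
    have : ∀ v, ∃ c, v ∈ U → v ∉ T → c ∈ U ∧ π c = v ∧ ρ c < ρ v := by
      intro v
      by_cases hv : v ∈ U
      · by_cases hT : v ∈ T
        · exact ⟨v, fun _ h => absurd hT h⟩
        have hs := Nat.find_spec (h4 v hv)
        have hρ : ρ v = Nat.find (h4 v hv) := by simp [ρ, hv]
        rw [← hρ] at hs
        rcases hn : ρ v with _ | n
        · rw [hn] at hs; exact absurd hs hT
        · rw [hn] at hs
          obtain ⟨c, hc, hp, hR⟩ := hs
          refine ⟨c, fun _ _ => ⟨hc, hp, ?_⟩⟩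
          have : ρ c ≤ n := by
            simp only [ρ, hc, dif_pos]
            exact Nat.find_min' _ hR
          omega
      · exact ⟨v, fun h => absurd h hv⟩
    choose κ hκ using this
    exact ⟨κ, ρ, hκ⟩
  obtain ⟨W, U, hg, hmax⟩ := exists_max π r T
  have hπ : ∀ v, v ≠ r → π v ≠ v := by
    intro v hv h
    have := hd v hv
    rw [h] at this; omega
  have hrU : r ∉ U := fun h => hg.root (hg.sub h)
  -- (a)
  have ha : ∀ v, v ≠ r → v ∉ W → ∃ c, c ≠ r ∧ c ∉ W ∧ π c = v := by
    intro v hv hvW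
    by_contra hcon
    push Not at hcon
    have hvU : v ∉ U := fun h => hvW (hg.sub h)
    have hdown : ∀ c, c ≠ r → π c ∈ insert v W → c ∈ insert v W := by
      intro c hc h
      rcases h with h | h
      · right
        by_contra hcW
        exact hcon c hc hcW h
      · exact Or.inr (hg.down c hc h)
    by_cases hC : Cond π T U v False
    · have : Good π r T (insert v W) U := by
        refine ⟨fun x hx => Or.inr (hg.sub hx), ?_, hdown, ?_, hg.rch⟩
        · rintro (h | h)
          · exact hv h.symm
          · exact hg.root h
        · rintro x (rfl | hx)
          · simpa [hvU] using hC
          · exact hg.cond x hx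
      exact hvW (hmax _ _ this (Set.subset_insert _ _)
        (Set.inter_eq_left.2 hg.sub) (Set.mem_insert _ _))
    · have hch : ∀ x ∈ insert v W, ch π (insert v U) x = ch π U x := by
        intro x hx
        ext c
        simp only [ch, Set.mem_ofPred_eq, Set.mem_insert_iff]
        constructor
        · rintro ⟨rfl | h, h2⟩
          · exfalso
            rcases hx with rfl | hx
            · exact hπ _ hv h2
            · rw [← h2] at hx; exact hvW (hg.down _ hv hx)
          · exact ⟨h, h2⟩
        · rintro ⟨h, h2⟩; exact ⟨Or.inr h, h2⟩
      have : Good π r T (insert v W) (insert v U) := by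
        refine ⟨Set.insert_subset_insert hg.sub, ?_, hdown, ?_, ?_⟩
        · rintro (h | h)
          · exact hv h.symm
          · exact hg.root h
        · intro x hx
          rw [Cond, hch x hx]
          rcases hx with rfl | hx
          · simp only [Cond] at hC
            simp only [Set.mem_insert_iff, true_or]
            tauto
          · have hxv : x ≠ v := by rintro rfl; exact hvW hx
            simpa [hxv, Cond] using hg.cond x hx
        · rintro x (rfl | hx)
          · by_cases hxT : x ∈ T
            · exact .base x hxT
            · simp only [Cond] at hC
              have hne : (ch π U x).Nonempty := by
                by_contra hne
                rw [Set.not_nonempty_iff_eq_empty] at hne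
                simp [hne, hxT] at hC
              obtain ⟨c, hc, rfl⟩ := hne
              exact .step c (Or.inr hc) ((hg.rch c hc).mono (Set.subset_insert _ _))
          · exact (hg.rch x hx).mono (Set.subset_insert _ _)
      refine hvW (hmax _ _ this (Set.subset_insert _ _) ?_ (Set.mem_insert _ _))
      ext x
      constructor
      · rintro ⟨rfl | h, h2⟩
        · exact absurd h2 hvW
        · exact h
      · intro h; exact ⟨Or.inr h, hg.sub h⟩
  -- (b)
  have hb : ∀ v, v ≠ r → v ∉ W → ∃ n, DD π r T W U n v := by
    intro v hv hvW
    by_contra hcon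
    push Not at hcon
    let N : Set V := {v | v ≠ r ∧ v ∉ W ∧ ∀ n, ¬ DD π r T W U n v}
    have : Good π r T (W ∪ N) U := by
      refine ⟨fun x hx => Or.inl (hg.sub hx), ?_, ?_, ?_, hg.rch⟩
      · rintro (h | h)
        · exact hg.root h
        · exact h.1 rfl
      · rintro c hc (h | h)
        · exact Or.inl (hg.down c hc h)
        · by_cases hcW : c ∈ W
          · exact Or.inl hcW
          · exact Or.inr ⟨hc, hcW, fun n hn => h.2.2 (n + 1) ⟨c, hc, hcW, rfl, hn⟩⟩
      · rintro x (hx | hx)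
        · exact hg.cond x hx
        · have h0 := hx.2.2 0
          simp only [DD, not_not] at h0
          have hxU : x ∉ U := fun h => hx.2.1 (hg.sub h)
          simpa [hxU] using h0
    exact hvW (hmax _ _ this Set.subset_union_left (Set.inter_eq_left.2 hg.sub)
      (Or.inr ⟨hv, hvW, hcon⟩))
  let h : V → ℕ := fun v => if hv : v ≠ r ∧ v ∉ W then Nat.find (hb v hv.1 hv.2) else 0
  have hc : ∀ v, ∃ c, v ≠ r → v ∉ W → c ≠ r ∧ c ∉ W ∧ π c = v ∧
      (Cond π T U v False → h c < h v) := by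
    intro v
    by_cases hv : v ≠ r ∧ v ∉ W
    · obtain ⟨hv1, hv2⟩ := hv
      by_cases hZ : Cond π T U v False
      · have hs := Nat.find_spec (hb v hv1 hv2)
        have hρ : h v = Nat.find (hb v hv1 hv2) := by simp only [h]; rw [dif_pos ⟨hv1, hv2⟩]
        rw [← hρ] at hs
        rcases hn : h v with _ | n
        · rw [hn] at hs; exact absurd hZ hs
        · rw [hn] at hs
          obtain ⟨c, hc, hcW, hp, hR⟩ := hs
          refine ⟨c, fun _ _ => ⟨hc, hcW, hp, fun _ => ?_⟩⟩
          have : h c ≤ n := by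
            simp only [h]; rw [dif_pos ⟨hc, hcW⟩]
            exact Nat.find_min' _ hR
          omega
      · obtain ⟨c, h1, h2, h3⟩ := ha v hv1 hv2
        exact ⟨c, fun _ _ => ⟨h1, h2, h3, fun h => absurd h hZ⟩⟩
    · exact ⟨v, fun h1 h2 => absurd ⟨h1, h2⟩ hv⟩
  choose κ hκ using hc
  let up : V → Prop := fun v => upn π r T W U κ (d v) v
  have hup : ∀ v, up v ↔ v ≠ r ∧ v ∉ W ∧ π v ≠ r ∧ π v ∉ W ∧ κ (π v) = v ∧
      ¬ Cond π T U (π v) (up (π v)) := by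
    intro v
    by_cases hv : v = r
    · subst hv
      constructor
      · intro h
        simp only [up] at h
        rcases hn : d v with _ | n
        · rw [hn] at h; exact h.elim
        · rw [hn] at h; exact absurd rfl h.1
      · intro h; exact absurd rfl h.1
    · simp only [up]
      rw [hd v hv]
      rfl
  have hupU : ∀ v, up v → v ∉ U := fun v hv hU => ((hup v).1 hv).2.1 (hg.sub hU)
  refine ⟨U ∪ {v | up v}, ?_, ?_, ?_⟩
  · rintro (h | h)
    · exact hrU h
    · exact ((hup r).1 h).1 rfl
  · intro v hv
    by_cases hvW : v ∈ W
    · have h1 : ch π (U ∪ {v | up v}) v = ch π U v := by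
        ext c
        simp only [ch, Set.mem_ofPred_eq, Set.mem_union]
        constructor
        · rintro ⟨h | h, rfl⟩
          · exact ⟨h, rfl⟩
          · exact absurd hvW ((hup c).1 h).2.2.2.1
        · rintro ⟨h, h2⟩; exact ⟨Or.inl h, h2⟩
      have h2 : v ∈ U ∪ {v | up v} ↔ v ∈ U := by
        simp only [Set.mem_union, Set.mem_ofPred_eq, or_iff_left_iff_imp]
        intro h; exact absurd hvW ((hup v).1 h).2.1
      rw [Cond, h1, h2]
      exact hg.cond v hvW
    · have h2 : v ∈ U ∪ {v | up v} ↔ up v := by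
        simp only [Set.mem_union, Set.mem_ofPred_eq, or_iff_right_iff_imp]
        intro h; exact absurd (hg.sub h) hvW
      by_cases hC : Cond π T U v (up v)
      · have h1 : ch π (U ∪ {v | up v}) v = ch π U v := by
          ext c
          simp only [ch, Set.mem_ofPred_eq, Set.mem_union]
          constructor
          · rintro ⟨h | h, rfl⟩
            · exact ⟨h, rfl⟩
            · exact absurd hC ((hup c).1 h).2.2.2.2.2
          · rintro ⟨h, h2⟩; exact ⟨Or.inl h, h2⟩
        rw [Cond, h1, h2]
        exact hC
      · obtain ⟨k1, k2, k3, k4⟩ := hκ v hv hvW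
        have hu : up (κ v) := by
          rw [hup, k3]
          exact ⟨k1, k2, hv, hvW, rfl, hC⟩
        have h1 : ch π (U ∪ {v | up v}) v = insert (κ v) (ch π U v) := by
          ext c
          simp only [ch, Set.mem_ofPred_eq, Set.mem_union, Set.mem_insert_iff]
          constructor
          · rintro ⟨h | h, rfl⟩
            · exact Or.inr ⟨h, rfl⟩
            · exact Or.inl ((hup c).1 h).2.2.2.2.1.symm
          · rintro (rfl | ⟨h, h2⟩)
            · exact ⟨Or.inr hu, k3⟩
            · exact ⟨Or.inl h, h2⟩
        rw [Cond, h1, h2]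
        simp only [Cond, not_or, Set.not_infinite] at hC
        right
        rw [Set.ncard_insert_of_notMem (fun h => hupU _ hu h.1) hC.1, Nat.even_add_one]
        tauto
  · have hrch : ∀ n v, h v = n → up v → Rch π T (U ∪ {v | up v}) v := by
      intro n
      induction n using Nat.strong_induction_on with
      | _ n ih =>
        intro v hn hv
        by_cases hvT : v ∈ T
        · exact .base v hvT
        by_cases hne : (ch π U v).Nonempty
        · obtain ⟨c, hc, rfl⟩ := hne
          exact .step c (Or.inl hc) ((hg.rch c hc).mono Set.subset_union_left)
        · rw [Set.not_nonempty_iff_eq_empty] at hne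
          obtain ⟨hv1, hv2, -⟩ := (hup v).1 hv
          obtain ⟨k1, k2, k3, k4⟩ := hκ v hv1 hv2
          have hu : up (κ v) := by
            rw [hup, k3]
            refine ⟨k1, k2, hv1, hv2, rfl, ?_⟩
            simp [Cond, hne, hvT, hv]
          have := ih _ (hn ▸ k4 (by simp [Cond, hne, hvT])) (κ v) rfl hu
          have := Rch.step (π := π) (κ v) (Or.inr hu) this
          rwa [k3] at this
    rintro v (hv | hv)
    · exact (hg.rch v hv).mono Set.subset_union_left
    · exact hrch _ v rfl hv

end Tree
end TJ

namespace TJ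

open SimpleGraph
universe u

section Claim
variable {V : Type u} {G : SimpleGraph V}

theorem token' (T : Set V) (loc : V → V) (w : ∀ t ∈ T, G.Walk t (loc t))
    (hw : ∀ s (hs : s ∈ T) t (ht : t ∈ T), s ≠ t → ∀ e ∈ (w s hs).edges, e ∉ (w t ht).edges)
    (hf : ∀ v, {t | t ∈ T ∧ loc t = v}.Infinite ∨
      ({t | t ∈ T ∧ loc t = v}.Finite ∧ Even {t | t ∈ T ∧ loc t = v}.ncard)) :
    G.HasTJoin T := by
  refine token T (fun t => loc t) (fun t => t) Subtype.val_injective T (by simp)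
    (fun t => w t.1 t.2) ?_ ?_
  · intro i j hij
    exact hw _ _ _ _ (fun h => hij (Subtype.ext h))
  · intro v
    have h1 : {t | t ∈ T ∧ loc t = v} = Subtype.val '' {k : T | loc k = v} := by
      ext t; simp [and_comm]
    have h2 := hf v
    rw [h1, Set.ncard_image_of_injective _ Subtype.val_injective,
      Set.infinite_image_iff Subtype.val_injective.injOn,
      Set.finite_image_iff Subtype.val_injective.injOn] at h2
    exact h2

/-- The chain following `κ` downwards until hitting `T`. -/
inductive Ch (T U : Set V) (κ : V → V) (a : V) : V → Prop
  | refl (h : a ∈ U) : Ch T U κ a a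
  | step (x : V) (h : Ch T U κ a x) (hx : x ∉ T) : Ch T U κ a (κ x)

theorem Ch.inv {T U : Set V} {κ : V → V} {a z : V} (h : Ch T U κ a z) :
    z = a ∨ ∃ y, Ch T U κ a y ∧ y ∉ T ∧ z = κ y := by
  cases h with
  | refl h => exact Or.inl rfl
  | step x h hx => exact Or.inr ⟨x, h, hx, rfl⟩

theorem exists_parent (hG : G.Connected) (r v : V) (hv : v ≠ r) :
    ∃ w, G.Adj v w ∧ G.dist r v = G.dist r w + 1 := by
  obtain ⟨p, hp⟩ := hG.exists_walk_length_eq_dist v r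
  cases p with
  | nil => exact absurd rfl hv
  | cons h q =>
    rename_i w
    refine ⟨w, h, ?_⟩
    rw [dist_comm (u := r) (v := v), dist_comm (u := r) (v := w), ← hp]
    have h1 := dist_le q
    have h2 := dist_le (Walk.cons h q)
    have h3 : G.dist v r ≤ G.dist w r + 1 := by
      obtain ⟨q', hq'⟩ := hG.exists_walk_length_eq_dist w r
      have := dist_le (Walk.cons h q')
      simp only [Walk.length_cons] at this; omega
    simp only [Walk.length_cons] at *
    omega

theorem claimA (hG : G.Connected) (T : Set V) (r : V) (hr : r ∈ T) :
    G.HasTJoin T ∨ G.HasTJoin (T \ {r}) := by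
  classical
  have hpar : ∀ v, ∃ w, v ≠ r → G.Adj v w ∧ G.dist r v = G.dist r w + 1 := by
    intro v
    by_cases hv : v = r
    · exact ⟨v, fun h => absurd hv h⟩
    · obtain ⟨w, hw⟩ := exists_parent hG r v hv
      exact ⟨w, fun _ => hw⟩
  choose π hπ using hpar
  obtain ⟨U, hrU, hcond, κ, ρ, hκ⟩ := ulemma π r (G.dist r) (fun v hv => (hπ v hv).2) T
  have hU : ∀ v ∈ U, v ≠ r := by rintro v hv rfl; exact hrU hv
  have chU : ∀ a x, Ch T U κ a x → x ∈ U := by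
    intro a x h
    induction h with
    | refl h => exact h
    | step x h hx ih => exact (hκ x ih hx).1
  have chA : ∀ a x, Ch T U κ a x → a ∈ U := by
    intro a x h
    induction h with
    | refl h => exact h
    | step x h hx ih => exact ih
  have chW : ∀ a x, Ch T U κ a x → ∃ p : G.Walk x (π a), ∀ e ∈ p.edges,
      ∃ y, Ch T U κ a y ∧ e = s(y, π y) := by
    intro a x h
    induction h with
    | refl h =>
      refine ⟨Walk.cons (hπ a (hU a h)).1 Walk.nil, ?_⟩
      intro e he
      simp only [Walk.edges_cons, Walk.edges_nil, List.mem_singleton] at he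
      exact ⟨a, .refl h, he⟩
    | step x h hx ih =>
      obtain ⟨p, hp⟩ := ih
      obtain ⟨k1, k2, -⟩ := hκ x (chU _ _ h) hx
      have hadj := (hπ _ (hU _ k1)).1
      rw [k2] at hadj
      refine ⟨Walk.cons hadj p, ?_⟩
      intro e he
      simp only [Walk.edges_cons, List.mem_cons] at he
      rcases he with rfl | he
      · exact ⟨κ x, .step x h hx, by rw [k2]⟩
      · exact hp e he
  let Hd : V → Prop := fun a => a ∈ U ∧ ¬ (π a ∈ U ∧ π a ∉ T ∧ κ (π a) = a)
  have notHd : ∀ x, x ∈ U → x ∉ T → ¬ Hd (κ x) := by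
    intro x hx hT h
    obtain ⟨k1, k2, -⟩ := hκ x hx hT
    exact h.2 (by rw [k2]; exact ⟨hx, hT, rfl⟩)
  have hdU : ∀ a b x, Hd a → Hd b → Ch T U κ a x → Ch T U κ b x → a = b := by
    intro a b x ha hb h
    induction h with
    | refl h =>
      intro h'
      rcases h'.inv with h | ⟨y, hy, hyT, h⟩
      · exact h
      · exact absurd (h ▸ ha) (notHd y (chU _ _ hy) hyT)
    | step x h hx ih =>
      intro h'
      rcases h'.inv with h1 | ⟨y, hy, hyT, h1⟩
      · exact absurd (h1 ▸ hb) (notHd x (chU _ _ h) hx)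
      · have e1 := (hκ x (chU _ _ h) hx).2.1
        have e2 := (hκ y (chU _ _ hy) hyT).2.1
        rw [h1, e2] at e1
        exact ih (e1 ▸ hy)
  have exHd : ∀ n x, G.dist r x = n → x ∈ U → ∃ a, Hd a ∧ Ch T U κ a x := by
    intro n
    induction n with
    | zero =>
      intro x hx hxU
      have := (hπ x (hU x hxU)).2
      omega
    | succ n ih =>
      intro x hx hxU
      by_cases h : Hd x
      · exact ⟨x, h, .refl hxU⟩
      · have h' : π x ∈ U ∧ π x ∉ T ∧ κ (π x) = x := by
          by_contra h2; exact h ⟨hxU, h2⟩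
        obtain ⟨a, ha, hc⟩ := ih (π x) (by have := (hπ x (hU x hxU)).2; omega) h'.1
        have := Ch.step _ hc h'.2.1
        rw [h'.2.2] at this
        exact ⟨a, ha, this⟩
  have exT : ∀ n a x, ρ x = n → Ch T U κ a x → ∃ y ∈ T, Ch T U κ a y := by
    intro n
    induction n using Nat.strong_induction_on with
    | _ n ih =>
      intro a x hn h
      by_cases hx : x ∈ T
      · exact ⟨x, hx, h⟩
      · exact ih _ (hn ▸ (hκ x (chU _ _ h) hx).2.2) a _ rfl (.step x h hx)
  have front : ∀ y x, y ∉ T → Ch T U κ y x → x = y ∨ Ch T U κ (κ y) x := by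
    intro y x hy h
    induction h with
    | refl h => exact Or.inl rfl
    | step x h hx ih =>
      rcases ih with rfl | ih
      · exact Or.inr (.refl (hκ _ (chU _ _ h) hx).1)
      · exact Or.inr (.step x ih hx)
  have lin : ∀ a x y, Ch T U κ a x → Ch T U κ a y → Ch T U κ x y ∨ Ch T U κ y x := by
    intro a x y hx hy
    induction hy with
    | refl h => exact Or.inr hx
    | step y h hyT ih =>
      rcases ih with h1 | h1
      · exact Or.inl (.step y h1 hyT)
      · rcases front y x hyT h1 with rfl | h2
        · exact Or.inl (.step x (.refl (chU _ _ h)) hyT)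
        · exact Or.inr h2
  have endT : ∀ x y, x ∈ T → Ch T U κ x y → y = x := by
    intro x y hx h
    induction h with
    | refl h => rfl
    | step z h hz ih => subst ih; exact absurd hx hz
  have uniqT : ∀ a x y, x ∈ T → y ∈ T → Ch T U κ a x → Ch T U κ a y → x = y := by
    intro a x y hx hy h1 h2
    rcases lin a x y h1 h2 with h | h
    · exact (endT _ _ hx h).symm
    · exact endT _ _ hy h
  have : ∀ x, ∃ a, x ∈ U → Hd a ∧ Ch T U κ a x := by
    intro x
    by_cases hx : x ∈ U
    · obtain ⟨a, ha⟩ := exHd _ x rfl hx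
      exact ⟨a, fun _ => ha⟩
    · exact ⟨x, fun h => absurd h hx⟩
  choose hd hhd using this
  let A : V → Set V := fun v => {t | t ∈ T ∧ t ∈ U ∧ π (hd t) = v}
  let H : V → Set V := fun v => {a | Hd a ∧ π a = v}
  have hinj : ∀ v, Set.InjOn hd (A v) := by
    rintro v s ⟨hs, hsU, -⟩ t ⟨ht, htU, -⟩ h
    exact uniqT (hd s) s t hs ht (hhd s hsU).2 (h ▸ (hhd t htU).2)
  have himg : ∀ v, hd '' A v = H v := by
    intro v
    ext a
    constructor
    · rintro ⟨t, ⟨ht, htU, h⟩, rfl⟩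
      exact ⟨(hhd t htU).1, h⟩
    · rintro ⟨ha, h⟩
      obtain ⟨t, ht, hc⟩ := exT _ a a rfl (.refl ha.1)
      have htU := chU _ _ hc
      have := hdU _ _ _ (hhd t htU).1 ha (hhd t htU).2 hc
      exact ⟨t, ⟨ht, htU, by rw [this, h]⟩, this⟩
  have hcard : ∀ v, (A v).ncard = (H v).ncard := by
    intro v; rw [← himg, (hinj v).ncard_image]
  have hinf : ∀ v, (A v).Infinite ↔ (H v).Infinite := by
    intro v; rw [← himg, Set.infinite_image_iff (hinj v)]
  have chH : ∀ v, ¬ (v ∈ U ∧ v ∉ T) → ch π U v = H v := by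
    intro v hv
    ext c
    constructor
    · rintro ⟨hc, rfl⟩
      exact ⟨⟨hc, fun h => hv ⟨h.1, h.2.1⟩⟩, rfl⟩
    · rintro ⟨h, rfl⟩; exact ⟨h.1, rfl⟩
  have chH' : ∀ v, v ∈ U → v ∉ T → ch π U v = insert (κ v) (H v) := by
    intro v hv hT
    ext c
    constructor
    · rintro ⟨hc, rfl⟩
      by_cases h : κ (π c) = c
      · exact Or.inl h.symm
      · exact Or.inr ⟨⟨hc, fun h' => h h'.2.2⟩, rfl⟩
    · rintro (rfl | ⟨h, rfl⟩)
      · exact ⟨(hκ v hv hT).1, (hκ v hv hT).2.1⟩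
      · exact ⟨h.1, rfl⟩
  let loc : V → V := fun t => if t ∈ U then π (hd t) else t
  have hwalk : ∀ t ∈ T, ∃ p : G.Walk t (loc t), ∀ e ∈ p.edges,
      t ∈ U ∧ ∃ y, Ch T U κ (hd t) y ∧ e = s(y, π y) := by
    intro t ht
    by_cases htU : t ∈ U
    · have : loc t = π (hd t) := by simp [loc, htU]
      rw [this]
      obtain ⟨p, hp⟩ := chW _ _ (hhd t htU).2
      exact ⟨p, fun e he => ⟨htU, hp e he⟩⟩
    · have : loc t = t := by simp [loc, htU]
      rw [this]
      exact ⟨Walk.nil, by simp⟩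
  choose w hw using hwalk
  have edge_inj : ∀ y ∈ U, ∀ z ∈ U, s(y, π y) = s(z, π z) → y = z := by
    intro y hy z hz h
    rw [Sym2.eq_iff] at h
    rcases h with h | ⟨h1, h2⟩
    · exact h.1
    · have e1 := (hπ y (hU y hy)).2
      have e2 := (hπ z (hU z hz)).2
      rw [← h1] at e2
      rw [h2] at e1
      omega
  have main : ∀ T' : Set V, T' ⊆ T → T \ {r} ⊆ T' →
      (({t | t ∈ T' ∧ loc t = r}.Infinite ∨
      ({t | t ∈ T' ∧ loc t = r}.Finite ∧ Even {t | t ∈ T' ∧ loc t = r}.ncard))) →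
      G.HasTJoin T' := by
    intro T' h1 h2 h3
    refine token' T' loc (fun t ht => w t (h1 ht)) ?_ ?_
    · intro s hs t ht hst e he he'
      obtain ⟨hsU, y, hy, rfl⟩ := hw s _ e he
      obtain ⟨htU, z, hz, heq⟩ := hw t _ _ he'
      have := edge_inj _ (chU _ _ hy) _ (chU _ _ hz) heq
      subst this
      have h4 := hdU _ _ _ (hhd s hsU).1 (hhd t htU).1 hy hz
      exact hst (uniqT (hd s) s t (h1 hs) (h1 ht) (hhd s hsU).2 (h4 ▸ (hhd t htU).2))
    · intro v
      by_cases hv : v = r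
      · subst hv; exact h3
      have hTT : ∀ t, t ≠ r → (t ∈ T' ↔ t ∈ T) := by
        intro t ht
        exact ⟨fun h => h1 h, fun h => h2 ⟨h, ht⟩⟩
      have hc := hcond v hv
      rw [Cond] at hc
      by_cases hvT : v ∈ T ∧ v ∉ U
      · obtain ⟨hvT, hvU⟩ := hvT
        have hF : {t | t ∈ T' ∧ loc t = v} = insert v (A v) := by
          ext t
          constructor
          · rintro ⟨ht, hl⟩
            by_cases htU : t ∈ U
            · right
              exact ⟨h1 ht, htU, by simpa [loc, htU] using hl⟩
            · left
              simpa [loc, htU] using hl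
          · rintro (rfl | ⟨ht, htU, hl⟩)
            · exact ⟨(hTT _ hv).2 hvT, by simp [loc, hvU]⟩
            · exact ⟨(hTT _ (hU t htU)).2 ht, by simp [loc, htU, hl]⟩
        rw [hF]
        have hvA : v ∉ A v := fun h => hvU h.2.1
        rw [chH v (by tauto)] at hc
        by_cases hfin : (A v).Infinite
        · exact Or.inl (hfin.mono (Set.subset_insert _ _))
        · have hfin' := Set.not_infinite.1 hfin
          right
          refine ⟨hfin'.insert _, ?_⟩
          rw [Set.ncard_insert_of_notMem hvA hfin', Nat.even_add_one, hcard]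
          rw [hinf] at hfin
          tauto
      · have hF : {t | t ∈ T' ∧ loc t = v} = A v := by
          ext t
          constructor
          · rintro ⟨ht, hl⟩
            by_cases htU : t ∈ U
            · exact ⟨h1 ht, htU, by simpa [loc, htU] using hl⟩
            · have : t = v := by simpa [loc, htU] using hl
              subst this
              exact absurd ⟨h1 ht, htU⟩ hvT
          · rintro ⟨ht, htU, hl⟩
            exact ⟨(hTT _ (hU t htU)).2 ht, by simp [loc, htU, hl]⟩
        rw [hF]
        by_cases hfin : (A v).Infinite
        · exact Or.inl hfin
        · have hfin' := Set.not_infinite.1 hfin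
          right
          refine ⟨hfin', ?_⟩
          rw [hcard]
          rw [hinf] at hfin
          by_cases hvU : v ∈ U ∧ v ∉ T
          · rw [chH' v hvU.1 hvU.2, Set.ncard_insert_of_notMem
              (fun h => notHd v hvU.1 hvU.2 h.1) (Set.not_infinite.1 hfin), Nat.even_add_one] at hc
            rcases hc with hc | hc
            · exact absurd (Set.Finite.insert _ (Set.not_infinite.1 hfin)) hc
            · tauto
          · rw [chH v hvU] at hc
            tauto
  by_cases hodd : (A r).Finite ∧ ¬ Even (A r).ncard
  · left
    refine main T subset_rfl Set.sdiff_subset ?_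
    have hF : {t | t ∈ T ∧ loc t = r} = insert r (A r) := by
      ext t
      constructor
      · rintro ⟨ht, hl⟩
        by_cases htU : t ∈ U
        · right
          exact ⟨ht, htU, by simpa [loc, htU] using hl⟩
        · left
          simpa [loc, htU] using hl
      · rintro (rfl | ⟨ht, htU, hl⟩)
        · exact ⟨hr, by simp [loc, hrU]⟩
        · exact ⟨ht, by simp [loc, htU, hl]⟩
    rw [hF]
    right
    refine ⟨hodd.1.insert _, ?_⟩
    rw [Set.ncard_insert_of_notMem (fun h => hrU h.2.1) hodd.1, Nat.even_add_one]
    exact hodd.2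
  · right
    refine main (T \ {r}) Set.sdiff_subset subset_rfl ?_
    have hF : {t | t ∈ T \ {r} ∧ loc t = r} = A r := by
      ext t
      constructor
      · rintro ⟨ht, hl⟩
        by_cases htU : t ∈ U
        · exact ⟨ht.1, htU, by simpa [loc, htU] using hl⟩
        · have : t = r := by simpa [loc, htU] using hl
          exact absurd this ht.2
      · rintro ⟨ht, htU, hl⟩
        exact ⟨⟨ht, hU t htU⟩, by simp [loc, htU, hl]⟩
    rw [hF]
    by_cases hfin : (A r).Infinite
    · exact Or.inl hfin
    · have hfin' := Set.not_infinite.1 hfin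
      right
      refine ⟨hfin', ?_⟩
      tauto

end Claim
end TJ

namespace TJ

open SimpleGraph
universe u

section Trail
variable {V : Type u} {G : SimpleGraph V}

/-- Connected by a walk avoiding `E`. -/
def Conn (G : SimpleGraph V) (E : Set (Sym2 V)) (x y : V) : Prop :=
  ∃ p : G.Walk x y, ∀ e ∈ p.edges, e ∉ E

/-- Two-edge-connected outside `E`. -/
def R2 (G : SimpleGraph V) (E : Set (Sym2 V)) (x y : V) : Prop :=
  ∀ e, Conn G (insert e E) x y

theorem Conn.refl (E : Set (Sym2 V)) (x : V) : Conn G E x x := ⟨Walk.nil, by simp⟩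

theorem Conn.symm {E : Set (Sym2 V)} {x y : V} (h : Conn G E x y) : Conn G E y x := by
  obtain ⟨p, hp⟩ := h
  exact ⟨p.reverse, by simpa using hp⟩

theorem Conn.trans {E : Set (Sym2 V)} {x y z : V} (h : Conn G E x y) (h' : Conn G E y z) :
    Conn G E x z := by
  obtain ⟨p, hp⟩ := h
  obtain ⟨q, hq⟩ := h'
  refine ⟨p.append q, ?_⟩
  intro e he
  rw [Walk.edges_append, List.mem_append] at he
  exact he.elim (hp e) (hq e)

theorem Conn.anti {E E' : Set (Sym2 V)} (hE : E ⊆ E') {x y : V} (h : Conn G E' x y) :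
    Conn G E x y := by
  obtain ⟨p, hp⟩ := h
  exact ⟨p, fun e he h => hp e he (hE h)⟩

theorem Conn.exists_path {E : Set (Sym2 V)} {x y : V} (h : Conn G E x y) :
    ∃ p : G.Walk x y, p.IsPath ∧ ∀ e ∈ p.edges, e ∉ E := by
  classical
  obtain ⟨p, hp⟩ := h
  exact ⟨p.bypass, p.bypass_isPath, fun e he => hp e (p.edges_bypass_subset_edges he)⟩

theorem R2.refl (E : Set (Sym2 V)) (x : V) : R2 G E x x := fun _ => Conn.refl _ x

theorem R2.symm {E : Set (Sym2 V)} {x y : V} (h : R2 G E x y) : R2 G E y x :=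
  fun e => (h e).symm

theorem R2.trans {E : Set (Sym2 V)} {x y z : V} (h : R2 G E x y) (h' : R2 G E y z) :
    R2 G E x z := fun e => (h e).trans (h' e)

theorem R2.anti {E E' : Set (Sym2 V)} (hE : E ⊆ E') {x y : V} (h : R2 G E' x y) :
    R2 G E x y := fun e => (h e).anti (Set.insert_subset_insert hE)

theorem R2.conn {E : Set (Sym2 V)} {x y : V} (h : R2 G E x y) : Conn G E x y :=
  (h s(x, x)).anti (Set.subset_insert _ _)

theorem r2_empty (hG : G.TwoEdgeConnected) (x y : V) : R2 G ∅ x y := by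
  intro e
  by_cases he : e ∈ G.edgeSet
  · obtain ⟨p⟩ := (hG.2 e he).preconnected x y
    refine ⟨p.mapLe (deleteEdges_le _), ?_⟩
    intro f hf
    have : f ∈ p.edges := by simpa using hf
    have := p.edges_subset_edgeSet this
    rw [edgeSet_deleteEdges] at this
    simpa using this.2
  · obtain ⟨p⟩ := hG.1.preconnected x y
    refine ⟨p, ?_⟩
    intro f hf h
    have := p.edges_subset_edgeSet hf
    rcases h with rfl | h
    · exact he this
    · exact h

theorem first_hit (S : Set V) {u v : V} (R : G.Walk u v) (hv : v ∈ S) :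
    ∃ r ∈ S, ∃ p : G.Walk u r, (∀ e ∈ p.edges, e ∈ R.edges) ∧
      ∀ e ∈ p.edges, ∃ x ∈ e, x ∉ S := by
  induction R with
  | nil => exact ⟨_, hv, Walk.nil, by simp, by simp⟩
  | @cons u w v h R ih =>
    by_cases hu : u ∈ S
    · exact ⟨u, hu, Walk.nil, by simp, by simp⟩
    · obtain ⟨r, hr, p, h1, h2⟩ := ih hv
      refine ⟨r, hr, Walk.cons h p, ?_, ?_⟩
      · intro e he
        simp only [Walk.edges_cons, List.mem_cons] at he ⊢
        exact he.imp id (h1 e)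
      · intro e he
        simp only [Walk.edges_cons, List.mem_cons] at he
        rcases he with rfl | he
        · exact ⟨u, by simp, hu⟩
        · exact h2 e he

theorem stay {E : Set (Sym2 V)} {x y : V} (p : G.Walk x y) (hp : p.IsPath)
    (hE : ∀ e ∈ p.edges, e ∉ E) (h : R2 G E x y) (v : V) (hv : v ∈ p.support) : R2 G E x v := by
  classical
  intro e
  by_cases he : e ∈ (p.takeUntil v hv).edges
  · refine (h e).trans (Conn.symm ⟨p.dropUntil v hv, ?_⟩)
    intro f hf hf'
    rcases hf' with rfl | hf'
    · exact hp.isTrail.disjoint_edges_takeUntil_dropUntil hv he hf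
    · exact hE f (p.edges_dropUntil_subset_edges hv hf) hf'
  · refine ⟨p.takeUntil v hv, ?_⟩
    intro f hf hf'
    rcases hf' with rfl | hf'
    · exact he hf
    · exact hE f (p.edges_takeUntil_subset_edges hv hf) hf'

theorem menger_aux {E : Set (Sym2 V)} {t x : V} (p : G.Walk t x)
    (hE : ∀ e ∈ p.edges, e ∉ E) (hR : ∀ v ∈ p.support, R2 G E v x) :
    ∃ A B : G.Walk t x, (∀ e ∈ A.edges, e ∉ B.edges) ∧ (∀ e ∈ A.edges, e ∉ E) ∧
      (∀ e ∈ B.edges, e ∉ E) := by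
  classical
  induction p with
  | nil => exact ⟨Walk.nil, Walk.nil, by simp, by simp, by simp⟩
  | @cons t t' x h p ih =>
    simp only [Walk.edges_cons, List.mem_cons, Walk.support_cons] at hE hR
    obtain ⟨A0, B0, hAB0, hA0, hB0⟩ := ih (fun e he => hE e (Or.inr he))
      (fun v hv => hR v (Or.inr hv))
    have heE : s(t, t') ∉ E := hE _ (Or.inl rfl)
    have key1 : ∀ A B : G.Walk t' x, A.IsPath → (∀ e ∈ A.edges, e ∉ B.edges) →
        (∀ e ∈ A.edges, e ∉ E) → (∀ e ∈ B.edges, e ∉ E) → s(t, t') ∈ A.edges →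
        ∃ A B : G.Walk t x, (∀ e ∈ A.edges, e ∉ B.edges) ∧ (∀ e ∈ A.edges, e ∉ E) ∧
        (∀ e ∈ B.edges, e ∉ E) := by
      intro A B hAp hAB hA hB he
      cases A with
      | nil => simp at he
      | @cons _ w _ h' A' =>
        have hnot : s(t, t') ∉ A'.edges := by
          intro hh
          have := A'.snd_mem_support_of_mem_edges hh
          rw [Walk.cons_isPath_iff] at hAp
          exact hAp.2 this
        have hw : w = t := by
          simp only [Walk.edges_cons, List.mem_cons, hnot, or_false] at he
          rw [Sym2.eq_iff] at he
          rcases he with ⟨h1, h2⟩ | ⟨h1, h2⟩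
          · rw [← h2, ← h1]
          · exact h1.symm
        subst hw
        refine ⟨A', Walk.cons h B, ?_, ?_, ?_⟩
        · intro e h1 h2
          simp only [Walk.edges_cons, List.mem_cons] at h2
          rcases h2 with rfl | h2
          · exact hnot h1
          · exact hAB e (by simp [h1]) h2
        · intro e h1; exact hA e (by simp [h1])
        · intro e h1
          simp only [Walk.edges_cons, List.mem_cons] at h1
          rcases h1 with rfl | h1
          · exact heE
          · exact hB e h1
    let A := A0.bypass
    let B := B0.bypass
    have hAB : ∀ e ∈ A.edges, e ∉ B.edges := fun e h1 h2 =>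
      hAB0 e (A0.edges_bypass_subset_edges h1) (B0.edges_bypass_subset_edges h2)
    have hA : ∀ e ∈ A.edges, e ∉ E := fun e h1 => hA0 e (A0.edges_bypass_subset_edges h1)
    have hB : ∀ e ∈ B.edges, e ∉ E := fun e h1 => hB0 e (B0.edges_bypass_subset_edges h1)
    by_cases heA : s(t, t') ∈ A.edges
    · exact key1 A B A0.bypass_isPath hAB hA hB heA
    by_cases heB : s(t, t') ∈ B.edges
    · exact key1 B A B0.bypass_isPath (fun e h1 h2 => hAB e h2 h1) hB hA heB
    obtain ⟨R, hR'⟩ := hR t (Or.inl rfl) s(t, t')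
    obtain ⟨r, hr, R1, h1, h2⟩ := first_hit {v | v ∈ A.support ∨ v ∈ B.support} R
      (Or.inl A.end_mem_support)
    have key2 : ∀ A B : G.Walk t' x, (∀ e ∈ A.edges, e ∉ B.edges) →
        (∀ e ∈ A.edges, e ∉ E) → (∀ e ∈ B.edges, e ∉ E) → s(t, t') ∉ A.edges →
        (∀ e ∈ R1.edges, ∃ x ∈ e, x ∉ B.support) →
        r ∈ A.support →
        ∃ A B : G.Walk t x, (∀ e ∈ A.edges, e ∉ B.edges) ∧ (∀ e ∈ A.edges, e ∉ E) ∧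
        (∀ e ∈ B.edges, e ∉ E) := by
      intro A B hAB hA hB he h2 hr
      refine ⟨R1.append (A.dropUntil r hr), Walk.cons h B, ?_, ?_, ?_⟩
      · intro e h3 h4
        simp only [Walk.edges_cons, List.mem_cons, Walk.edges_append, List.mem_append] at h3 h4
        rcases h3 with h3 | h3
        · rcases h4 with rfl | h4
          · exact hR' _ (h1 _ h3) (Or.inl rfl)
          · obtain ⟨y, hy, hyB⟩ := h2 e h3
            exact hyB (B.mem_support_of_mem_edges h4 hy)
        · have h3 := A.edges_dropUntil_subset_edges hr h3
          rcases h4 with rfl | h4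
          · exact he h3
          · exact hAB e h3 h4
      · intro e h3
        simp only [Walk.edges_append, List.mem_append] at h3
        rcases h3 with h3 | h3
        · exact fun h => hR' _ (h1 _ h3) (Or.inr h)
        · exact hA e (A.edges_dropUntil_subset_edges hr h3)
      · intro e h1
        simp only [Walk.edges_cons, List.mem_cons] at h1
        rcases h1 with rfl | h1
        · exact heE
        · exact hB e h1
    rcases hr with hr | hr
    · refine key2 A B hAB hA hB heA ?_ hr
      intro e he
      obtain ⟨y, hy, hy'⟩ := h2 e he
      exact ⟨y, hy, fun h => hy' (Or.inr h)⟩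
    · refine key2 B A (fun e h1 h2 => hAB e h2 h1) hB hA heB ?_ hr
      intro e he
      obtain ⟨y, hy, hy'⟩ := h2 e he
      exact ⟨y, hy, fun h => hy' (Or.inl h)⟩

theorem menger {E : Set (Sym2 V)} {t x : V} (h : R2 G E t x) :
    ∃ A B : G.Walk t x, A.IsPath ∧ B.IsPath ∧ (∀ e ∈ A.edges, e ∉ B.edges) ∧
      (∀ e ∈ A.edges, e ∉ E) ∧ (∀ e ∈ B.edges, e ∉ E) := by
  classical
  obtain ⟨p, hp, hE⟩ := h.conn.exists_path
  obtain ⟨A, B, h1, h2, h3⟩ := menger_aux p hE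
    (fun v hv => (stay p hp hE h v hv).symm.trans h)
  exact ⟨A.bypass, B.bypass, A.bypass_isPath, B.bypass_isPath,
    fun e h4 h5 => h1 e (A.edges_bypass_subset_edges h4) (B.edges_bypass_subset_edges h5),
    fun e h => h2 e (A.edges_bypass_subset_edges h),
    fun e h => h3 e (B.edges_bypass_subset_edges h)⟩

theorem split_edge {a b x y : V} (q : G.Walk x y) (hq : q.IsTrail) (he : s(a, b) ∈ q.edges) :
    (∃ (p : G.Walk x a) (p' : G.Walk b y), (∀ e ∈ p.edges, e ∈ q.edges ∧ e ≠ s(a, b)) ∧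
      (∀ e ∈ p'.edges, e ∈ q.edges ∧ e ≠ s(a, b))) ∨
    (∃ (p : G.Walk x b) (p' : G.Walk a y), (∀ e ∈ p.edges, e ∈ q.edges ∧ e ≠ s(a, b)) ∧
      (∀ e ∈ p'.edges, e ∈ q.edges ∧ e ≠ s(a, b))) := by
  induction q with
  | nil => simp at he
  | @cons u w v h q ih =>
    rw [Walk.isTrail_cons] at hq
    by_cases h1 : s(a, b) = s(u, w)
    · have h3 : ∀ e ∈ q.edges, e ∈ (Walk.cons h q).edges ∧ e ≠ s(a, b) := by
        intro e he
        refine ⟨by simp [he], ?_⟩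
        rintro rfl
        rw [h1] at he; exact hq.2 he
      rw [Sym2.eq_iff] at h1
      rcases h1 with ⟨rfl, rfl⟩ | ⟨rfl, rfl⟩
      · exact Or.inl ⟨Walk.nil, q, by simp, h3⟩
      · exact Or.inr ⟨Walk.nil, q, by simp, h3⟩
    · simp only [Walk.edges_cons, List.mem_cons, h1, false_or] at he
      have h4 : ∀ z (p : G.Walk w z), (∀ e ∈ p.edges, e ∈ q.edges ∧ e ≠ s(a, b)) →
          ∀ e ∈ (Walk.cons h p).edges, e ∈ (Walk.cons h q).edges ∧ e ≠ s(a, b) := by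
        intro z p hp e he
        simp only [Walk.edges_cons, List.mem_cons] at he ⊢
        rcases he with rfl | he
        · exact ⟨Or.inl rfl, fun h => h1 h.symm⟩
        · exact ⟨Or.inr (hp e he).1, (hp e he).2⟩
      rcases ih hq.1 he with ⟨p, p', h2, h3⟩ | ⟨p, p', h2, h3⟩
      · refine Or.inl ⟨Walk.cons h p, p', h4 _ p h2, fun e he => ⟨?_, (h3 e he).2⟩⟩
        simp [(h3 e he).1]
      · refine Or.inr ⟨Walk.cons h p, p', h4 _ p h2, fun e he => ⟨?_, (h3 e he).2⟩⟩
        simp [(h3 e he).1]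

theorem reroute {F : Set (Sym2 V)} {a b x y : V} (hab : Conn G (insert s(a, b) F) a b)
    (h : Conn G F x y) : Conn G (insert s(a, b) F) x y := by
  obtain ⟨q, hq⟩ := h
  induction q with
  | nil => exact Conn.refl _ _
  | @cons u w v h q ih =>
    simp only [Walk.edges_cons, List.mem_cons] at hq
    refine Conn.trans ?_ (ih (fun e he => hq e (Or.inr he)))
    by_cases h1 : s(u, w) = s(a, b)
    · rw [Sym2.eq_iff] at h1
      rcases h1 with ⟨rfl, rfl⟩ | ⟨rfl, rfl⟩
      · exact hab
      · exact hab.symm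
    · refine ⟨Walk.cons h Walk.nil, ?_⟩
      intro e he
      simp only [Walk.edges_cons, Walk.edges_nil, List.mem_singleton] at he
      subst he
      rintro (h2 | h2)
      · exact h1 h2
      · exact hq _ (Or.inl rfl) h2

theorem split_conn {F : Set (Sym2 V)} {c d x y : V} (h : Conn G F x y) :
    Conn G (insert s(c, d) F) x y ∨
    (Conn G (insert s(c, d) F) x c ∧ Conn G (insert s(c, d) F) d y) ∨
    (Conn G (insert s(c, d) F) x d ∧ Conn G (insert s(c, d) F) c y) := by
  obtain ⟨q, hq, hF⟩ := h.exists_path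
  by_cases he : s(c, d) ∈ q.edges
  · right
    have : ∀ z z' (p : G.Walk z z'), (∀ e ∈ p.edges, e ∈ q.edges ∧ e ≠ s(c, d)) →
        Conn G (insert s(c, d) F) z z' := by
      intro z z' p hp
      refine ⟨p, fun e he h => ?_⟩
      rcases h with h | h
      · exact (hp e he).2 h
      · exact hF e (hp e he).1 h
    rcases split_edge q hq.isTrail he with ⟨p, p', h1, h2⟩ | ⟨p, p', h1, h2⟩
    · exact Or.inl ⟨this _ _ p h1, this _ _ p' h2⟩
    · exact Or.inr ⟨this _ _ p h1, this _ _ p' h2⟩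
  · left
    refine ⟨q, fun e h1 h2 => ?_⟩
    rcases h2 with rfl | h2
    · exact he h1
    · exact hF e h1 h2

theorem shrink_conn {F : Set (Sym2 V)} (l : List (Sym2 V)) (X : Set V) (hX : X.Infinite)
    (hF : ∀ x ∈ X, ∀ y ∈ X, Conn G F x y) : ∃ X' ⊆ X, X'.Infinite ∧
      ∀ g ∈ l, ∀ x ∈ X', ∀ y ∈ X', Conn G (insert g F) x y := by
  induction l with
  | nil => exact ⟨X, subset_rfl, hX, by simp⟩
  | cons g l ih =>
    obtain ⟨X1, h1, h2, h3⟩ := ih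
    obtain ⟨y0, hy0⟩ := h2.nonempty
    induction g using Sym2.ind with
    | _ c d =>
      let Y : V → Set V := fun z => {x | x ∈ X1 ∧ Conn G (insert s(c, d) F) x z}
      have hY : ∃ z, (Y z).Infinite := by
        by_contra hcon
        push Not at hcon
        apply h2
        refine ((hcon y0).union ((hcon c).union (hcon d))).subset ?_
        intro x hx
        rcases split_conn (c := c) (d := d) (hF x (h1 hx) y0 (h1 hy0)) with h | h | h
        · exact Or.inl ⟨hx, h⟩
        · exact Or.inr (Or.inl ⟨hx, h.1⟩)
        · exact Or.inr (Or.inr ⟨hx, h.1⟩)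
      obtain ⟨z, hz⟩ := hY
      refine ⟨Y z, fun x hx => h1 hx.1, hz, ?_⟩
      intro g hg x hx y hy
      rcases List.mem_cons.1 hg with rfl | hg
      · exact hx.2.trans hy.2.symm
      · exact h3 g hg x hx.1 y hy.1

theorem shrink_one {E : Set (Sym2 V)} (e : Sym2 V) (X : Set V) (hX : X.Infinite)
    (hE : ∀ x ∈ X, ∀ y ∈ X, R2 G E x y) : ∃ X' ⊆ X, X'.Infinite ∧
      ∀ x ∈ X', ∀ y ∈ X', R2 G (insert e E) x y := by
  induction e using Sym2.ind with
  | _ a b =>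
    by_cases hab : Conn G (insert s(a, b) E) a b
    · obtain ⟨P, hP⟩ := hab
      obtain ⟨X', h1, h2, h3⟩ := shrink_conn (G := G) (F := insert s(a, b) E) P.edges X hX
        (fun x hx y hy => hE x hx y hy _)
      refine ⟨X', h1, h2, ?_⟩
      intro x hx y hy g
      by_cases hg : g ∈ P.edges
      · exact h3 g hg x hx y hy
      · rw [Set.insert_comm]
        refine reroute ⟨P, ?_⟩ (hE x (h1 hx) y (h1 hy) g)
        intro f hf
        rw [Set.insert_comm]
        rintro (rfl | h)
        · exact hg hf
        · exact hP f hf h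
    · refine ⟨X, subset_rfl, hX, ?_⟩
      intro x hx y hy g
      have h0 := hE x hx y hy s(a, b)
      rcases split_conn (c := a) (d := b) (hE x hx y hy g) with h | h | h
      · rwa [Set.insert_comm] at h
      · exfalso; apply hab
        have h1 := h.1.anti (Set.insert_subset_insert (Set.subset_insert g E))
        have h2 := h.2.anti (Set.insert_subset_insert (Set.subset_insert g E))
        exact (h1.symm.trans h0).trans h2.symm
      · exfalso; apply hab
        have h1 := h.1.anti (Set.insert_subset_insert (Set.subset_insert g E))
        have h2 := h.2.anti (Set.insert_subset_insert (Set.subset_insert g E))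
        exact (h2.trans h0.symm).trans h1

theorem shrink {E : Set (Sym2 V)} (O : Set (Sym2 V)) (hO : O.Finite) (X : Set V)
    (hX : X.Infinite) (hE : ∀ x ∈ X, ∀ y ∈ X, R2 G E x y) : ∃ X' ⊆ X, X'.Infinite ∧
      ∀ x ∈ X', ∀ y ∈ X', R2 G (E ∪ O) x y := by
  induction O, hO using Set.Finite.induction_on with
  | empty => exact ⟨X, subset_rfl, hX, by simpa using hE⟩
  | @insert e O _ _ ih =>
    obtain ⟨X1, h1, h2, h3⟩ := ih
    obtain ⟨X2, h4, h5, h6⟩ := shrink_one e X1 h2 h3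
    refine ⟨X2, h4.trans h1, h5, ?_⟩
    rwa [Set.union_insert]

theorem robust {E F : Set (Sym2 V)} (y0 : V) (hF : ∀ f ∈ F, ∃ x ∈ f, ¬ R2 G E y0 x) {y z : V}
    (hy : R2 G E y0 y) (hz : R2 G E y0 z) : R2 G (E ∪ F) y z := by
  intro g
  have hyz := hy.symm.trans hz
  obtain ⟨p, hp, hE⟩ := (hyz g).exists_path
  refine ⟨p, ?_⟩
  intro e he h
  rcases h with h | h | h
  · exact hE e he (Or.inl h)
  · exact hE e he (Or.inr h)
  · obtain ⟨x, hx, hx'⟩ := hF e h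
    exact hx' (hy.trans (stay p hp (fun e he h => hE e he (Or.inr h)) hyz x
      (p.mem_support_of_mem_edges he hx)))

theorem step {E : Set (Sym2 V)} (hEf : E.Finite) (T : Set V) (x : V)
    (hg : {t | t ∈ T ∧ R2 G E x t}.Infinite) (B : Set V) (hB : B.Finite) :
    ∃ (x' : V) (q : G.Walk x x') (E' : Set (Sym2 V)), q.IsTrail ∧ (∀ e ∈ q.edges, e ∉ E) ∧
      (∀ e ∈ q.edges, e ∈ E') ∧ E ⊆ E' ∧ E'.Finite ∧ {t | t ∈ T ∧ R2 G E' x' t}.Infinite ∧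
      ∃ t ∈ T, t ∉ B ∧ t ∈ q.support := by
  classical
  obtain ⟨t, ⟨htT, htR⟩, htB⟩ := hg.exists_notMem_finite hB
  obtain ⟨A0, B0, hA0, hB0, hAB0, hAE0, hBE0⟩ := menger htR
  let O : Set (Sym2 V) := {e | e ∈ A0.edges ∨ e ∈ B0.edges}
  let S : Set V := {v | v ∈ A0.support ∨ v ∈ B0.support}
  have hOf : O.Finite := (List.finite_toSet A0.edges).union (List.finite_toSet B0.edges)
  obtain ⟨X', hX'1, hX'2, hX'3⟩ := shrink (G := G) O hOf _ hg
    (fun y hy z hz => hy.2.symm.trans hz.2)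
  obtain ⟨y0, hy0⟩ := hX'2.nonempty
  obtain ⟨R0, hR0⟩ := (hX'1 hy0).2.symm.conn
  obtain ⟨z, hz, R1, hR1, hR1'⟩ := first_hit S R0 (Or.inl A0.start_mem_support)
  let D : Set V := {y | R2 G (E ∪ O) y0 y}
  obtain ⟨x', hx', R2', hR2, hR2'⟩ := first_hit D R1.reverse (R2.refl _ y0)
  let R := R2'.bypass
  have hRsub : ∀ e ∈ R.edges, e ∈ R2'.edges := fun e he => R2'.edges_bypass_subset_edges he
  have hRt : R.IsTrail := R2'.bypass_isPath.isTrail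
  have hR1e : ∀ e ∈ R.edges, e ∈ R1.edges := by
    intro e he
    have := hR2 e (hRsub e he)
    simpa using this
  have hRE : ∀ e ∈ R.edges, e ∉ E := fun e he => hR0 e (hR1 e (hR1e e he))
  have hRO : ∀ e ∈ R.edges, e ∉ O := by
    intro e he hO
    obtain ⟨v, hv, hvS⟩ := hR1' e (hR1e e he)
    rcases hO with h | h
    · exact hvS (Or.inl (A0.mem_support_of_mem_edges h hv))
    · exact hvS (Or.inr (B0.mem_support_of_mem_edges h hv))
  have key : ∀ A B : G.Walk x t, A.IsPath → B.IsPath → (∀ e ∈ A.edges, e ∉ B.edges) →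
      (∀ e ∈ A.edges, e ∉ E ∧ e ∈ O) → (∀ e ∈ B.edges, e ∉ E ∧ e ∈ O) → z ∈ A.support →
      ∃ q : G.Walk x x', q.IsTrail ∧ (∀ e ∈ q.edges, e ∉ E) ∧
      (∀ e ∈ q.edges, e ∈ O ∨ e ∈ R.edges) ∧ t ∈ q.support := by
    intro A B hA hB hAB hAO hBO hz
    have hs : ∀ e ∈ (A.dropUntil z hz).edges, e ∈ A.edges :=
      fun e he => A.edges_dropUntil_subset_edges hz he
    refine ⟨B.append ((A.dropUntil z hz).reverse.append R), ?_, ?_, ?_, ?_⟩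
    · rw [Walk.isTrail_def, Walk.edges_append, Walk.edges_append, Walk.edges_reverse]
      rw [List.nodup_append, List.nodup_append]
      refine ⟨hB.isTrail.edges_nodup, ⟨?_, hRt.edges_nodup, ?_⟩, ?_⟩
      · rw [List.nodup_reverse]; exact (hA.dropUntil hz).isTrail.edges_nodup
      · rintro e he f hf rfl
        rw [List.mem_reverse] at he
        exact hRO e hf (hAO e (hs e he)).2
      · rintro e he f hf rfl
        rw [List.mem_append, List.mem_reverse] at hf
        rcases hf with hf | hf
        · exact hAB e (hs e hf) he
        · exact hRO e hf (hBO e he).2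
    · intro e he
      simp only [Walk.edges_append, Walk.edges_reverse, List.mem_append, List.mem_reverse] at he
      rcases he with he | he | he
      · exact (hBO e he).1
      · exact (hAO e (hs e he)).1
      · exact hRE e he
    · intro e he
      simp only [Walk.edges_append, Walk.edges_reverse, List.mem_append, List.mem_reverse] at he
      rcases he with he | he | he
      · exact Or.inl (hBO e he).2
      · exact Or.inl (hAO e (hs e he)).2
      · exact Or.inr he
    · rw [Walk.mem_support_append_iff]
      exact Or.inl B.end_mem_support
  have hq : ∃ q : G.Walk x x', q.IsTrail ∧ (∀ e ∈ q.edges, e ∉ E) ∧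
      (∀ e ∈ q.edges, e ∈ O ∨ e ∈ R.edges) ∧ t ∈ q.support := by
    rcases hz with hz | hz
    · exact key A0 B0 hA0 hB0 hAB0 (fun e he => ⟨hAE0 e he, Or.inl he⟩)
        (fun e he => ⟨hBE0 e he, Or.inr he⟩) hz
    · exact key B0 A0 hB0 hA0 (fun e h1 h2 => hAB0 e h2 h1) (fun e he => ⟨hBE0 e he, Or.inr he⟩)
        (fun e he => ⟨hAE0 e he, Or.inl he⟩) hz
  obtain ⟨q, hq1, hq2, hq3, hq4⟩ := hq
  refine ⟨x', q, (E ∪ O) ∪ {e | e ∈ R.edges}, hq1, hq2, ?_, ?_, ?_, ?_, t, htT, htB, hq4⟩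
  · intro e he
    rcases hq3 e he with h | h
    · exact Or.inl (Or.inr h)
    · exact Or.inr h
  · exact fun e he => Or.inl (Or.inl he)
  · exact (hEf.union hOf).union (List.finite_toSet R.edges)
  · refine hX'2.mono ?_
    intro s hs
    refine ⟨(hX'1 hs).1, robust y0 ?_ hx' (hX'3 _ hy0 _ hs)⟩
    intro f hf
    obtain ⟨v, hv, hv'⟩ := hR2' f (hRsub f hf)
    exact ⟨v, hv, hv'⟩

end Trail
end TJ

namespace TJ

open SimpleGraph
universe u

section Inf
variable {V : Type u} {G : SimpleGraph V}

/-- A finite trail that can be continued. -/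
structure St (G : SimpleGraph V) (T : Set V) (x0 : V) where
  x : V
  p : G.Walk x0 x
  E : Set (Sym2 V)
  trail : p.IsTrail
  sub : ∀ e ∈ p.edges, e ∈ E
  fin : E.Finite
  inf : {t | t ∈ T ∧ R2 G E x t}.Infinite

theorem infinite_trail (hG : G.TwoEdgeConnected) (T : Set V) (hT : T.Infinite) :
    ∃ W : ℕ → V, (∀ i, G.Adj (W i) (W (i + 1))) ∧
      Function.Injective (fun i => s(W i, W (i + 1))) ∧ W 0 ∈ T ∧
      (Set.range W ∩ T).Infinite := by
  obtain ⟨x0, hx0⟩ := hT.nonempty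
  have hstep : ∀ s : St G T x0, ∃ s' : St G T x0, (∃ q : G.Walk s.x s'.x, s'.p = s.p.append q) ∧
      ∃ t ∈ T, t ∉ s.p.support ∧ t ∈ s'.p.support := by
    intro s
    obtain ⟨x', q, E', h1, h2, h3, h4, h5, h6, t, h7, h8, h9⟩ :=
      step s.fin T s.x s.inf {v | v ∈ s.p.support} (List.finite_toSet _)
    refine ⟨⟨x', s.p.append q, E', ?_, ?_, h5, h6⟩, ⟨q, rfl⟩, t, h7, h8, ?_⟩
    · rw [Walk.isTrail_def, Walk.edges_append, List.nodup_append]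
      refine ⟨s.trail.edges_nodup, h1.edges_nodup, ?_⟩
      rintro e he f hf rfl
      exact h2 e hf (s.sub e he)
    · intro e he
      rw [Walk.edges_append, List.mem_append] at he
      rcases he with he | he
      · exact h4 (s.sub e he)
      · exact h3 e he
    · rw [Walk.mem_support_append_iff]
      exact Or.inr h9
  choose f hf t htT htn hts using hstep
  let s0 : St G T x0 := ⟨x0, Walk.nil, ∅, by simp, by simp, Set.finite_empty, by
    refine hT.mono ?_
    intro t ht
    exact ⟨ht, r2_empty hG _ _⟩⟩
  let S : ℕ → St G T x0 := fun n => f^[n] s0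
  have hS : ∀ n, S (n + 1) = f (S n) := fun n => Function.iterate_succ_apply' f n s0
  have hpre : ∀ n m, n ≤ m → ∃ q : G.Walk (S n).x (S m).x, (S m).p = (S n).p.append q := by
    intro n m hnm
    induction m, hnm using Nat.le_induction with
    | base => exact ⟨Walk.nil, by simp⟩
    | succ m hm ih =>
      obtain ⟨q, hq⟩ := ih
      have h := hf (S m)
      rw [← hS] at h
      obtain ⟨q', hq'⟩ := h
      refine ⟨q.append q', ?_⟩
      rw [hq', hq, Walk.append_assoc]
  have hlen : ∀ n, n ≤ (S n).p.length := by
    intro n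
    induction n with
    | zero => simp
    | succ n ih =>
      have h := hf (S n)
      have h1 := htn (S n)
      have h2 := hts (S n)
      rw [← hS] at h h2
      obtain ⟨q, hq⟩ := h
      rw [hq, Walk.mem_support_append_iff] at h2
      have : 0 < q.length := by
        by_contra h0
        have h0 : q.length = 0 := by omega
        rcases h2 with h2 | h2
        · exact h1 h2
        · rw [Walk.mem_support_iff_exists_getVert] at h2
          obtain ⟨k, hk, hk'⟩ := h2
          have : k = 0 := by omega
          subst this
          rw [Walk.getVert_zero] at hk
          apply h1
          rw [← hk]
          exact (S n).p.end_mem_support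
      rw [hq, Walk.length_append]; omega
  let W : ℕ → V := fun k => (S k).p.getVert k
  have hW : ∀ n k, k ≤ (S n).p.length → (S n).p.getVert k = W k := by
    have aux : ∀ n m k, n ≤ m → k ≤ (S n).p.length → (S n).p.getVert k = (S m).p.getVert k := by
      intro n m k hnm hk
      obtain ⟨q, hq⟩ := hpre n m hnm
      rw [hq, Walk.getVert_append]
      split_ifs with h
      · rfl
      · have : k = (S n).p.length := by omega
        subst this
        simp
    intro n k hk
    rcases le_total n k with h | h
    · exact aux n k k h hk
    · exact (aux k n k h (hlen k)).symm
  have hmem : ∀ n v, v ∈ (S n).p.support → v ∈ Set.range W := by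
    intro n v hv
    rw [Walk.mem_support_iff_exists_getVert] at hv
    obtain ⟨k, hk, hk'⟩ := hv
    exact ⟨k, by rw [← hW n k hk', hk]⟩
  refine ⟨W, ?_, ?_, ?_, ?_⟩
  · intro i
    have h := hlen (i + 1)
    rw [← hW (i + 1) i (by omega), ← hW (i + 1) (i + 1) h]
    exact (S (i + 1)).p.adj_getVert_succ (by omega)
  · have key : ∀ n i, i < n → ∃ h : i < (S n).p.edges.length,
        (S n).p.edges[i] = s(W i, W (i + 1)) := by
      intro n i hi
      have h := hlen n
      have h' : i < (S n).p.edges.length := by rw [Walk.length_edges]; omega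
      refine ⟨h', ?_⟩
      rw [← hW n i (by omega), ← hW n (i + 1) (by omega)]
      exact Walk.getElem_edges h'
    intro i j hij
    obtain ⟨h1, h2⟩ := key (i + j + 1) i (by omega)
    obtain ⟨h3, h4⟩ := key (i + j + 1) j (by omega)
    have : (S (i + j + 1)).p.edges[i] = (S (i + j + 1)).p.edges[j] := by rw [h2, h4]; exact hij
    exact (List.Nodup.getElem_inj_iff (S (i + j + 1)).trail.edges_nodup).1 this
  · simpa [W] using hx0
  · let τ : ℕ → V := fun n => t (S n)
    have hlt : ∀ n m, n < m → τ n ≠ τ m := by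
      intro n m hnm h
      apply htn (S m)
      change τ m ∈ _
      rw [← h]
      obtain ⟨q, hq⟩ := hpre (n + 1) m hnm
      rw [hq, Walk.mem_support_append_iff]
      left
      rw [hS]
      exact hts (S n)
    have hinj : Function.Injective τ := by
      intro n m h
      rcases lt_trichotomy n m with h1 | h1 | h1
      · exact absurd h (hlt _ _ h1)
      · exact h1
      · exact absurd h.symm (hlt _ _ h1)
    refine (Set.infinite_range_of_injective hinj).mono ?_
    rintro _ ⟨n, rfl⟩
    refine ⟨hmem (n + 1) _ ?_, htT _⟩
    rw [hS]
    exact hts (S n)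

end Inf
end TJ

namespace TJ

open SimpleGraph
universe u

section Assembly
variable {V : Type u} {G : SimpleGraph V}

theorem segment (W : ℕ → V) (hW : ∀ i, G.Adj (W i) (W (i + 1))) (i j : ℕ) (hij : i ≤ j) :
    ∃ p : G.Walk (W i) (W j), ∀ e ∈ p.edges, ∃ k, i ≤ k ∧ k < j ∧ e = s(W k, W (k + 1)) := by
  induction j, hij using Nat.le_induction with
  | base => exact ⟨Walk.nil, by simp⟩
  | succ j hj ih =>
    obtain ⟨p, hp⟩ := ih
    refine ⟨p.concat (hW j), ?_⟩
    intro e he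
    rw [Walk.edges_concat, List.concat_eq_append, List.mem_append] at he
    rcases he with he | he
    · obtain ⟨k, h1, h2, h3⟩ := hp e he
      exact ⟨k, h1, by omega, h3⟩
    · exact ⟨j, hj, by omega, by simpa using he⟩

/-- The endpoints of a path. -/
def en (p : Σ u : V, Σ v : V, G.Walk u v) (b : Bool) : V := if b then p.2.1 else p.1

theorem mem_rev {u v : V} (p : G.Walk u v) {e : Sym2 V} (h : e ∈ p.reverse.edges) :
    e ∈ p.edges := by
  simpa using h

theorem split_path (p : Σ u : V, Σ v : V, G.Walk u v) (hp : p.2.2.IsPath) (u r : V)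
    (hu : u ∈ p.2.2.support) (hr : r ∈ p.2.2.support) :
    ∃ (c : Bool) (a : G.Walk u (en p c)) (b : G.Walk r (en p (!c))),
      (∀ e ∈ a.edges, e ∈ p.2.2.edges) ∧ (∀ e ∈ b.edges, e ∈ p.2.2.edges) ∧
      (∀ e ∈ a.edges, e ∉ b.edges) := by
  classical
  obtain ⟨s, t, q⟩ := p
  have hr' : r ∈ (q.takeUntil u hu).support ∨ r ∈ (q.dropUntil u hu).support := by
    rw [← Walk.mem_support_append_iff, Walk.take_spec]; exact hr
  have hdis := hp.isTrail.disjoint_edges_takeUntil_dropUntil hu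
  have ht := q.edges_takeUntil_subset_edges hu
  have hd := q.edges_dropUntil_subset_edges hu
  rcases hr' with hr' | hr'
  · have h3 := (q.takeUntil u hu).edges_takeUntil_subset_edges hr'
    refine ⟨true, q.dropUntil u hu, ((q.takeUntil u hu).takeUntil r hr').reverse, ?_, ?_, ?_⟩
    · exact fun e he => hd he
    · intro e he
      replace he := mem_rev _ he
      exact ht (h3 he)
    · intro e he he'
      replace he' := mem_rev _ he'
      exact hdis (h3 he') he
  · have h3 := (q.dropUntil u hu).edges_dropUntil_subset_edges hr'
    refine ⟨false, (q.takeUntil u hu).reverse, (q.dropUntil u hu).dropUntil r hr', ?_, ?_, ?_⟩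
    · intro e he
      replace he := mem_rev _ he
      exact ht he
    · exact fun e he => hd (h3 he)
    · intro e he he'
      replace he := mem_rev _ he
      exact hdis he (h3 he')

theorem en_inj {T : Set V} {P : Set (Σ u : V, Σ v : V, G.Walk u v)} (h : G.IsTJoin T P)
    (p q : P) (b c : Bool) (e : en p.1 b = en q.1 c) : p = q ∧ b = c := by
  obtain ⟨h1, h2, h3⟩ := h
  have hmem : ∀ (p : P) b, en p.1 b ∈ T := by
    intro p b
    cases b
    · exact (h1 _ p.2).2.2.1
    · exact (h1 _ p.2).2.2.2
  have hor : ∀ (p : P) b, p.1.1 = en p.1 b ∨ p.1.2.1 = en p.1 b := by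
    intro p b
    cases b <;> simp [en]
  have : p.1 = q.1 := (h3 _ (hmem p b)).unique ⟨p.2, hor p b⟩ ⟨q.2, e ▸ hor q c⟩
  have hpq : p = q := Subtype.ext this
  subst hpq
  refine ⟨rfl, ?_⟩
  have hne := (h1 _ p.2).2.1
  cases b <;> cases c <;> simp [en] at e ⊢
  · exact hne e
  · exact hne e.symm

set_option maxHeartbeats 1000000 in
theorem assembly {T' : Set V} (hT' : G.HasTJoin T') (W : ℕ → V)
    (hW : ∀ i, G.Adj (W i) (W (i + 1)))
    (hinj : Function.Injective (fun i => s(W i, W (i + 1)))) (h0 : W 0 ∉ T')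
    (hinf : (Set.range W ∩ T').Infinite) : G.HasTJoin (insert (W 0) T') := by
  classical
  obtain ⟨P, hP⟩ := hT'
  have hP' := hP
  obtain ⟨hP1, hP2, hP3⟩ := hP'
  have hPd : ∀ p q : P, ∀ e, e ∈ p.1.2.2.edges → e ∈ q.1.2.2.edges → p = q := by
    intro p q e h1 h2
    by_contra hne
    exact hP2 _ p.2 _ q.2 (fun h => hne (Subtype.ext h)) e h1 h2
  -- one step
  have hstep : ∀ s : {s : ℕ × Finset P // ∀ q ∈ s.2, ∀ k ≥ s.1,
      s(W k, W (k + 1)) ∉ q.1.2.2.edges}, ∃ (j i' : ℕ) (q : P), s.1.1 ≤ j ∧ j ≤ i' ∧ q ∉ s.1.2 ∧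
      W j ∈ q.1.2.2.support ∧ W i' ∈ q.1.2.2.support ∧
      (∀ k, s.1.1 ≤ k → k < j → ∀ q' : P, s(W k, W (k + 1)) ∉ q'.1.2.2.edges) ∧
      (∀ k ≥ i', s(W k, W (k + 1)) ∉ q.1.2.2.edges) := by
    rintro ⟨⟨i, N⟩, hs⟩
    simp only at hs ⊢
    have hex : ∃ j, i ≤ j ∧ ∃ q : P, q ∉ N ∧ W j ∈ q.1.2.2.support := by
      have hfin : ((W '' {k | k < i}) ∪ ((fun z : P × Bool => en z.1.1 z.2) ''
          {z | z.1 ∈ N})).Finite := by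
        refine ((Set.finite_lt_nat i).image W).union (Set.Finite.image _ ?_)
        refine ((N.finite_toSet).prod (Set.finite_univ (α := Bool))).subset ?_
        intro z hz
        exact ⟨hz, Set.mem_univ _⟩
      obtain ⟨v, ⟨⟨j, rfl⟩, hvT⟩, hv⟩ := hinf.exists_notMem_finite hfin
      obtain ⟨q, ⟨hq, hqe⟩, -⟩ := hP3 _ hvT
      refine ⟨j, ?_, ⟨q, hq⟩, ?_, ?_⟩
      · by_contra hlt
        exact hv (Or.inl ⟨j, by simpa using hlt, rfl⟩)
      · intro hqN
        apply hv
        right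
        rcases hqe with h | h
        · exact ⟨(⟨q, hq⟩, false), hqN, by simpa [en] using h⟩
        · exact ⟨(⟨q, hq⟩, true), hqN, by simpa [en] using h⟩
      · rcases hqe with h | h
        · rw [← h]; exact q.2.2.start_mem_support
        · rw [← h]; exact q.2.2.end_mem_support
    let j := Nat.find hex
    obtain ⟨hj, q, hqN, hjq⟩ : i ≤ j ∧ ∃ q : P, q ∉ N ∧ W j ∈ q.1.2.2.support :=
      Nat.find_spec hex
    have hmin : ∀ k, i ≤ k → k < j → ∀ q' : P, s(W k, W (k + 1)) ∉ q'.1.2.2.edges := by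
      intro k hk hkj q' he
      refine Nat.find_min hex hkj ⟨hk, q', ?_, q'.1.2.2.fst_mem_support_of_mem_edges he⟩
      intro hN
      exact hs q' hN k hk he
    have hi' : ∃ i', j ≤ i' ∧ W i' ∈ q.1.2.2.support ∧
        ∀ k ≥ i', s(W k, W (k + 1)) ∉ q.1.2.2.edges := by
      let K : Set ℕ := {k | j ≤ k ∧ s(W k, W (k + 1)) ∈ q.1.2.2.edges}
      have hK : K.Finite := by
        refine Set.Finite.subset ((List.finite_toSet q.1.2.2.edges).preimage hinj.injOn) ?_
        intro k hk
        exact hk.2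
      by_cases hne : K.Nonempty
      · obtain ⟨m, hm, hmax⟩ := Set.exists_max_image K id hK hne
        refine ⟨m + 1, by have := hm.1; omega, q.1.2.2.snd_mem_support_of_mem_edges hm.2, ?_⟩
        intro k hk he
        have := hmax k ⟨by have := hm.1; omega, he⟩
        simp only [id] at this
        omega
      · refine ⟨j, le_rfl, hjq, ?_⟩
        intro k hk he
        exact hne ⟨k, hk, he⟩
    obtain ⟨i', h1, h2, h3⟩ := hi'
    exact ⟨j, i', q, hj, h1, hqN, hjq, h2, hmin, h3⟩
  choose J I Q h1 h2 h3 h4 h5 h6 h7 using hstep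
  let nxt : {s : ℕ × Finset P // ∀ q ∈ s.2, ∀ k ≥ s.1, s(W k, W (k + 1)) ∉ q.1.2.2.edges} →
      {s : ℕ × Finset P // ∀ q ∈ s.2, ∀ k ≥ s.1, s(W k, W (k + 1)) ∉ q.1.2.2.edges} :=
    fun s => ⟨(I s, insert (Q s) s.1.2), by
      intro q hq k hk
      simp only [Finset.mem_insert] at hq
      rcases hq with rfl | hq
      · exact h7 s k hk
      · exact s.2 q hq k (le_trans ((h1 s).trans (h2 s)) hk)⟩
  let S : ℕ → {s : ℕ × Finset P // ∀ q ∈ s.2, ∀ k ≥ s.1, s(W k, W (k + 1)) ∉ q.1.2.2.edges} :=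
    fun n => nxt^[n] ⟨(0, ∅), by simp⟩
  have hS : ∀ n, S (n + 1) = nxt (S n) := fun n => Function.iterate_succ_apply' nxt n _
  obtain ⟨ii, jj, qq, hi0, g1, g2, g3, g4, g5, g6⟩ : ∃ (ii jj : ℕ → ℕ) (qq : ℕ → P),
      ii 0 = 0 ∧ (∀ n, ii n ≤ jj n) ∧ (∀ n, jj n ≤ ii (n + 1)) ∧
      (∀ n m, n < m → qq n ≠ qq m) ∧ (∀ n, W (jj n) ∈ (qq n).1.2.2.support) ∧
      (∀ n, W (ii (n + 1)) ∈ (qq n).1.2.2.support) ∧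
      (∀ n k, ii n ≤ k → k < jj n → ∀ q' : P, s(W k, W (k + 1)) ∉ q'.1.2.2.edges) := by
    have hI : ∀ n, (S (n + 1)).1.1 = I (S n) := by intro n; rw [hS]
    refine ⟨fun n => (S n).1.1, fun n => J (S n), fun n => Q (S n), rfl, fun n => h1 _, ?_, ?_,
      fun n => h4 _, ?_, fun n => h6 _⟩
    · intro n
      simp only [hI]
      exact h2 _
    · intro n m hnm heq
      have hmem : ∀ m, n < m → Q (S n) ∈ (S m).1.2 := by
        intro m hm
        induction m, hm using Nat.le_induction with
        | base => rw [hS]; exact Finset.mem_insert_self _ _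
        | succ m hm ih => rw [hS]; exact Finset.mem_insert_of_mem ih
      apply h3 (S m)
      change Q (S n) = Q (S m) at heq
      rw [← heq]
      exact hmem m hnm
    · intro n
      simp only [hI]
      exact h5 _
  clear_value S
  have qinj : ∀ n m, qq n = qq m → n = m := by
    intro n m h
    rcases lt_trichotomy n m with h1 | h1 | h1
    · exact absurd h (g3 _ _ h1)
    · exact h1
    · exact absurd h.symm (g3 _ _ h1)
  have imono : ∀ n m, n < m → jj n ≤ ii m := by
    intro n m hnm
    induction m, hnm using Nat.le_induction with
    | base => exact g2 n
    | succ m hm ih => exact ih.trans ((g1 m).trans (g2 m))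
  choose c a b ha hb hab using fun n =>
    split_path (qq n).1 (hP1 _ (qq n).2).1 _ _ (g4 n) (g5 n)
  choose sg hsg using fun n => segment W hW (ii n) (jj n) (g1 n)
  let y : ({q : P // ∀ n, q ≠ qq n} ⊕ ℕ) × Bool → Option (P × Bool)
    | (Sum.inl q, d) => some (q.1, d)
    | (Sum.inr n, true) => some (qq n, c n)
    | (Sum.inr 0, false) => none
    | (Sum.inr (n + 1), false) => some (qq n, !(c n))
  let z : Option (P × Bool) → V
    | none => W 0
    | some (q, d) => en q.1 d
  have enT : ∀ (p : P) d, en p.1 d ∈ T' := by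
    intro p d
    cases d
    · exact (hP1 _ p.2).2.2.1
    · exact (hP1 _ p.2).2.2.2
  have hz : Function.Injective z := by
    rintro (_ | ⟨p, d⟩) (_ | ⟨q, d'⟩) h
    · rfl
    · exact absurd (enT q d') (by change W 0 = en q.1 d' at h; rw [← h]; exact h0)
    · exact absurd (enT p d) (by change en p.1 d = W 0 at h; rw [h]; exact h0)
    · obtain ⟨rfl, rfl⟩ := en_inj hP p q d d' h
      rfl
  have hzr : Set.range z = insert (W 0) T' := by
    ext v
    constructor
    · rintro ⟨_ | ⟨p, d⟩, rfl⟩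
      · exact Or.inl rfl
      · exact Or.inr (enT p d)
    · rintro (rfl | hv)
      · exact ⟨none, rfl⟩
      · obtain ⟨q, ⟨hq, hqe⟩, -⟩ := hP3 _ hv
        rcases hqe with h | h
        · exact ⟨some (⟨q, hq⟩, false), by simpa [z, en] using h⟩
        · exact ⟨some (⟨q, hq⟩, true), by simpa [z, en] using h⟩
  have hyi : Function.Injective y := by
    rintro ⟨q | n, d⟩ ⟨q' | n', d'⟩ h
    · simp only [y, Option.some.injEq, Prod.mk.injEq] at h
      obtain ⟨h1, rfl⟩ := h
      rw [Subtype.ext h1]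
    · exfalso
      cases d'
      · cases n' with
        | zero => simp [y] at h
        | succ n' =>
          simp only [y, Option.some.injEq, Prod.mk.injEq] at h
          exact q.2 _ h.1
      · simp only [y, Option.some.injEq, Prod.mk.injEq] at h
        exact q.2 _ h.1
    · exfalso
      cases d
      · cases n with
        | zero => simp [y] at h
        | succ n =>
          simp only [y, Option.some.injEq, Prod.mk.injEq] at h
          exact q'.2 _ h.1.symm
      · simp only [y, Option.some.injEq, Prod.mk.injEq] at h
        exact q'.2 _ h.1.symm
    · cases d <;> cases d'
      · rcases n with _ | n <;> rcases n' with _ | n'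
        · rfl
        · simp [y] at h
        · simp [y] at h
        · simp only [y, Option.some.injEq, Prod.mk.injEq] at h
          rw [qinj _ _ h.1]
      · exfalso
        rcases n with _ | n
        · simp [y] at h
        · simp only [y, Option.some.injEq, Prod.mk.injEq] at h
          have := qinj _ _ h.1
          subst this
          have := h.2
          cases hc : c n <;> simp [hc] at this
      · exfalso
        rcases n' with _ | n'
        · simp [y] at h
        · simp only [y, Option.some.injEq, Prod.mk.injEq] at h
          have := qinj _ _ h.1
          subst this
          have := h.2
          cases hc : c n <;> simp [hc] at this
      · simp only [y, Option.some.injEq, Prod.mk.injEq] at h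
        rw [qinj _ _ h.1]
  have hbool : ∀ x y : Bool, ¬ x = y → x = !y := by decide
  have hys : Function.Surjective y := by
    rintro (_ | ⟨q, d⟩)
    · exact ⟨(Sum.inr 0, false), rfl⟩
    · by_cases hq : ∃ n, q = qq n
      · obtain ⟨n, rfl⟩ := hq
        by_cases hd : d = c n
        · exact ⟨(Sum.inr n, true), by simp [y, hd]⟩
        · refine ⟨(Sum.inr (n + 1), false), ?_⟩
          have : d = !(c n) := hbool _ _ hd
          simp [y, this]
      · push Not at hq
        exact ⟨(Sum.inl ⟨q, hq⟩, d), rfl⟩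
  have hstart : ∀ n, ∃ p : G.Walk (z (y (Sum.inr n, false))) (W (ii n)), ∀ e ∈ p.edges,
      ∃ m, n = m + 1 ∧ e ∈ (b m).edges := by
    rintro (_ | n)
    · rw [hi0]
      exact ⟨Walk.nil, by simp⟩
    · refine ⟨(b n).reverse, ?_⟩
      intro e he
      rw [Walk.edges_reverse, List.mem_reverse] at he
      exact ⟨n, rfl, he⟩
  choose st hst using hstart
  have hwalk : ∀ i, ∃ p : G.Walk (z (y (i, false))) (z (y (i, true))), ∀ e ∈ p.edges,
      match i with
      | Sum.inl q => e ∈ q.1.1.2.2.edges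
      | Sum.inr n => (∃ m, n = m + 1 ∧ e ∈ (b m).edges) ∨
          (∃ k, ii n ≤ k ∧ k < jj n ∧ e = s(W k, W (k + 1))) ∨ e ∈ (a n).edges := by
    rintro (q | n)
    · exact ⟨q.1.1.2.2, fun e he => he⟩
    · refine ⟨(st n).append ((sg n).append (a n)), ?_⟩
      intro e he
      simp only [Walk.edges_append, List.mem_append] at he
      rcases he with he | he | he
      · exact Or.inl (hst n e he)
      · exact Or.inr (Or.inl (hsg n e he))
      · exact Or.inr (Or.inr he)
  choose w hw using hwalk
  refine family (fun i => z (y i)) (hz.comp hyi) _ ?_ w ?_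
  · rw [← hzr]
    exact hys.range_comp z
  · have cross : ∀ (q : {q : P // ∀ n, q ≠ qq n}) n e, e ∈ (w (Sum.inl q)).edges →
        e ∈ (w (Sum.inr n)).edges → False := by
      intro q n e he he'
      have h1 := hw _ e he
      have h2 := hw _ e he'
      simp only at h1 h2
      rcases h2 with ⟨m, -, h2⟩ | ⟨k, hk1, hk2, rfl⟩ | h2
      · exact q.2 m (hPd _ _ e h1 (hb m e h2))
      · exact g6 n k hk1 hk2 _ h1
      · exact q.2 n (hPd _ _ e h1 (ha n e h2))
    rintro (q | n) (q' | n') hne e he he'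
    · have h1 := hw _ e he
      have h2 := hw _ e he'
      simp only at h1 h2
      exact hne (congrArg Sum.inl (Subtype.ext (hPd _ _ e h1 h2)))
    · exact cross q n' e he he'
    · exact cross q' n e he' he
    · have hne' : n ≠ n' := fun h => hne (congrArg Sum.inr h)
      have h1 := hw _ e he
      have h2 := hw _ e he'
      simp only at h1 h2
      rcases h1 with ⟨m, rfl, h1⟩ | ⟨k, hk1, hk2, rfl⟩ | h1
      · rcases h2 with ⟨m', rfl, h2⟩ | ⟨k', hk1', hk2', rfl⟩ | h2
        · have := qinj _ _ (hPd _ _ e (hb m e h1) (hb m' e h2))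
          omega
        · exact g6 _ _ hk1' hk2' _ (hb m _ h1)
        · have := qinj _ _ (hPd _ _ e (hb m e h1) (ha n' e h2))
          subst this
          exact hab m e h2 h1
      · rcases h2 with ⟨m', rfl, h2⟩ | ⟨k', hk1', hk2', h2⟩ | h2
        · exact g6 _ _ hk1 hk2 _ (hb m' _ h2)
        · have := hinj h2
          subst this
          rcases lt_or_gt_of_ne hne' with h | h
          · have := imono _ _ h; omega
          · have := imono _ _ h; omega
        · exact g6 _ _ hk1 hk2 _ (ha n' _ h2)
      · rcases h2 with ⟨m', rfl, h2⟩ | ⟨k', hk1', hk2', rfl⟩ | h2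
        · have := qinj _ _ (hPd _ _ e (ha n e h1) (hb m' e h2))
          subst this
          exact hab n e h1 h2
        · exact g6 _ _ hk1' hk2' _ (ha n _ h1)
        · exact hne' (qinj _ _ (hPd _ _ e (ha n e h1) (ha n' e h2)))

theorem main (hG : G.TwoEdgeConnected) (T : Set V) :
    G.HasTJoin T ↔ T.Infinite ∨ Even T.ncard := by
  constructor
  · exact fun h => Or.inr (even_of_hasTJoin h)
  · intro h
    by_cases hT : T.Infinite
    · obtain ⟨W, hW, hinj, h0, hinf⟩ := infinite_trail hG T hT
      rcases claimA hG.1 T (W 0) h0 with h | h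
      · exact h
      · have := assembly h W hW hinj (by simp) ?_
        · rwa [Set.insert_sdiff_self_of_mem h0] at this
        · have := hinf.sdiff (Set.finite_singleton (W 0))
          refine this.mono ?_
          rintro x ⟨⟨h1, h2⟩, h3⟩
          exact ⟨h1, h2, h3⟩
    · have hE : Even T.ncard := h.resolve_left hT
      rcases T.eq_empty_or_nonempty with rfl | ⟨r, hr⟩
      · exact ⟨∅, by simp [IsTJoin]⟩
      · rcases claimA hG.1 T r hr with h | h
        · exact h
        · exfalso
          have h1 := even_of_hasTJoin h
          have h2 := Set.ncard_sdiff_singleton_add_one hr (Set.not_infinite.1 hT)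
          rw [← h2, Nat.even_add_one] at hE
          exact hE h1

end Assembly
end TJ

/-- A 2-edge-connected graph contains a `T`-join iff `T` is infinite or `|T|` is even. -/
theorem hasTJoin_iff_of_twoEdgeConnected {V : Type*} (G : SimpleGraph V)
    (hG : G.TwoEdgeConnected) (T : Set V) :
    G.HasTJoin T ↔ T.Infinite ∨ Even T.ncard := by
  exact TJ.main hG T
end

section
/- Let G be a 2-edge-connected graph and let T ⊆ V(G) be finite with |T| even and |T| ≥ 4. Let s and t be two distinct vertices of T. Then G contains a T-join in which s and t are not matched with each other, i.e., no single path of the T-join has endpoints s and t. -/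
namespace TJoinAux

open SimpleGraph

variable {V : Type*}

open Classical in
/-- `x` has odd degree in the finite edge set `F`. -/
def Od (F : Finset (Sym2 V)) (x : V) : Prop := Odd (F.filter (fun e => x ∈ e)).card

open Classical in
lemma od_insert (F : Finset (Sym2 V)) (u v : V) (huv : u ≠ v) (h : s(u, v) ∉ F) (x : V) :
    Od (insert s(u, v) F) x ↔ (Od F x ↔ (x = u ↔ x = v)) := by
  unfold Od
  rw [Finset.filter_insert]
  by_cases hx : x ∈ s(u, v)
  · rw [if_pos hx, Finset.card_insert_of_notMem (by simp [h])]
    rw [Sym2.mem_iff] at hx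
    rw [Nat.odd_add_one]
    have : ¬ (x = u ↔ x = v) := by grind
    tauto
  · rw [if_neg hx]
    rw [Sym2.mem_iff] at hx
    tauto

open Classical in
lemma od_erase (F : Finset (Sym2 V)) (u v : V) (huv : u ≠ v) (h : s(u, v) ∈ F) (x : V) :
    Od (F.erase s(u, v)) x ↔ (Od F x ↔ (x = u ↔ x = v)) := by
  have := od_insert (F.erase s(u, v)) u v huv (by simp) x
  rw [Finset.insert_erase h] at this
  tauto

lemma od_empty (x : V) : ¬ Od (∅ : Finset (Sym2 V)) x := by
  simp [Od]

open Classical in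
/-- Toggling the edges of a walk. -/
lemma toggle {G : SimpleGraph V} {u v : V} (p : G.Walk u v) (F : Finset (Sym2 V)) :
    ∃ F' : Finset (Sym2 V), (∀ e ∈ F', e ∈ F ∨ e ∈ p.edges) ∧
      ∀ x, Od F' x ↔ (Od F x ↔ (x = u ↔ x = v)) := by
  induction p with
  | nil => exact ⟨F, by tauto, by tauto⟩
  | @cons u v w h p ih =>
    obtain ⟨F', h1, h2⟩ := ih
    by_cases he : s(u, v) ∈ F'
    · refine ⟨F'.erase s(u, v), ?_, ?_⟩
      · intro e he'
        have := h1 e (Finset.mem_of_mem_erase he')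
        simp only [Walk.edges_cons, List.mem_cons]
        tauto
      · intro x
        rw [od_erase F' u v h.ne he x, h2 x]
        tauto
    · refine ⟨insert s(u, v) F', ?_, ?_⟩
      · intro e he'
        simp only [Walk.edges_cons, List.mem_cons]
        rcases Finset.mem_insert.1 he' with h' | h'
        · tauto
        · have := h1 e h'
          tauto
      · intro x
        rw [od_insert F' u v h.ne he x, h2 x]
        tauto

open Classical in
/-- From an odd vertex one can walk inside `F` to another odd vertex. -/
lemma exists_walk (G : SimpleGraph V) (n : ℕ) : ∀ (F : Finset (Sym2 V)), F.card = n →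
    (∀ e ∈ F, e ∈ G.edgeSet) → ∀ v, Od F v →
    ∃ w, w ≠ v ∧ Od F w ∧ ∃ p : G.Walk v w, ∃ R : Finset (Sym2 V), R ⊆ F ∧
      (∀ e ∈ p.edges, e ∈ F ∧ e ∉ R) ∧ ∀ x, Od R x ↔ (Od F x ↔ (x = v ↔ x = w)) := by
  induction n with
  | zero =>
    intro F hF _ v hv
    rw [Finset.card_eq_zero] at hF
    subst hF
    exact absurd hv (od_empty v)
  | succ n ih =>
    intro F hF hFG v hv
    have hne : (F.filter (fun e => v ∈ e)).Nonempty := by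
      rw [← Finset.card_pos]
      exact Odd.pos hv
    obtain ⟨e, he⟩ := hne
    rw [Finset.mem_filter] at he
    obtain ⟨heF, hve⟩ := he
    obtain ⟨u, rfl⟩ := Sym2.mem_iff_exists.1 hve
    have hadj : G.Adj v u := hFG _ heF
    have hod := od_erase F v u hadj.ne heF
    have hvu := hadj.ne
    by_cases hu : Od F u
    · refine ⟨u, hvu.symm, hu, Walk.cons hadj Walk.nil, F.erase s(v, u), Finset.erase_subset _ _,
        ?_, hod⟩
      intro e he
      simp only [Walk.edges_cons, Walk.edges_nil, List.mem_singleton] at he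
      subst he
      simp [heF]
    · obtain ⟨w, hwu, hw, p, R, hRF, hp, hR⟩ := ih (F.erase s(v, u))
        (by rw [Finset.card_erase_of_mem heF, hF]; rfl)
        (fun e he => hFG e (Finset.mem_of_mem_erase he)) u (by rw [hod]; tauto)
      have hwv : w ≠ v := by
        rintro rfl
        rw [hod] at hw
        tauto
      refine ⟨w, hwv, ?_, Walk.cons hadj p, R, hRF.trans (Finset.erase_subset _ _), ?_, ?_⟩
      · rw [hod] at hw
        tauto
      · intro e he
        simp only [Walk.edges_cons, List.mem_cons] at he
        rcases he with rfl | he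
        · exact ⟨heF, fun h => by simpa using hRF h⟩
        · have := hp e he
          exact ⟨Finset.mem_of_mem_erase this.1, this.2⟩
      · intro x
        rw [hR x, hod x]
        tauto

/-- Adding one path to a `T`-join. -/
lemma extend {G : SimpleGraph V} {T T' : Set V} {P : Set (Σ u : V, Σ v : V, G.Walk u v)}
    (hP : G.IsTJoin T P) {R : Set (Sym2 V)} (hPR : ∀ p ∈ P, ∀ e ∈ p.2.2.edges, e ∈ R)
    {a b : V} (hab : a ≠ b) (ha : a ∉ T) (hb : b ∉ T) (w : G.Walk a b)
    (hw : ∀ e ∈ w.edges, e ∉ R) (hT' : ∀ x, x ∈ T' ↔ x ∈ T ∨ x = a ∨ x = b) :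
    ∃ q : G.Walk a b, (∀ e ∈ q.edges, e ∈ w.edges) ∧ G.IsTJoin T' (insert ⟨a, b, q⟩ P) := by
  classical
  obtain ⟨h1, h2, h3⟩ := hP
  have hq : ∀ e ∈ w.bypass.edges, e ∈ w.edges := fun e he => w.edges_bypass_subset he
  refine ⟨w.bypass, hq, ?_, ?_, ?_⟩
  · rintro p (rfl | hp)
    · exact ⟨w.bypass_isPath, hab, (hT' _).2 (by simp), (hT' _).2 (by simp)⟩
    · obtain ⟨i, j, k, l⟩ := h1 p hp
      exact ⟨i, j, (hT' _).2 (Or.inl k), (hT' _).2 (Or.inl l)⟩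
  · rintro p (rfl | hp) p' (rfl | hp') hne e he he'
    · exact hne rfl
    · exact hw e (hq e he) (hPR _ hp' e he')
    · exact hw e (hq e he') (hPR _ hp e he)
    · exact h2 p hp p' hp' hne e he he'
  · intro t ht
    rw [hT'] at ht
    by_cases htT : t ∈ T
    · obtain ⟨p, ⟨hp, hpt⟩, hu⟩ := h3 t htT
      refine ⟨p, ⟨Or.inr hp, hpt⟩, ?_⟩
      rintro p' ⟨rfl | hp', hpt'⟩
      · exfalso
        rcases hpt' with h | h
        · exact ha (by rw [show a = t from h]; exact htT)
        · exact hb (by rw [show b = t from h]; exact htT)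
      · exact hu p' ⟨hp', hpt'⟩
    · refine ⟨⟨a, b, w.bypass⟩, ⟨Or.inl rfl, ?_⟩, ?_⟩
      · rcases ht with h | h | h
        · exact absurd h htT
        · exact Or.inl h.symm
        · exact Or.inr h.symm
      · rintro p' ⟨rfl | hp', hpt'⟩
        · rfl
        · exfalso
          have := h1 p' hp'
          rcases hpt' with h | h
          · exact htT (h ▸ this.2.2.1)
          · exact htT (h ▸ this.2.2.2)

/-- An edge set with odd set `T` decomposes into a `T`-join. -/
lemma decompose (G : SimpleGraph V) (n : ℕ) : ∀ (F : Finset (Sym2 V)), F.card = n →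
    (∀ e ∈ F, e ∈ G.edgeSet) → ∀ T : Set V, (∀ x, Od F x ↔ x ∈ T) →
    ∃ P, G.IsTJoin T P ∧ ∀ p ∈ P, ∀ e ∈ p.2.2.edges, e ∈ F := by
  classical
  induction n using Nat.strong_induction_on with
  | _ n ih =>
    intro F hF hFG T hT
    rcases T.eq_empty_or_nonempty with rfl | ⟨v, hv⟩
    · exact ⟨∅, ⟨by simp, by simp, by simp⟩, by simp⟩
    · obtain ⟨w, hwv, hw, p, R, hRF, hp, hR⟩ := exists_walk G n F hF hFG v ((hT v).2 hv)
      have hlt : R.card < n := by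
        rw [← hF]
        apply Finset.card_lt_card
        refine Finset.ssubset_iff_subset_ne.2 ⟨hRF, ?_⟩
        rintro rfl
        have := hR v
        have := hwv.symm
        tauto
      have hRT : ∀ x, Od R x ↔ x ∈ T \ {v, w} := by
        intro x
        rw [hR x, hT x]
        have := (hT w).1 hw
        simp only [Set.mem_diff, Set.mem_insert_iff, Set.mem_singleton_iff]
        grind
      obtain ⟨P, hP, hPR⟩ := ih _ hlt R rfl (fun e he => hFG e (hRF he)) _ hRT
      obtain ⟨q, hq, hJ⟩ := extend (T' := T) hP (R := ↑R) hPR hwv.symm (by simp) (by simp) p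
        (fun e he => (hp e he).2) (by
          intro x
          have := (hT w).1 hw
          simp only [Set.mem_diff, Set.mem_insert_iff, Set.mem_singleton_iff]
          grind)
      refine ⟨_, hJ, ?_⟩
      rintro p' (rfl | hp')
      · intro e he
        exact (hp e (hq e he)).1
      · intro e he
        exact hRF (hPR p' hp' e he)

/-- The desired conclusion. -/
def Goal (G : SimpleGraph V) (T : Set V) (s t : V) : Prop :=
  ∃ P, G.IsTJoin T P ∧
      ∀ p ∈ P, ¬ ((p.1 = s ∧ p.2.1 = t) ∨ (p.1 = t ∧ p.2.1 = s))

/-- `T` without `s` and `t`. -/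
def T0 (T : Set V) (s t : V) : Set V := {x | x ∈ T ∧ x ≠ s ∧ x ≠ t}

lemma finish (G : SimpleGraph V) (T : Set V) (s t : V) (hs : s ∈ T) (ht : t ∈ T) (hst : s ≠ t)
    {a b : V} (hab : a ≠ b) (ha : a ∈ T0 T s t) (hb : b ∈ T0 T s t)
    (A : G.Walk s a) (B : G.Walk t b) (R : Finset (Sym2 V)) (hRG : ∀ e ∈ R, e ∈ G.edgeSet)
    (hAB : ∀ e ∈ A.edges, e ∉ B.edges) (hAR : ∀ e ∈ A.edges, e ∉ R)
    (hBR : ∀ e ∈ B.edges, e ∉ R)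
    (hR : ∀ x, Od R x ↔ (x ∈ T0 T s t ∧ x ≠ a ∧ x ≠ b)) : Goal G T s t := by
  obtain ⟨ha1, ha2, ha3⟩ := ha
  obtain ⟨hb1, hb2, hb3⟩ := hb
  obtain ⟨P, hP, hPR⟩ := decompose G _ R rfl hRG {x | x ∈ T0 T s t ∧ x ≠ a ∧ x ≠ b} hR
  obtain ⟨A', hA', hJ⟩ := extend
    (T' := {x | (x ∈ T0 T s t ∧ x ≠ a ∧ x ≠ b) ∨ x = s ∨ x = a}) hP (R := ↑R) hPR
    ha2.symm (by simp [T0]) (by simp) A hAR (by intro x; rfl)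
  obtain ⟨B', hB', hJ'⟩ := extend (T' := T) hJ (R := {e | e ∈ R ∨ e ∈ A.edges}) (by
      rintro p (rfl | hp) e he
      · exact Or.inr (hA' e he)
      · exact Or.inl (hPR p hp e he)) hb3.symm
      (by simp [T0]; exact ⟨hst.symm, ha3.symm⟩) (by simp; exact ⟨hb2, hab.symm⟩) B
      (by
        rintro e he (h | h)
        · exact hBR e he h
        · exact hAB e h he)
      (by
        intro x
        simp only [T0, Set.mem_setOf_eq]
        grind)
  refine ⟨_, hJ', ?_⟩
  rintro p (rfl | rfl | hp)
  · rintro (⟨h, h'⟩ | ⟨h, h'⟩)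
    · exact hst h.symm
    · exact hb2 h'
  · rintro (⟨h, h'⟩ | ⟨h, h'⟩)
    · exact ha3 h'
    · exact hst h
  · obtain ⟨_, _, h1, h2⟩ := hP.1 p hp
    rintro (⟨h, h'⟩ | ⟨h, h'⟩)
    · exact h1.1.2.1 h
    · exact h1.1.2.2 h

/-- Edge-disjoint linkage inside `H`. -/
def Lk (G : SimpleGraph V) (s t : V) (H : Set (Sym2 V)) (x y : V) : Prop :=
  ∃ (p : G.Walk s x) (q : G.Walk t y), (∀ e ∈ p.edges, e ∈ H) ∧ (∀ e ∈ q.edges, e ∈ H) ∧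
    ∀ e ∈ p.edges, e ∉ q.edges

lemma Lk.mono {G : SimpleGraph V} {s t : V} {H H' : Set (Sym2 V)} {x y : V}
    (h : Lk G s t H x y) (hH : H ⊆ H') : Lk G s t H' x y := by
  obtain ⟨p, q, h1, h2, h3⟩ := h
  exact ⟨p, q, fun e he => hH (h1 e he), fun e he => hH (h2 e he), h3⟩

lemma Lk.ext {G : SimpleGraph V} {s t : V} {H H' : Set (Sym2 V)} {x y a b : V}
    (h : Lk G s t H x y) (hH : H ⊆ H') (α : G.Walk x a) (β : G.Walk y b)
    (hα : ∀ e ∈ α.edges, e ∈ H' ∧ e ∉ H) (hβ : ∀ e ∈ β.edges, e ∈ H' ∧ e ∉ H)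
    (hαβ : ∀ e ∈ α.edges, e ∉ β.edges) : Lk G s t H' a b := by
  obtain ⟨p, q, h1, h2, h3⟩ := h
  refine ⟨p.append α, q.append β, ?_, ?_, ?_⟩
  · intro e he
    rw [Walk.edges_append, List.mem_append] at he
    rcases he with he | he
    · exact hH (h1 e he)
    · exact (hα e he).1
  · intro e he
    rw [Walk.edges_append, List.mem_append] at he
    rcases he with he | he
    · exact hH (h2 e he)
    · exact (hβ e he).1
  · intro e he he'
    rw [Walk.edges_append, List.mem_append] at he he'
    rcases he with he | he <;> rcases he' with he' | he'
    · exact h3 e he he'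
    · exact (hβ e he').2 (h1 e he)
    · exact (hα e he).2 (h2 e he')
    · exact hαβ e he he'

/-- Symmetric linkage. -/
def SLk (G : SimpleGraph V) (s t : V) (H : Set (Sym2 V)) (x y : V) : Prop :=
  Lk G s t H x y ∨ Lk G s t H y x

lemma SLk.symm {G : SimpleGraph V} {s t : V} {H : Set (Sym2 V)} {x y : V}
    (h : SLk G s t H x y) : SLk G s t H y x := Or.symm h

lemma SLk.ext {G : SimpleGraph V} {s t : V} {H H' : Set (Sym2 V)} {x y a b : V}
    (h : SLk G s t H x y) (hH : H ⊆ H') (α : G.Walk x a) (β : G.Walk y b)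
    (hα : ∀ e ∈ α.edges, e ∈ H' ∧ e ∉ H) (hβ : ∀ e ∈ β.edges, e ∈ H' ∧ e ∉ H)
    (hαβ : ∀ e ∈ α.edges, e ∉ β.edges) : SLk G s t H' a b := by
  rcases h with h | h
  · exact Or.inl (h.ext hH α β hα hβ hαβ)
  · exact Or.inr (h.ext hH β α hβ hα (fun e he he' => hαβ e he' he))

lemma finish_slk (G : SimpleGraph V) (T : Set V) (s t : V) (hs : s ∈ T) (ht : t ∈ T) (hst : s ≠ t)
    {a b : V} (hab : a ≠ b) (ha : a ∈ T0 T s t) (hb : b ∈ T0 T s t)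
    (R : Finset (Sym2 V)) (hRG : ∀ e ∈ R, e ∈ G.edgeSet)
    (hl : SLk G s t {e | e ∉ R} a b)
    (hR : ∀ x, Od R x ↔ (x ∈ T0 T s t ∧ x ≠ a ∧ x ≠ b)) : Goal G T s t := by
  rcases hl with ⟨p, q, h1, h2, h3⟩ | ⟨p, q, h1, h2, h3⟩
  · exact finish G T s t hs ht hst hab ha hb p q R hRG h3 h1 h2 hR
  · exact finish G T s t hs ht hst hab.symm hb ha p q R hRG h3 h1 h2
      (by intro x; rw [hR x]; tauto)

/-- The invariant of the growing process. -/
structure Inv (G : SimpleGraph V) (T : Set V) (s t : V) (X : Set V) (H : Set (Sym2 V))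
    (F : Finset (Sym2 V)) : Prop where
  smem : s ∈ X
  inside : ∀ e ∈ H, ∀ x ∈ e, x ∈ X
  link : ∀ x ∈ X, ∀ y ∈ X, SLk G s t H x y
  sub : ∀ e ∈ F, e ∈ G.edgeSet
  disj : ∀ e ∈ F, e ∉ H
  odd : ∀ x, Od F x ↔ x ∈ T0 T s t

lemma touch (G : SimpleGraph V) (T : Set V) (s t : V) (hs : s ∈ T) (ht : t ∈ T) (hst : s ≠ t)
    {X H F} (hI : Inv G T s t X H F) {k : V} (hk : k ∈ X) (hkT : k ∈ T0 T s t) :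
    Goal G T s t := by
  obtain ⟨w, hwk, hw, p, R, hRF, hp, hR⟩ := exists_walk G _ F rfl hI.sub k ((hI.odd k).2 hkT)
  have hw' := (hI.odd w).1 hw
  refine finish_slk G T s t hs ht hst hwk.symm hkT hw' R (fun e he => hI.sub e (hRF he)) ?_ ?_
  · refine (hI.link k hk k hk).ext ?_ Walk.nil p (by simp) ?_ (by simp)
    · intro e he he'
      exact hI.disj e (hRF he') he
    · intro e he
      exact ⟨(hp e he).2, hI.disj e (hp e he).1⟩
  · intro x
    rw [hR x, hI.odd x]
    grind

/-- First hit of `X`. -/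
lemma first_hit {G : SimpleGraph V} (X : Set V) {u v : V} (p : G.Walk u v) (hu : u ∉ X)
    (hv : v ∈ X) : ∃ y ∈ X, ∃ q : G.Walk u y, (∀ e ∈ q.edges, e ∈ p.edges) ∧
      ∀ e ∈ q.edges, ∃ x ∈ e, x ∉ X := by
  induction p with
  | nil => exact absurd hv hu
  | @cons u v w h p ih =>
    by_cases hvX : v ∈ X
    · refine ⟨v, hvX, Walk.cons h Walk.nil, ?_, ?_⟩
      · simp
      · intro e he
        simp only [Walk.edges_cons, Walk.edges_nil, List.mem_singleton] at he
        subst he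
        exact ⟨u, by simp, hu⟩
    · obtain ⟨y, hy, q, h1, h2⟩ := ih hvX hv
      refine ⟨y, hy, Walk.cons h q, ?_, ?_⟩
      · intro e he
        simp only [Walk.edges_cons, List.mem_cons] at he ⊢
        rcases he with he | he
        · exact Or.inl he
        · exact Or.inr (h1 e he)
      · intro e he
        simp only [Walk.edges_cons, List.mem_cons] at he
        rcases he with rfl | he
        · exact ⟨u, by simp, hu⟩
        · exact h2 e he

/-- Two vertices on a trail split it. -/
lemma two_on_trail {G : SimpleGraph V} {x y : V} (p : G.Walk x y) (hp : p.IsTrail) :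
    ∀ k ∈ p.support, ∀ k' ∈ p.support,
    (∃ (α : G.Walk x k) (β : G.Walk y k'), (∀ e ∈ α.edges, e ∈ p.edges) ∧
      (∀ e ∈ β.edges, e ∈ p.edges) ∧ ∀ e ∈ α.edges, e ∉ β.edges) ∨
    (∃ (α : G.Walk x k') (β : G.Walk y k), (∀ e ∈ α.edges, e ∈ p.edges) ∧
      (∀ e ∈ β.edges, e ∈ p.edges) ∧ ∀ e ∈ α.edges, e ∉ β.edges) := by
  induction p with
  | nil =>
    intro k hk k' hk'
    simp only [Walk.support_nil, List.mem_singleton] at hk hk'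
    subst hk
    subst hk'
    exact Or.inl ⟨Walk.nil, Walk.nil, by simp, by simp, by simp⟩
  | @cons x z y h p ih =>
    -- an auxiliary fact: from the far end one can reach any vertex
    have key : ∀ k ∈ (Walk.cons h p).support, ∃ β : G.Walk y k,
        ∀ e ∈ β.edges, e ∈ (Walk.cons h p).edges := by
      intro k hk
      classical
      refine ⟨((Walk.cons h p).dropUntil k hk).reverse, ?_⟩
      intro e he
      rw [Walk.edges_reverse, List.mem_reverse] at he
      exact Walk.edges_dropUntil_subset _ hk he
    rw [Walk.isTrail_cons] at hp
    intro k hk k' hk'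
    by_cases h1 : k = x
    · subst h1
      obtain ⟨β, hβ⟩ := key k' hk'
      exact Or.inl ⟨Walk.nil, β, by simp, hβ, by simp⟩
    by_cases h2 : k' = x
    · subst h2
      obtain ⟨β, hβ⟩ := key k hk
      exact Or.inr ⟨Walk.nil, β, by simp, hβ, by simp⟩
    have hk1 : k ∈ p.support := by
      rw [Walk.support_cons, List.mem_cons] at hk
      tauto
    have hk2 : k' ∈ p.support := by
      rw [Walk.support_cons, List.mem_cons] at hk'
      tauto
    have main : ∀ k k', (∃ (α : G.Walk z k) (β : G.Walk y k'), (∀ e ∈ α.edges, e ∈ p.edges) ∧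
      (∀ e ∈ β.edges, e ∈ p.edges) ∧ ∀ e ∈ α.edges, e ∉ β.edges) →
      (∃ (α : G.Walk x k) (β : G.Walk y k'), (∀ e ∈ α.edges, e ∈ (Walk.cons h p).edges) ∧
      (∀ e ∈ β.edges, e ∈ (Walk.cons h p).edges) ∧ ∀ e ∈ α.edges, e ∉ β.edges) := by
      rintro k k' ⟨α, β, ha, hb, hc⟩
      refine ⟨Walk.cons h α, β, ?_, ?_, ?_⟩
      · intro e he
        simp only [Walk.edges_cons, List.mem_cons] at he ⊢
        rcases he with he | he
        · exact Or.inl he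
        · exact Or.inr (ha e he)
      · intro e he
        simp only [Walk.edges_cons, List.mem_cons]
        exact Or.inr (hb e he)
      · intro e he he'
        simp only [Walk.edges_cons, List.mem_cons] at he
        rcases he with rfl | he
        · exact hp.2 (hb _ he')
        · exact hc e he he'
    rcases ih hp.1 k hk1 k' hk2 with h' | h'
    · exact Or.inl (main _ _ h')
    · exact Or.inr (main _ _ h')

/-- Adding an ear. -/
lemma Inv.ear {G : SimpleGraph V} {T : Set V} {s t : V} {X H F} (hI : Inv G T s t X H F)
    {x y : V} (hx : x ∈ X) (hy : y ∈ X) (E : G.Walk x y) (hE : E.IsTrail)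
    (hEH : ∀ e ∈ E.edges, e ∉ H) (F' : Finset (Sym2 V)) (hF'G : ∀ e ∈ F', e ∈ G.edgeSet)
    (hF'H : ∀ e ∈ F', e ∉ H ∧ e ∉ E.edges) (hodd : ∀ x, Od F' x ↔ x ∈ T0 T s t) :
    Inv G T s t (X ∪ {v | v ∈ E.support}) (H ∪ {e | e ∈ E.edges}) F' := by
  have one : ∀ k ∈ E.support, ∃ β : G.Walk x k, ∀ e ∈ β.edges, e ∈ E.edges := by
    intro k hk
    classical
    exact ⟨E.takeUntil k hk, fun e he => Walk.edges_takeUntil_subset _ hk he⟩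
  have mixed : ∀ k ∈ E.support, ∀ k' ∈ X, SLk G s t (H ∪ {e | e ∈ E.edges}) k k' := by
    intro k hk k' hk'
    obtain ⟨β, hβ⟩ := one k hk
    exact (hI.link x hx k' hk').ext Set.subset_union_left β Walk.nil
      (fun e he => ⟨Or.inr (hβ e he), hEH e (hβ e he)⟩) (by simp) (by simp)
  refine ⟨Or.inl hI.smem, ?_, ?_, hF'G, ?_, hodd⟩
  · rintro e (he | he) v hv
    · exact Or.inl (hI.inside e he v hv)
    · exact Or.inr (E.mem_support_of_mem_edges he hv)
  · rintro k (hk | hk) k' (hk' | hk')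
    · exact (hI.link k hk k' hk').ext Set.subset_union_left Walk.nil Walk.nil
        (by simp) (by simp) (by simp)
    · exact (mixed k' hk' k hk).symm
    · exact mixed k hk k' hk'
    · rcases two_on_trail E hE k hk k' hk' with ⟨α, β, ha, hb, hc⟩ | ⟨α, β, ha, hb, hc⟩
      · exact (hI.link x hx y hy).ext Set.subset_union_left α β
          (fun e he => ⟨Or.inr (ha e he), hEH e (ha e he)⟩)
          (fun e he => ⟨Or.inr (hb e he), hEH e (hb e he)⟩) hc
      · exact ((hI.link x hx y hy).ext Set.subset_union_left α β
          (fun e he => ⟨Or.inr (ha e he), hEH e (ha e he)⟩)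
          (fun e he => ⟨Or.inr (hb e he), hEH e (hb e he)⟩) hc).symm
  · rintro e he (h | h)
    · exact (hF'H e he).1 h
    · exact (hF'H e he).2 h

/-- One growing step. -/
lemma step (G : SimpleGraph V) (hG : G.TwoEdgeConnected)
    (T : Set V) (s t : V) (hs : s ∈ T) (ht : t ∈ T) (hst : s ≠ t)
    {X H F} (hI : Inv G T s t X H F) {x z : V} (hx : x ∈ X) (hxz : G.Adj x z) :
    Goal G T s t ∨ ∃ X' H' F', Inv G T s t X' H' F' ∧ z ∈ X' := by
  classical
  by_cases hz : z ∈ X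
  · exact Or.inr ⟨X, H, F, hI, hz⟩
  by_cases hX : ∃ k ∈ X, k ∈ T0 T s t
  · obtain ⟨k, hk, hk'⟩ := hX
    exact Or.inl (touch G T s t hs ht hst hI hk hk')
  push Not at hX
  have hzH : s(x, z) ∉ H := fun h => hz (hI.inside _ h z (by simp))
  obtain ⟨F1, y, hy, hF1G, hF1H, hxzF, hF1⟩ : ∃ (F1 : Finset (Sym2 V)) (y : V), y ∈ X ∧
      (∀ e ∈ F1, e ∈ G.edgeSet) ∧ (∀ e ∈ F1, e ∉ H) ∧ s(x, z) ∉ F1 ∧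
      ∀ v, Od F1 v ↔ (v ∈ T0 T s t ↔ (v = z ↔ v = y)) := by
    by_cases hF : s(x, z) ∈ F
    · refine ⟨F.erase s(x, z), x, hx, fun e he => hI.sub e (Finset.mem_of_mem_erase he),
        fun e he => hI.disj e (Finset.mem_of_mem_erase he), by simp, ?_⟩
      intro v
      rw [od_erase F x z hxz.ne hF, hI.odd v]
      tauto
    · obtain ⟨p⟩ := (hG.2 s(x, z) hxz).preconnected z s
      obtain ⟨y, hy, q, hq1, hq2⟩ := first_hit X p hz hI.smem
      obtain ⟨F1, h1, h2⟩ := toggle q F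
      have hqE : ∀ e ∈ q.edges, e ∈ G.edgeSet ∧ e ≠ s(x, z) := by
        intro e he
        have := q.edges_subset_edgeSet he
        rw [edgeSet_deleteEdges] at this
        exact ⟨this.1, this.2⟩
      refine ⟨F1, y, hy, ?_, ?_, ?_, ?_⟩
      · intro e he
        rcases h1 e he with h | h
        · exact hI.sub e h
        · exact (hqE e h).1
      · intro e he heH
        rcases h1 e he with h | h
        · exact hI.disj e h heH
        · obtain ⟨v, hv, hvX⟩ := hq2 e h
          exact hvX (hI.inside e heH v hv)
      · intro he
        rcases h1 _ he with h | h
        · exact hF h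
        · exact (hqE _ h).2 rfl
      · intro v
        rw [h2 v, hI.odd v]
  have hyT := hX y hy
  have hyz : y ≠ z := fun h => hz (h ▸ hy)
  by_cases hzT : z ∈ T0 T s t
  · left
    obtain ⟨w, hwy, hw, p, R, hRF, hp, hR⟩ := exists_walk G _ F1 rfl hF1G y
      (by rw [hF1]; tauto)
    have hwz : w ≠ z := by
      rintro rfl
      rw [hF1] at hw
      tauto
    have hwT : w ∈ T0 T s t := by
      rw [hF1] at hw
      tauto
    refine finish_slk G T s t hs ht hst hwz.symm hzT hwT R (fun e he => hF1G e (hRF he)) ?_ ?_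
    · refine (hI.link x hx y hy).ext ?_ (Walk.cons hxz Walk.nil) p ?_ ?_ ?_
      · intro e he he'
        exact hF1H e (hRF he') he
      · intro e he
        simp only [Walk.edges_cons, Walk.edges_nil, List.mem_singleton] at he
        subst he
        exact ⟨fun h => hxzF (hRF h), hzH⟩
      · intro e he
        exact ⟨(hp e he).2, hF1H e (hp e he).1⟩
      · intro e he he'
        simp only [Walk.edges_cons, Walk.edges_nil, List.mem_singleton] at he
        subst he
        exact hxzF (hp _ he').1
    · intro v
      rw [hR v, hF1 v]
      grind
  · obtain ⟨w, hwz, hw, p, R, hRF, hp, hR⟩ := exists_walk G _ F1 rfl hF1G z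
      (by rw [hF1]; have := hyz.symm; tauto)
    by_cases hwy : w = y
    · subst hwy
      right
      have hp' : ∀ e ∈ p.bypass.edges, e ∈ p.edges := fun e he => p.edges_bypass_subset he
      refine ⟨_, _, R, hI.ear hx hy (Walk.cons hxz p.bypass) ?_ ?_ R
        (fun e he => hF1G e (hRF he)) ?_ ?_, Or.inr ?_⟩
      · rw [Walk.isTrail_cons]
        exact ⟨p.bypass_isPath.isTrail, fun h => hxzF (hp _ (hp' _ h)).1⟩
      · intro e he
        simp only [Walk.edges_cons, List.mem_cons] at he
        rcases he with rfl | he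
        · exact hzH
        · exact hF1H e (hp e (hp' e he)).1
      · intro e he
        refine ⟨hF1H e (hRF he), ?_⟩
        intro he'
        simp only [Walk.edges_cons, List.mem_cons] at he'
        rcases he' with rfl | he'
        · exact hxzF (hRF he)
        · exact (hp e (hp' e he')).2 he
      · intro v
        rw [hR v, hF1 v]
        tauto
      · simp
    · left
      have hwT : w ∈ T0 T s t := by
        rw [hF1] at hw
        tauto
      obtain ⟨w', hwy', hw', p', R', hRF', hp', hR'⟩ := exists_walk G _ R rfl
        (fun e he => hF1G e (hRF he)) y (by rw [hR, hF1]; grind)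
      have hRv : ∀ v, Od R v ↔ (v ∈ T0 T s t ↔ (v = w ↔ v = y)) := by
        intro v
        rw [hR v, hF1 v]
        tauto
      have hww : w ≠ w' := by
        rintro rfl
        rw [hRv] at hw'
        tauto
      have hwT' : w' ∈ T0 T s t := by
        rw [hRv] at hw'
        grind
      refine finish_slk G T s t hs ht hst hww hwT hwT' R'
        (fun e he => hF1G e (hRF (hRF' he))) ?_ ?_
      · refine (hI.link x hx y hy).ext ?_ (Walk.cons hxz p) p' ?_ ?_ ?_
        · intro e he he'
          exact hF1H e (hRF (hRF' he')) he
        · intro e he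
          simp only [Walk.edges_cons, List.mem_cons] at he
          rcases he with rfl | he
          · exact ⟨fun h => hxzF (hRF (hRF' h)), hzH⟩
          · exact ⟨fun h => (hp e he).2 (hRF' h), hF1H e (hp e he).1⟩
        · intro e he
          exact ⟨(hp' e he).2, hF1H e (hRF (hp' e he).1)⟩
        · intro e he he'
          simp only [Walk.edges_cons, List.mem_cons] at he
          rcases he with rfl | he
          · exact hxzF (hRF (hp' _ he').1)
          · exact (hp e he).2 (hp' e he').1
      · intro v
        rw [hR' v, hRv v]
        grind

lemma grow (G : SimpleGraph V) (hG : G.TwoEdgeConnected)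
    (T : Set V) (s t : V) (hs : s ∈ T) (ht : t ∈ T) (hst : s ≠ t) {u v : V} (p : G.Walk u v)
    (hv : v ∈ T0 T s t) : ∀ X H F, Inv G T s t X H F → u ∈ X → Goal G T s t := by
  induction p with
  | nil =>
    intro X H F hI hu
    exact touch G T s t hs ht hst hI hu hv
  | cons h p ih =>
    intro X H F hI hu
    rcases step G hG T s t hs ht hst hI hu h with h' | ⟨X', H', F', hI', hz⟩
    · exact h'
    · exact ih hv X' H' F' hI' hz

/-- Existence of an edge set with prescribed odd set. -/
lemma exists_od (G : SimpleGraph V) (hG : G.Connected) (n : ℕ) : ∀ T : Finset V,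
    T.card = n + n → ∃ F : Finset (Sym2 V), (∀ e ∈ F, e ∈ G.edgeSet) ∧ ∀ x, Od F x ↔ x ∈ T := by
  classical
  induction n with
  | zero =>
    intro T hT
    have : T = ∅ := by simpa using hT
    subst this
    exact ⟨∅, by simp, fun x => by simp [od_empty]⟩
  | succ n ih =>
    intro T hT
    obtain ⟨a, ha, b, hb, hab⟩ := Finset.one_lt_card.1 (show 1 < T.card by omega)
    obtain ⟨F, hF, hF'⟩ := ih ((T.erase a).erase b) (by
      rw [Finset.card_erase_of_mem (Finset.mem_erase.2 ⟨hab.symm, hb⟩),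
        Finset.card_erase_of_mem ha]
      omega)
    obtain ⟨p⟩ := hG.preconnected a b
    obtain ⟨F', h1, h2⟩ := toggle p F
    refine ⟨F', ?_, ?_⟩
    · intro e he
      rcases h1 e he with h | h
      · exact hF e h
      · exact p.edges_subset_edgeSet h
    · intro x
      rw [h2, hF']
      simp only [Finset.mem_erase]
      grind

lemma main (G : SimpleGraph V) (hG : G.TwoEdgeConnected) (T : Set V) (hfin : T.Finite)
    (heven : Even T.ncard)
    (hcard : 4 ≤ T.ncard) (s t : V) (hs : s ∈ T) (ht : t ∈ T) (hst : s ≠ t) :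
    Goal G T s t := by
  classical
  obtain ⟨n, hn⟩ := heven
  obtain ⟨F, hFG, hF⟩ := exists_od G hG.1 n hfin.toFinset
    (by rw [← Set.ncard_eq_toFinset_card T hfin, hn])
  simp only [Set.Finite.mem_toFinset] at hF
  obtain ⟨w, hws, hw, p, R, hRF, hp, hR⟩ := exists_walk G _ F rfl hFG s ((hF s).2 hs)
  have hRG : ∀ e ∈ R, e ∈ G.edgeSet := fun e he => hFG e (hRF he)
  have hwT := (hF w).1 hw
  by_cases hwt : w = t
  · subst hwt
    obtain ⟨a, haT, ha⟩ : ∃ a ∈ T, a ∉ ({s, w} : Set V) := by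
      refine Set.exists_mem_notMem_of_ncard_lt_ncard ?_ (Set.toFinite _)
      have := Set.ncard_insert_le s {w}
      rw [Set.ncard_singleton] at this
      omega
    have ha0 : a ∈ T0 T s w := by
      simp only [Set.mem_insert_iff, Set.mem_singleton_iff, not_or] at ha
      exact ⟨haT, ha.1, ha.2⟩
    have hq : ∀ e ∈ p.bypass.edges, e ∈ p.edges := fun e he => p.edges_bypass_subset he
    obtain ⟨r⟩ := hG.1.preconnected s a
    refine grow G hG T s w hs ht hst r ha0 {v | v ∈ p.bypass.support} {e | e ∈ p.bypass.edges} R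
      ⟨by simp, ?_, ?_, hRG, ?_, ?_⟩ (by simp)
    · intro e he v hv
      exact p.bypass.mem_support_of_mem_edges he hv
    · intro k hk k' hk'
      rcases two_on_trail p.bypass p.bypass_isPath.isTrail k hk k' hk' with
        ⟨α, β, ha, hb, hc⟩ | ⟨α, β, ha, hb, hc⟩
      · exact Or.inl ⟨α, β, ha, hb, hc⟩
      · exact Or.inr ⟨α, β, ha, hb, hc⟩
    · intro e he he'
      exact (hp e (hq e he')).2 he
    · intro x
      rw [hR x, hF x]
      simp only [T0, Set.mem_setOf_eq]
      grind
  · have hRv : ∀ x, Od R x ↔ (x ∈ T ∧ x ≠ s ∧ x ≠ w) := by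
      intro x
      rw [hR x, hF x]
      grind
    obtain ⟨w', hwt', hw', p', R', hRF', hp', hR'⟩ := exists_walk G _ R rfl hRG t
      ((hRv t).2 ⟨ht, hst.symm, Ne.symm hwt⟩)
    have hw2 := (hRv w').1 hw'
    refine finish G T s t hs ht hst (a := w) (b := w') hw2.2.2.symm ⟨hwT, hws, hwt⟩
      ⟨hw2.1, hw2.2.1, hwt'⟩ p p' R' (fun e he => hRG e (hRF' he)) ?_ ?_ ?_ ?_
    · intro e he he'
      exact (hp e he).2 (hp' e he').1
    · intro e he he'
      exact (hp e he).2 (hRF' he')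
    · intro e he
      exact (hp' e he).2
    · intro x
      rw [hR' x, hRv x]
      simp only [T0, Set.mem_setOf_eq]
      grind

end TJoinAux

/-- In a 2-edge-connected graph, if `T` is finite of even cardinality at least four and
`s ≠ t` are in `T`, then there is a `T`-join in which no single path has endpoints `s`
and `t`. -/
theorem exists_tJoin_avoiding_pair {V : Type*} (G : SimpleGraph V)
    (hG : G.TwoEdgeConnected) (T : Set V) (hfin : T.Finite) (heven : Even T.ncard)
    (hcard : 4 ≤ T.ncard) (s t : V) (hs : s ∈ T) (ht : t ∈ T) (hst : s ≠ t) :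
    ∃ P, G.IsTJoin T P ∧
      ∀ p ∈ P, ¬ ((p.1 = s ∧ p.2.1 = t) ∨ (p.1 = t ∧ p.2.1 = s)) := by
  exact TJoinAux.main G hG T hfin heven hcard s t hs ht hst
end

section
/- Let G be a graph and T ⊆ V(G). Suppose that every connected component of G is 2-edge-connected and that every connected component of G contains infinitely many vertices of T. Then G contains a T-join. -/
namespace TJ

theorem exists_rec {V : Type*} (h : V → ℕ) (r : V → V → Prop) (hr : ∀ w w', r w w' → h w < h w')
    (F : V → Prop → Prop) : ∃ m : V → Prop, ∀ w', m w' ↔ ∃ w, r w w' ∧ F w (m w) := by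
  let wf : WellFounded (fun a b : V => h a < h b) := (measure h).wf
  refine ⟨wf.fix (fun w' ih => ∃ w, ∃ hw : r w w', F w (ih w (hr w w' hw))), fun w' => ?_⟩
  rw [wf.fix_eq]
  simp only [exists_prop]

section Absorb
variable {V : Type*} (D T : Set V) (π : V → V) (h : V → ℕ)

/-- `u` lies below `v`. -/
def Desc (u v : V) : Prop := ∃ n, π^[n] u = v

variable {π} in
theorem Desc.trans {u v w : V} (a : Desc π u v) (b : Desc π v w) : Desc π u w := by
  obtain ⟨n, rfl⟩ := a
  obtain ⟨m, rfl⟩ := b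
  exact ⟨m + n, by rw [Function.iterate_add_apply]⟩

theorem Desc.refl (u : V) : Desc π u u := ⟨0, rfl⟩

theorem Desc.iter (u : V) (n : ℕ) : Desc π u (π^[n] u) := ⟨n, rfl⟩

theorem Desc.total {x u v : V} (a : Desc π x u) (b : Desc π x v) : Desc π u v ∨ Desc π v u := by
  obtain ⟨n, rfl⟩ := a
  obtain ⟨m, rfl⟩ := b
  rcases le_total n m with hnm | hnm
  · left; exact ⟨m - n, by rw [← Function.iterate_add_apply, Nat.sub_add_cancel hnm]⟩
  · right; exact ⟨n - m, by rw [← Function.iterate_add_apply, Nat.sub_add_cancel hnm]⟩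

/-- a local solution on the descendants of `v` -/
def Sol (v : V) (k : V → ℕ) : Prop :=
  (∀ t ∈ T, Desc π t v → ∀ i < k t, Desc π (π^[i] t) v) ∧
  (∀ t ∈ T, ∀ t' ∈ T, Desc π t v → Desc π t' v → ∀ i < k t, ∀ j < k t',
    π^[i] t = π^[j] t' → t = t') ∧
  ∀ w, Desc π w v → Even {t | t ∈ T ∧ π^[k t] t = w}.ncard

/-- vertices with a local solution -/
def OKs : Set V := {v | v ∉ D ∧ ∃ k, Sol T π v k}

variable {D T π h}

theorem iter_mem (hD : ∀ d ∈ D, π d = d)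
    {u : V} (hu : u ∈ D) (n : ℕ) : π^[n] u = u :=
  Function.iterate_fixed (hD u hu) n

theorem notMem_of_iter (hD : ∀ d ∈ D, π d = d)
    {u v : V} (hv : v ∉ D) (n : ℕ) (e : π^[n] u = v) : u ∉ D := by
  intro hu
  rw [iter_mem hD hu] at e
  exact hv (e ▸ hu)

theorem height_iter (h1 : ∀ v, v ∉ D → h (π v) + 1 = h v) (hD : ∀ d ∈ D, π d = d)
    {v : V} (hv : v ∉ D) (n : ℕ) : ∀ u, π^[n] u = v → h u = n + h v := by
  induction n with
  | zero => intro u e; simp at e; simp [e]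
  | succ n ih =>
    intro u e
    have hu := notMem_of_iter hD hv _ e
    rw [Function.iterate_succ_apply] at e
    have := ih _ e
    have := h1 u hu
    omega

theorem iter_height_mem (h0 : ∀ v, h v = 0 ↔ v ∈ D) (h1 : ∀ v, v ∉ D → h (π v) + 1 = h v)
    (u : V) : π^[h u] u ∈ D := by
  generalize hn : h u = n
  induction n generalizing u with
  | zero => exact (h0 u).1 hn
  | succ n ih =>
    have hu : u ∉ D := fun hu => by have := (h0 u).2 hu; omega
    rw [Function.iterate_succ_apply]
    exact ih _ (by have := h1 u hu; omega)

theorem OKs_closed (h1 : ∀ v, v ∉ D → h (π v) + 1 = h v) (hD : ∀ d ∈ D, π d = d)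
    {u v : V} (hv : v ∈ OKs D T π) (huv : Desc π u v) : u ∈ OKs D T π := by
  obtain ⟨hvD, k, k1, k2, k3⟩ := hv
  obtain ⟨n, hn⟩ := id huv
  have huD := notMem_of_iter hD hvD _ hn
  refine ⟨huD, fun t => min (k t) (h t + 1 - h u), ?_, ?_, ?_⟩
  · rintro t ht ⟨m, hm⟩ i hi
    have := height_iter h1 hD huD _ _ hm
    have him : i ≤ m := by have := lt_min_iff.1 hi; omega
    exact ⟨m - i, by rw [← Function.iterate_add_apply, Nat.sub_add_cancel him, hm]⟩
  · intro t ht t' ht' a b i hi j hj e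
    exact k2 t ht t' ht' (a.trans huv) (b.trans huv) i (lt_min_iff.1 hi).1 j (lt_min_iff.1 hj).1 e
  · intro w hw
    obtain ⟨m, hm⟩ := id hw
    have hwD := notMem_of_iter hD huD _ hm
    have hh := height_iter h1 hD huD _ _ hm
    rw [← show {t | t ∈ T ∧ π^[k t] t = w} = {t | t ∈ T ∧ π^[min (k t) (h t + 1 - h u)] t = w} from ?_]
    · exact k3 w (hw.trans huv)
    · ext t
      simp only [Set.mem_ofPred_eq]
      refine and_congr_right fun ht => ⟨fun e => ?_, fun e => ?_⟩
      · have := height_iter h1 hD hwD _ _ e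
        rwa [min_eq_left (by omega)]
      · have a1 := height_iter h1 hD hwD _ _ e
        rcases le_total (k t) (h t + 1 - h u) with h2 | h2
        · rwa [min_eq_left h2] at e
        · rw [min_eq_right h2] at a1
          omega

theorem exists_top (h0 : ∀ v, h v = 0 ↔ v ∈ D) (h1 : ∀ v, v ∉ D → h (π v) + 1 = h v) (hD : ∀ d ∈ D, π d = d)
    {x : V} (hx : x ∈ OKs D T π) :
    ∃ y ∈ OKs D T π, Desc π x y ∧ π y ∉ OKs D T π := by
  classical
  have hex : ∃ n, π^[n] x ∉ OKs D T π := ⟨h x, fun hc => hc.1 (iter_height_mem h0 h1 x)⟩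
  have hs := Nat.find_spec hex
  have hm := fun m => Nat.find_min hex (m := m)
  generalize Nat.find hex = n at hs hm
  cases n with
  | zero => exact absurd hx hs
  | succ n =>
    refine ⟨π^[n] x, by_contra (hm n (by omega)), ⟨n, rfl⟩, ?_⟩
    rwa [Function.iterate_succ_apply'] at hs

theorem top_unique (h1 : ∀ v, v ∉ D → h (π v) + 1 = h v) (hD : ∀ d ∈ D, π d = d)
    {x y y' : V} (hy : y ∈ OKs D T π) (hy' : y' ∈ OKs D T π)
    (a : Desc π x y) (a' : Desc π x y') (b : π y ∉ OKs D T π) (b' : π y' ∉ OKs D T π) : y = y' := by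
  have key : ∀ y y', y' ∈ OKs D T π → π y ∉ OKs D T π → Desc π y y' → y = y' := by
    rintro y y' hy' b ⟨n, hn⟩
    cases n with
    | zero => exact hn
    | succ n =>
      rw [Function.iterate_succ_apply] at hn
      exact absurd (OKs_closed h1 hD hy' ⟨n, hn⟩) b
  rcases Desc.total π a a' with c | c
  · exact key _ _ hy' b c
  · exact (key _ _ hy b' c).symm

theorem glue (h0 : ∀ v, h v = 0 ↔ v ∈ D) (h1 : ∀ v, v ∉ D → h (π v) + 1 = h v) (hD : ∀ d ∈ D, π d = d)
    : ∃ k0 : V → ℕ,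
    (∀ t ∈ T, ∀ i < k0 t, π^[i] t ∈ OKs D T π) ∧
    (∀ t ∈ T, ∀ t' ∈ T, ∀ i < k0 t, ∀ j < k0 t', π^[i] t = π^[j] t' → t = t') ∧
    (∀ w ∈ OKs D T π, Even {t | t ∈ T ∧ π^[k0 t] t = w}.ncard) ∧
    (∀ v, v ∉ OKs D T π → v ∉ D → ∃ w, w ∉ OKs D T π ∧ w ≠ v ∧ Desc π w v ∧
      {t | t ∈ T ∧ π^[k0 t] t = w}.Nonempty) := by
  classical
  have hcl := fun {u v} => OKs_closed (D := D) (T := T) (u := u) (v := v) h1 hD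
  have htop : ∀ x, ∃ y, x ∈ OKs D T π → y ∈ OKs D T π ∧ Desc π x y ∧ π y ∉ OKs D T π := by
    intro x
    by_cases hx : x ∈ OKs D T π
    · obtain ⟨y, a, b, c⟩ := exists_top h0 h1 hD hx
      exact ⟨y, fun _ => ⟨a, b, c⟩⟩
    · exact ⟨x, fun h => absurd h hx⟩
  choose top htop using htop
  have hkk : ∀ y, ∃ k, y ∈ OKs D T π → Sol T π y k := by
    intro x
    by_cases hx : x ∈ OKs D T π
    · obtain ⟨_, y, a⟩ := id hx
      exact ⟨y, fun _ => a⟩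
    · exact ⟨fun _ => 0, fun h => absurd h hx⟩
  choose kk hkk using hkk
  have topeq : ∀ x z, z ∈ OKs D T π → Desc π x z → top x = top z := by
    intro x z hz hxz
    have hx := hcl hz hxz
    have a := htop x hx
    have b := htop z hz
    exact top_unique h1 hD a.1 b.1 a.2.1 (hxz.trans b.2.1) a.2.2 b.2.2
  obtain ⟨k0, hk0, hk0'⟩ : ∃ k0 : V → ℕ, (∀ t ∈ OKs D T π, k0 t = kk (top t) t) ∧
      ∀ t, t ∉ OKs D T π → k0 t = 0 :=
    ⟨fun t => if t ∈ OKs D T π then kk (top t) t else 0, fun t ht => if_pos ht,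
      fun t ht => if_neg ht⟩
  have memO : ∀ t, ∀ i < k0 t, t ∈ OKs D T π := by
    intro t i hi
    by_contra hc
    rw [hk0' t hc] at hi
    omega
  have hA : ∀ t ∈ T, ∀ i < k0 t, π^[i] t ∈ OKs D T π := by
    intro t ht i hi
    have hO := memO t i hi
    rw [hk0 t hO] at hi
    have a := htop t hO
    exact hcl a.1 ((hkk _ a.1).1 t ht a.2.1 i hi)
  have hB : ∀ t ∈ T, ∀ t' ∈ T, ∀ i < k0 t, ∀ j < k0 t', π^[i] t = π^[j] t' → t = t' := by
    intro t ht t' ht' i hi j hj e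
    have hO := memO t i hi
    have hO' := memO t' j hj
    have e1 := topeq t _ (hA t ht i hi) (Desc.iter π t i)
    have e2 := topeq t' _ (hA t' ht' j hj) (Desc.iter π t' j)
    have e3 : top t' = top t := by rw [e1, e2, e]
    rw [hk0 t hO] at hi
    rw [hk0 t' hO', e3] at hj
    have a := htop t hO
    have a' := htop t' hO'
    exact (hkk _ a.1).2.1 t ht t' ht' a.2.1 (e3 ▸ a'.2.1) i hi j hj e
  have hC : ∀ w ∈ OKs D T π, Even {t | t ∈ T ∧ π^[k0 t] t = w}.ncard := by
    intro w hw
    have a := htop w hw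
    rw [show {t | t ∈ T ∧ π^[k0 t] t = w} = {t | t ∈ T ∧ π^[kk (top w) t] t = w} from ?_]
    · exact (hkk _ a.1).2.2 w a.2.1
    · ext t
      simp only [Set.mem_ofPred_eq]
      refine and_congr_right fun ht => ⟨fun e => ?_, fun e => ?_⟩
      · have d : Desc π t w := ⟨_, e⟩
        have hO := hcl hw d
        rwa [hk0 t hO, topeq t w hw d] at e
      · have d : Desc π t w := ⟨_, e⟩
        have hO := hcl hw d
        rwa [hk0 t hO, topeq t w hw d]
  refine ⟨k0, hA, hB, hC, ?_⟩
  intro v hvO hvD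
  by_contra hcon
  push Not at hcon
  apply hvO
  refine ⟨hvD, ?_⟩
  have hdesc : ∀ t ∈ T, Desc π t v → ∀ i ≤ k0 t, Desc π (π^[i] t) v := by
    rintro t ht ⟨n, hn⟩ i hi
    have : i ≤ n := by
      by_contra hlt
      have := hA t ht n (by omega)
      rw [hn] at this
      exact hvO this
    exact ⟨n - i, by rw [← Function.iterate_add_apply, Nat.sub_add_cancel this, hn]⟩
  by_cases hev : Even {t | t ∈ T ∧ π^[k0 t] t = v}.ncard
  · refine ⟨k0, fun t ht a i hi => hdesc t ht a i hi.le,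
      fun t ht t' ht' _ _ => hB t ht t' ht', fun w hw => ?_⟩
    by_cases hwO : w ∈ OKs D T π
    · exact hC w hwO
    by_cases hwv : w = v
    · rwa [hwv]
    · rw [hcon w hwO hwv hw]; simp
  · rw [Nat.not_even_iff_odd] at hev
    have hne : {t | t ∈ T ∧ π^[k0 t] t = v}.Nonempty := by
      by_contra hc
      rw [Set.not_nonempty_iff_eq_empty] at hc
      rw [hc] at hev
      simp at hev
    obtain ⟨t0, ht0, ht0v⟩ := hne
    have hk1 : Function.update k0 t0 (k0 t0 + 1) t0 = k0 t0 + 1 := by simp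
    have hk2 : ∀ t, t ≠ t0 → Function.update k0 t0 (k0 t0 + 1) t = k0 t := by
      intro t ht; simp [ht]
    generalize Function.update k0 t0 (k0 t0 + 1) = k at hk1 hk2
    have hcase : ∀ t i, i < k t → i < k0 t ∨ (t = t0 ∧ i = k0 t0) := by
      intro t i hi
      by_cases e : t = t0
      · subst e
        rw [hk1] at hi
        rcases Nat.lt_succ_iff_lt_or_eq.1 hi with h | h
        · exact Or.inl h
        · exact Or.inr ⟨rfl, h⟩
      · rw [hk2 t e] at hi; exact Or.inl hi
    refine ⟨k, ?_, ?_, ?_⟩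
    · intro t ht a i hi
      apply hdesc t ht a
      rcases hcase t i hi with h | ⟨rfl, h⟩ <;> omega
    · intro t ht t' ht' _ _ i hi j hj e
      rcases hcase t i hi with h | ⟨rfl, rfl⟩ <;> rcases hcase t' j hj with h' | ⟨rfl, rfl⟩
      · exact hB t ht t' ht' i h j h' e
      · rw [ht0v] at e
        exact absurd (e ▸ hA t ht i h) hvO
      · rw [ht0v] at e
        exact absurd (e ▸ hA t' ht' j h') hvO
      · rfl
    · intro w hw
      have hpv : π^[k t0] t0 = π v := by
        rw [hk1, Function.iterate_succ_apply', ht0v]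
      have hwne : π v ≠ w := by
        obtain ⟨n, hn⟩ := hw
        rintro rfl
        have := height_iter h1 hD hvD (n + 1) v hn
        omega
      by_cases hwv : w = v
      · subst hwv
        rw [show {t | t ∈ T ∧ π^[k t] t = w} = {t | t ∈ T ∧ π^[k0 t] t = w} \ {t0} from ?_]
        · rw [Set.ncard_sdiff_singleton_of_mem (show t0 ∈ {t | t ∈ T ∧ π^[k0 t] t = w} from ⟨ht0, ht0v⟩)]
          exact Nat.Odd.sub_odd hev odd_one
        · ext t
          simp only [Set.mem_ofPred_eq, Set.mem_sdiff, Set.mem_singleton_iff]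
          by_cases e : t = t0
          · subst e; rw [hpv]; tauto
          · rw [hk2 t e]; tauto
      · rw [show {t | t ∈ T ∧ π^[k t] t = w} = {t | t ∈ T ∧ π^[k0 t] t = w} from ?_]
        · by_cases hwO : w ∈ OKs D T π
          · exact hC w hwO
          · rw [hcon w hwO hwv hw]; simp
        · ext t
          simp only [Set.mem_ofPred_eq]
          by_cases e : t = t0
          · subst e; rw [hpv, ht0v]; tauto
          · rw [hk2 t e]

theorem absorb (h0 : ∀ v, h v = 0 ↔ v ∈ D) (h1 : ∀ v, v ∉ D → h (π v) + 1 = h v) (hD : ∀ d ∈ D, π d = d)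
    : ∃ k : V → ℕ,
    (∀ t ∈ T, ∀ i < k t, π^[i] t ∉ D) ∧
    (∀ t ∈ T, ∀ t' ∈ T, ∀ i < k t, ∀ j < k t', π^[i] t = π^[j] t' → t = t') ∧
    (∀ w, w ∉ D → Even {t | t ∈ T ∧ π^[k t] t = w}.ncard) := by
  classical
  obtain ⟨k0, hA, hB, hC, hE⟩ := glue (T := T) h0 h1 hD
  have hcl := fun {u v} => OKs_closed (D := D) (T := T) (u := u) (v := v) h1 hD
  have hOD : ∀ v ∈ OKs D T π, v ∉ D := fun v hv => hv.1
  generalize OKs D T π = O at *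
  set p : V → Set V := fun w => {t | t ∈ T ∧ π^[k0 t] t = w} with hp
  set Q : Set V := {w | w ∉ O ∧ w ∉ D ∧ (p w).Nonempty} with hQ
  have hc : ∀ w, ∃ c, w ∈ Q → c ∈ Q ∧ ∃ n, 0 < n ∧ π^[n] c = w ∧
      ∀ i, 0 < i → i < n → π^[i] c ∉ Q := by
    intro w
    by_cases hw : w ∈ Q
    swap
    · exact ⟨w, fun h => absurd h hw⟩
    have hex : ∃ n, 0 < n ∧ ∃ c ∈ Q, π^[n] c = w := by
      obtain ⟨x, hxO, hxw, ⟨n, hn⟩, hne⟩ := hE w hw.1 hw.2.1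
      refine ⟨n, Nat.pos_of_ne_zero ?_, x, ⟨hxO, notMem_of_iter hD hw.2.1 n hn, hne⟩, hn⟩
      rintro rfl
      exact hxw hn
    obtain ⟨hn, c, hc, hcw⟩ := Nat.find_spec hex
    refine ⟨c, fun _ => ⟨hc, _, hn, hcw, fun i hi hin hiQ => ?_⟩⟩
    refine Nat.find_min hex (m := Nat.find hex - i) (by omega) ⟨by omega, _, hiQ, ?_⟩
    rw [← Function.iterate_add_apply, Nat.sub_add_cancel hin.le, hcw]
  choose c hcc using hc
  have hcQ : ∀ w ∈ Q, c w ∈ Q := fun w hw => (hcc w hw).1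
  have hnn : ∀ w, ∃ n, w ∈ Q → 0 < n ∧ π^[n] (c w) = w ∧ ∀ i, 0 < i → i < n → π^[i] (c w) ∉ Q := by
    intro w
    by_cases hw : w ∈ Q
    · obtain ⟨_, n, hn⟩ := hcc w hw
      exact ⟨n, fun _ => hn⟩
    · exact ⟨0, fun h => absurd h hw⟩
  choose n hn using hnn
  have ha : ∀ w, ∃ a, w ∈ Q → a ∈ p w := by
    intro w
    by_cases hw : w ∈ Q
    · obtain ⟨a, h⟩ := hw.2.2
      exact ⟨a, fun _ => h⟩
    · exact ⟨w, fun h => absurd h hw⟩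
  choose a ha using ha
  -- segments
  have seg1 : ∀ w ∈ Q, ∀ i < n w, π^[i] (c w) ∉ O ∧ π^[i] (c w) ∉ D := by
    intro w hw i hi
    refine ⟨fun hO => (hcQ w hw).1 (hcl hO (Desc.iter π _ _)), ?_⟩
    refine notMem_of_iter hD hw.2.1 (n w - i) ?_
    rw [← Function.iterate_add_apply, Nat.sub_add_cancel hi.le, (hn w hw).2.1]
  have seg2 : ∀ w ∈ Q, ∀ w' ∈ Q, ∀ i < n w, ∀ j < n w', π^[i] (c w) = π^[j] (c w') → w = w' := by
    have key : ∀ w ∈ Q, ∀ w' ∈ Q, ∀ i < n w, ∀ j < n w', π^[i] (c w) = π^[j] (c w') →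
        ¬ (n w - i < n w' - j) := by
      intro w hw w' hw' i hi j hj e hlt
      refine (hn w' hw').2.2 (n w - i + j) (by omega) (by omega) ?_
      rw [Function.iterate_add_apply, ← e, ← Function.iterate_add_apply, Nat.sub_add_cancel hi.le,
        (hn w hw).2.1]
      exact hw
    intro w hw w' hw' i hi j hj e
    have k1 := key w hw w' hw' i hi j hj e
    have k2 := key w' hw' w hw j hj i hi e.symm
    have k3 : n w - i = n w' - j := by omega
    rw [← (hn w hw).2.1, ← (hn w' hw').2.1, ← Nat.sub_add_cancel hi.le, ← Nat.sub_add_cancel hj.le,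
      Function.iterate_add_apply, Function.iterate_add_apply, e, k3]
  have cinj : ∀ w ∈ Q, ∀ w' ∈ Q, c w = c w' → w = w' := fun w hw w' hw' e =>
    seg2 w hw w' hw' 0 (hn w hw).1 0 (hn w' hw').1 e
  obtain ⟨m, hm⟩ := exists_rec h (fun w w' => w ∈ Q ∧ c w = w') (by
    rintro w w' ⟨hw, rfl⟩
    have := height_iter h1 hD hw.2.1 _ _ (hn w hw).2.1
    have := (hn w hw).1
    omega) (fun w mw => Odd (p w \ {t | mw ∧ t = a w}).ncard)
  set B : V → Set V := fun w => p w \ {t | m w ∧ t = a w} with hBdef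
  have hm' : ∀ w', m w' ↔ ∃ w, (w ∈ Q ∧ c w = w') ∧ Odd (B w).ncard := hm
  -- movers
  have hk : ∀ t, ∃ k, (∀ w ∈ Q, t = a (c w) → Odd (B w).ncard → k = k0 t + n w) ∧
      ((¬ ∃ w ∈ Q, t = a (c w) ∧ Odd (B w).ncard) → k = k0 t) := by
    intro t
    by_cases hmv : ∃ w ∈ Q, t = a (c w) ∧ Odd (B w).ncard
    · obtain ⟨w, hw, e, ho⟩ := id hmv
      refine ⟨k0 t + n w, ?_, fun hh => absurd hmv hh⟩
      intro w' hw' e' ho'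
      have h1 := ha _ (hcQ w hw)
      have h2 := ha _ (hcQ w' hw')
      rw [← e] at h1
      rw [← e'] at h2
      rw [cinj w hw w' hw' (h1.2.symm.trans h2.2)]
    · exact ⟨k0 t, fun w hw e ho => absurd ⟨w, hw, e, ho⟩ hmv, fun _ => rfl⟩
  choose k hk1 hk2 using hk
  have hend : ∀ t, ∀ w ∈ Q, t = a (c w) → Odd (B w).ncard → π^[k t] t = w := by
    intro t w hw e ho
    have h1 := ha _ (hcQ w hw)
    rw [← e] at h1
    rw [hk1 t w hw e ho, add_comm, Function.iterate_add_apply, h1.2, (hn w hw).2.1]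
  have hcase : ∀ t ∈ T, ∀ i < k t, i < k0 t ∨ ∃ w ∈ Q, t = a (c w) ∧ ∃ j < n w,
      π^[i] t = π^[j] (c w) := by
    intro t ht i hi
    by_cases hmv : ∃ w ∈ Q, t = a (c w) ∧ Odd (B w).ncard
    · obtain ⟨w, hw, e, ho⟩ := id hmv
      rw [hk1 t w hw e ho] at hi
      have h1 := ha _ (hcQ w hw)
      rw [← e] at h1
      rcases lt_or_ge i (k0 t) with h | h
      · exact Or.inl h
      · refine Or.inr ⟨w, hw, e, i - k0 t, by omega, ?_⟩
        rw [← h1.2, ← Function.iterate_add_apply, Nat.sub_add_cancel h]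
    · rw [hk2 t hmv] at hi
      exact Or.inl hi
  refine ⟨k, ?_, ?_, ?_⟩
  · intro t ht i hi
    rcases hcase t ht i hi with h | ⟨w, hw, e, j, hj, h⟩
    · exact hOD _ (hA t ht i h)
    · rw [h]; exact (seg1 w hw j hj).2
  · intro t ht t' ht' i hi j hj e
    rcases hcase t ht i hi with h | ⟨w, hw, ew, i', hi', h⟩ <;>
    rcases hcase t' ht' j hj with h' | ⟨w', hw', ew', j', hj', h'⟩
    · exact hB t ht t' ht' i h j h' e
    · exact absurd (hA t ht i h) (by rw [e, h']; exact (seg1 w' hw' j' hj').1)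
    · exact absurd (hA t' ht' j h') (by rw [← e, h]; exact (seg1 w hw i' hi').1)
    · have := seg2 w hw w' hw' i' hi' j' hj' (by rw [← h, ← h', e])
      rw [ew, ew', this]
  · intro w hwD
    by_cases hwQ : w ∈ Q
    · have hset : {t | t ∈ T ∧ π^[k t] t = w} = B w ∪ {t | t = a (c w) ∧ Odd (B w).ncard} := by
        ext t
        simp only [Set.mem_ofPred_eq, Set.mem_union, hBdef, Set.mem_sdiff, hp]
        constructor
        · rintro ⟨ht, e⟩
          by_cases hmv : ∃ w ∈ Q, t = a (c w) ∧ Odd (B w).ncard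
          · obtain ⟨w', hw', e', ho⟩ := hmv
            have := hend t w' hw' e' ho
            rw [e] at this
            subst this
            exact Or.inr ⟨e', ho⟩
          · rw [hk2 t hmv] at e
            refine Or.inl ⟨⟨ht, e⟩, ?_⟩
            rintro ⟨hmw, ea⟩
            obtain ⟨w', ⟨hw', rfl⟩, ho⟩ := (hm' w).1 hmw
            exact hmv ⟨w', hw', ea, ho⟩
        · rintro (⟨⟨ht, e⟩, hnot⟩ | ⟨e, ho⟩)
          · refine ⟨ht, ?_⟩
            rw [hk2 t, e]
            rintro ⟨w', hw', e', ho⟩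
            have h1 := ha _ (hcQ w' hw')
            rw [← e'] at h1
            have h2 : c w' = w := h1.2.symm.trans e
            exact hnot ⟨(hm' w).2 ⟨w', ⟨hw', h2⟩, ho⟩, by rw [e', h2]⟩
          · have h1 := ha _ (hcQ w hwQ)
            rw [← e] at h1
            exact ⟨h1.1, hend t w hwQ e ho⟩
      rw [hset]
      by_cases ho : Odd (B w).ncard
      · have hfin : (B w).Finite := Set.finite_of_ncard_pos ho.pos
        have hnot : a (c w) ∉ B w := by
          intro hmem
          have h2 := (ha _ (hcQ w hwQ)).2
          have h2' := hmem.1.2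
          have h3 : c w = w := h2.symm.trans h2'
          have := height_iter h1 hD hwQ.2.1 _ _ (hn w hwQ).2.1
          have := (hn w hwQ).1
          have h4 : h (c w) = h w := by rw [h3]
          omega
        have : B w ∪ {t | t = a (c w) ∧ Odd (B w).ncard} = insert (a (c w)) (B w) := by
          ext t; simp [ho]
        rw [this, Set.ncard_insert_of_notMem hnot hfin]
        exact ho.add_one
      · have : B w ∪ {t | t = a (c w) ∧ Odd (B w).ncard} = B w := by
          ext t; simp [ho]
        rw [this]
        exact Nat.not_odd_iff_even.1 ho
    · have hset : {t | t ∈ T ∧ π^[k t] t = w} = p w := by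
        ext t
        simp only [Set.mem_ofPred_eq, hp]
        refine and_congr_right fun ht => ?_
        by_cases hmv : ∃ w ∈ Q, t = a (c w) ∧ Odd (B w).ncard
        · obtain ⟨w', hw', e', ho⟩ := hmv
          have h2 := hend t w' hw' e' ho
          have h1 := ha _ (hcQ w' hw')
          rw [← e'] at h1
          constructor
          · intro e
            exact absurd (e ▸ h2 ▸ hw') hwQ
          · intro e
            exact absurd ((h1.2.symm.trans e) ▸ hcQ w' hw') hwQ
        · rw [hk2 t hmv]
      rw [hset]
      by_cases hwO : w ∈ O
      · exact hC w hwO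
      · have : p w = ∅ := by
          by_contra hne
          exact hwQ ⟨hwO, hwD, Set.nonempty_iff_ne_empty.2 hne⟩
        rw [this]; simp
end Absorb
end TJ

namespace TJ
open SimpleGraph

section Trail
variable {V : Type*}

theorem mem_support_of_edge {H : SimpleGraph V} {a b : V} (p : H.Walk a b) {e : Sym2 V}
    (he : e ∈ p.edges) {x : V} (hx : x ∈ e) : x ∈ p.support := by
  induction e with
  | h c d =>
    rcases Sym2.mem_iff.1 hx with rfl | rfl
    · exact p.fst_mem_support_of_mem_edges he
    · exact p.snd_mem_support_of_mem_edges he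

/-- two vertices not separated by any single edge -/
def E2 (H : SimpleGraph V) (u v : V) : Prop := ∀ e : Sym2 V, (H.deleteEdges {e}).Reachable u v

theorem E2.symm {H : SimpleGraph V} {u v : V} (a : E2 H u v) : E2 H v u := fun e => (a e).symm
theorem E2.trans {H : SimpleGraph V} {u v w : V} (a : E2 H u v) (b : E2 H v w) : E2 H u w :=
  fun e => (a e).trans (b e)
theorem E2.refl (H : SimpleGraph V) (u : V) : E2 H u u := fun _ => Reachable.refl _
theorem E2.reach {H : SimpleGraph V} {u v : V} (a : E2 H u v) : H.Reachable u v :=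
  (a s(u, u)).mono (deleteEdges_le _)
theorem E2.mono {H H' : SimpleGraph V} (hle : H ≤ H') {u v : V} (a : E2 H u v) : E2 H' u v :=
  fun e => (a e).mono (deleteEdges_mono hle)

theorem hit {H : SimpleGraph V} (S : Set V) {a b : V} (p : H.Walk a b) (hb : b ∈ S) :
    ∃ z ∈ S, ∃ q : H.Walk a z, q.IsPath ∧ q.edges ⊆ p.edges ∧ z ∈ p.support ∧
      ∀ e ∈ q.edges, ∃ x ∈ e, x ∉ S := by
  classical
  suffices ∃ z ∈ S, ∃ q : H.Walk a z, q.edges ⊆ p.edges ∧ z ∈ p.support ∧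
      ∀ e ∈ q.edges, ∃ x ∈ e, x ∉ S by
    obtain ⟨z, hz, q, h1, h2, h3⟩ := this
    exact ⟨z, hz, q.bypass, q.bypass_isPath, fun e he => h1 (q.edges_bypass_subset_edges he), h2,
      fun e he => h3 e (q.edges_bypass_subset_edges he)⟩
  induction p with
  | nil => exact ⟨_, hb, .nil, by simp, by simp, by simp⟩
  | @cons u v w h p ih =>
    by_cases hu : u ∈ S
    · exact ⟨u, hu, .nil, by simp, by simp, by simp⟩
    · obtain ⟨z, hz, q, h1, h2, h3⟩ := ih hb
      refine ⟨z, hz, .cons h q, ?_, by simp [h2], ?_⟩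
      · intro e he
        simp only [Walk.edges_cons, List.mem_cons] at he ⊢
        exact he.imp id (fun h => h1 h)
      · intro e he
        simp only [Walk.edges_cons, List.mem_cons] at he
        rcases he with rfl | he
        · exact ⟨u, by simp, hu⟩
        · exact h3 e he

theorem reach_del {H : SimpleGraph V} (F : Set (Sym2 V)) {a b : V} (p : H.Walk a b)
    (hp : ∀ e ∈ p.edges, e ∉ F) : (H.deleteEdges F).Reachable a b :=
  ⟨p.toDeleteEdges F hp⟩

theorem E2_of_path {H : SimpleGraph V} {v t x : V} (hvt : E2 H v t) (p : H.Walk v t)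
    (hp : p.IsPath) (hx : x ∈ p.support) : E2 H v x := by
  classical
  intro e
  by_cases he : e ∈ (p.takeUntil x hx).edges
  · have hd := hp.isTrail.disjoint_edges_takeUntil_dropUntil hx
    have : (H.deleteEdges {e}).Reachable x t := by
      refine reach_del _ (p.dropUntil x hx) ?_
      rintro f hf rfl
      exact hd he hf
    exact (hvt e).trans this.symm
  · refine reach_del _ (p.takeUntil x hx) ?_
    rintro f hf rfl
    exact he hf

/-- two edge-disjoint paths -/
def TwoPaths (H : SimpleGraph V) (v t : V) : Prop :=
  ∃ p q : H.Walk v t, p.IsPath ∧ q.IsPath ∧ ∀ e ∈ p.edges, e ∉ q.edges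

theorem TwoPaths.of_walks {H : SimpleGraph V} {v t : V} (p q : H.Walk v t)
    (hpq : ∀ e ∈ p.edges, e ∉ q.edges) : TwoPaths H v t := by
  classical
  exact ⟨p.bypass, q.bypass, p.bypass_isPath, q.bypass_isPath, fun e he he' =>
    hpq e (p.edges_bypass_subset_edges he) (q.edges_bypass_subset_edges he')⟩

theorem step_aux1 {H : SimpleGraph V} {v u w : V} (hadj : H.Adj u w) (p q : H.Walk v u)
    (hp : p.IsPath) (hpq : ∀ e ∈ p.edges, e ∉ q.edges) (he : s(u, w) ∈ p.edges) :
    TwoPaths H v w := by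
  classical
  have hw : w ∈ p.support := p.snd_mem_support_of_mem_edges he
  have hu : u ∉ (p.takeUntil w hw).support :=
    Walk.endpoint_notMem_support_takeUntil hp hw hadj.ne
  refine TwoPaths.of_walks (p.takeUntil w hw) (q.concat hadj) ?_
  intro f hf hf'
  rw [Walk.edges_concat] at hf'
  simp only [List.concat_eq_append, List.mem_append, List.mem_singleton] at hf'
  rcases hf' with hf' | rfl
  · exact hpq f (p.edges_takeUntil_subset_edges hw hf) hf'
  · exact hu (Walk.fst_mem_support_of_mem_edges _ hf)

theorem step_aux2 {H : SimpleGraph V} {v u w z : V} (hadj : H.Adj u w) (p q : H.Walk v u)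
    (hpq : ∀ e ∈ p.edges, e ∉ q.edges) (he : s(u, w) ∉ p.edges) (he' : s(u, w) ∉ q.edges)
    (r : H.Walk w z) (hr : s(u, w) ∉ r.edges) (hrq : ∀ e ∈ r.edges, e ∉ q.edges)
    (hz : z ∈ p.support) : TwoPaths H v w := by
  classical
  refine TwoPaths.of_walks ((p.takeUntil z hz).append r.reverse) (q.concat hadj) ?_
  intro f hf hf'
  rw [Walk.edges_concat] at hf'
  simp only [List.concat_eq_append, List.mem_append, List.mem_singleton] at hf'
  rw [Walk.edges_append, List.mem_append, Walk.edges_reverse, List.mem_reverse] at hf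
  rcases hf with hf | hf
  · have hf := p.edges_takeUntil_subset_edges hz hf
    rcases hf' with hf' | rfl
    · exact hpq f hf hf'
    · exact he hf
  · rcases hf' with hf' | rfl
    · exact hrq f hf hf'
    · exact hr hf

theorem TwoPaths.step {H : SimpleGraph V} {v u w : V} (h : TwoPaths H v u) (hadj : H.Adj u w)
    (hvw : E2 H v w) : TwoPaths H v w := by
  obtain ⟨p, q, hp, hq, hpq⟩ := h
  have hqp : ∀ e ∈ q.edges, e ∉ p.edges := fun e h1 h2 => hpq e h2 h1
  by_cases he : s(u, w) ∈ p.edges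
  · exact step_aux1 hadj p q hp hpq he
  by_cases he' : s(u, w) ∈ q.edges
  · exact step_aux1 hadj q p hq hqp he'
  obtain ⟨R⟩ := (hvw s(u, w)).symm
  obtain ⟨z, hz, r, -, hr1, -, hr2⟩ := hit {x | x ∈ p.support ∨ x ∈ q.support}
    (R.mapLe (deleteEdges_le _)) (Or.inl p.start_mem_support)
  have hr3 : s(u, w) ∉ r.edges := by
    intro h
    have h2 := hr1 h
    rw [Walk.edges_mapLe_eq_edges] at h2
    have := R.adj_of_mem_edges h2
    simp at this
  have hrp : ∀ e ∈ r.edges, e ∉ p.edges := by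
    intro e he hep
    obtain ⟨x, hx, hxS⟩ := hr2 e he
    exact hxS (Or.inl (mem_support_of_edge p hep hx))
  have hrq : ∀ e ∈ r.edges, e ∉ q.edges := by
    intro e he hep
    obtain ⟨x, hx, hxS⟩ := hr2 e he
    exact hxS (Or.inr (mem_support_of_edge q hep hx))
  rcases hz with hz | hz
  · exact step_aux2 hadj p q hpq he he' r hr3 hrq hz
  · exact step_aux2 hadj q p hqp he' he r hr3 hrp hz

theorem E2.twoPaths {H : SimpleGraph V} {v t : V} (hvt : E2 H v t) : TwoPaths H v t := by
  classical
  obtain ⟨p0⟩ := hvt.reach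
  have hp := p0.bypass_isPath
  generalize p0.bypass = p at hp
  have key : ∀ i ≤ p.length, TwoPaths H v (p.getVert i) := by
    intro i
    induction i with
    | zero => intro _; rw [Walk.getVert_zero]; exact TwoPaths.of_walks .nil .nil (by simp)
    | succ i ih =>
      intro hi
      exact (ih (by omega)).step (p.adj_getVert_succ (by omega))
        (E2_of_path hvt p hp (p.getVert_mem_support _))
  simpa using key p.length le_rfl

theorem reach_or {H : SimpleGraph V} {x y u w : V} (p : H.Walk u w) :
    (H.deleteEdges {s(x, y)}).Reachable u w ∨
      ∃ z, (z = x ∨ z = y) ∧ (H.deleteEdges {s(x, y)}).Reachable u z := by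
  classical
  by_cases he : s(x, y) ∈ p.edges
  · right
    have hx := p.fst_mem_support_of_mem_edges he
    obtain ⟨z, hz, q, -, -, -, hq⟩ := hit {z | z = x ∨ z = y} (p.takeUntil x hx) (Or.inl rfl)
    refine ⟨z, hz, reach_del _ q ?_⟩
    rintro f hf rfl
    obtain ⟨a, ha, ha'⟩ := hq _ hf
    exact ha' (Sym2.mem_iff.1 ha)
  · left
    refine reach_del _ p ?_
    rintro f hf rfl
    exact he hf

theorem split_one {H : SimpleGraph V} (e : Sym2 V) (S : Set V) (hS : S.Infinite)
    (h : ∀ u ∈ S, ∀ w ∈ S, E2 H u w) :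
    ∃ S' ⊆ S, S'.Infinite ∧ ∀ u ∈ S', ∀ w ∈ S', E2 (H.deleteEdges {e}) u w := by
  classical
  induction e with
  | h x y =>
  have comm : ∀ f, (H.deleteEdges {s(x, y)}).deleteEdges {f} =
      (H.deleteEdges {f}).deleteEdges {s(x, y)} := by
    intro f
    rw [deleteEdges_deleteEdges, deleteEdges_deleteEdges, Set.union_comm]
  have key : ∀ u ∈ S, ∀ w ∈ S, ∀ f,
      ((H.deleteEdges {s(x, y)}).deleteEdges {f}).Reachable u w ∨
      ∃ a b, (a = x ∨ a = y) ∧ (b = x ∨ b = y) ∧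
        ((H.deleteEdges {s(x, y)}).deleteEdges {f}).Reachable u a ∧
        ((H.deleteEdges {s(x, y)}).deleteEdges {f}).Reachable w b := by
    intro u hu w hw f
    rw [comm]
    obtain ⟨p⟩ := h u hu w hw f
    rcases reach_or (x := x) (y := y) p with h1 | ⟨a, ha, h1⟩
    · exact Or.inl h1
    rcases reach_or (x := x) (y := y) p.reverse with h2 | ⟨b, hb, h2⟩
    · exact Or.inl h2.symm
    exact Or.inr ⟨a, b, ha, hb, h1, h2⟩
  by_cases hR : (H.deleteEdges {s(x, y)}).Reachable x y
  · obtain ⟨R⟩ := hR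
    let col : V → Set (Sym2 V) := fun u =>
      {f | f ∈ R.edges ∧ ((H.deleteEdges {s(x, y)}).deleteEdges {f}).Reachable u x}
    have hfin : (col '' S).Finite := by
      refine Set.Finite.subset (Set.Finite.finite_subsets (List.finite_toSet R.edges)) ?_
      rintro _ ⟨u, -, rfl⟩
      exact fun f hf => hf.1
    obtain ⟨A, hA⟩ : ∃ A, (S ∩ col ⁻¹' {A}).Infinite := by
      by_contra hcon
      push Not at hcon
      exact hS (Set.Finite.of_finite_fibers col hfin (fun A _ => hcon A))
    refine ⟨_, Set.inter_subset_left, hA, ?_⟩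
    rintro u ⟨hu, hcu⟩ w ⟨hw, hcw⟩ f
    have hcol : col u = col w := by
      rw [Set.mem_preimage, Set.mem_singleton_iff] at hcu hcw
      rw [hcu, hcw]
    rcases key u hu w hw f with h1 | ⟨a, b, ha, hb, h1, h2⟩
    · exact h1
    by_cases hf : f ∈ R.edges
    · have hiff : ((H.deleteEdges {s(x, y)}).deleteEdges {f}).Reachable u x ↔
          ((H.deleteEdges {s(x, y)}).deleteEdges {f}).Reachable w x := by
        have h3 : f ∈ col u ↔ f ∈ col w := by rw [hcol]
        exact ⟨fun h => (h3.1 ⟨hf, h⟩).2, fun h => (h3.2 ⟨hf, h⟩).2⟩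
      rcases ha with rfl | rfl
      · exact h1.trans (hiff.1 h1).symm
      · rcases hb with rfl | rfl
        · exact (hiff.2 h2).trans h2.symm
        · exact h1.trans h2.symm
    · have hxy : ((H.deleteEdges {s(x, y)}).deleteEdges {f}).Reachable x y := by
        refine reach_del _ R ?_
        rintro g hg rfl
        exact hf hg
      rcases ha with rfl | rfl <;> rcases hb with rfl | rfl
      · exact h1.trans h2.symm
      · exact h1.trans (hxy.trans h2.symm)
      · exact h1.trans (hxy.symm.trans h2.symm)
      · exact h1.trans h2.symm
  · refine ⟨S, subset_rfl, hS, ?_⟩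
    intro u hu w hw f
    rcases key u hu w hw f with h1 | ⟨a, b, ha, hb, h1, h2⟩
    · exact h1
    have huw := h u hu w hw s(x, y)
    have h1' := h1.mono (deleteEdges_le _)
    have h2' := h2.mono (deleteEdges_le _)
    have h3 := h1'.symm.trans (huw.trans h2')
    rcases ha with rfl | rfl <;> rcases hb with rfl | rfl
    · exact h1.trans h2.symm
    · exact absurd h3 hR
    · exact absurd h3.symm hR
    · exact h1.trans h2.symm

theorem split (l : List (Sym2 V)) : ∀ {H : SimpleGraph V} (S : Set V), S.Infinite →
    (∀ u ∈ S, ∀ w ∈ S, E2 H u w) →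
    ∃ S' ⊆ S, S'.Infinite ∧ ∀ u ∈ S', ∀ w ∈ S', E2 (H.deleteEdges {e | e ∈ l}) u w := by
  induction l with
  | nil => intro H S hS h; exact ⟨S, subset_rfl, hS, by simpa using h⟩
  | cons e l ih =>
    intro H S hS h
    obtain ⟨S1, hS1, hi1, h1⟩ := split_one e S hS h
    obtain ⟨S2, hS2, hi2, h2⟩ := ih S1 hi1 h1
    refine ⟨S2, hS2.trans hS1, hi2, ?_⟩
    rw [deleteEdges_deleteEdges] at h2
    have : ({e} ∪ {f | f ∈ l} : Set (Sym2 V)) = {f | f ∈ e :: l} := by ext f; simp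
    rwa [this] at h2

theorem step_core {H : SimpleGraph V} {v t s z : V} (S : Set V) (P1 P2 : H.Walk v t)
    (hP1 : P1.IsPath) (hP2 : P2.IsPath) (hd : ∀ e ∈ P1.edges, e ∉ P2.edges)
    (F : Set (Sym2 V)) (hF : ∀ e, e ∈ F ↔ e ∈ P1.edges ∨ e ∈ P2.edges)
    (hs : ∀ x ∈ S, E2 (H.deleteEdges F) s x)
    (hz : z ∈ P1.support) (W : (H.deleteEdges F).Walk z s) :
    ∃ v', ∃ Q : H.Walk v v', Q.IsTrail ∧ t ∈ Q.support ∧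
      ∀ x ∈ S, E2 (H.deleteEdges {e | e ∈ Q.edges}) v' x := by
  classical
  obtain ⟨v', hv', W', hW'p, -, -, hW'⟩ := hit {x | E2 (H.deleteEdges F) s x} W (E2.refl _ _)
  have hz' : z ∈ P1.reverse.support := by simpa using hz
  refine ⟨v', (P2.append (P1.reverse.takeUntil z hz')).append (W'.mapLe (deleteEdges_le _)), ?_,
    ?_, ?_⟩
  · have hsub : ∀ e ∈ (P1.reverse.takeUntil z hz').edges, e ∈ P1.edges := by
      intro e he
      have := P1.reverse.edges_takeUntil_subset_edges hz' he
      simpa using this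
    rw [Walk.isTrail_append, Walk.isTrail_append]
    refine ⟨⟨hP2.isTrail, (((Walk.reverse_isTrail_iff _).2 hP1.isTrail).takeUntil hz'), ?_⟩, ?_, ?_⟩
    · intro e he he'
      exact hd e (hsub e he') he
    · rw [Walk.isTrail_def, Walk.edges_mapLe_eq_edges]
      exact hW'p.isTrail.edges_nodup
    · intro e he he'
      rw [Walk.edges_mapLe_eq_edges] at he'
      have h1 := W'.edges_subset_edgeSet he'
      rw [edgeSet_deleteEdges] at h1
      refine h1.2 ((hF e).2 ?_)
      rw [Walk.edges_append, List.mem_append] at he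
      rcases he with he | he
      · exact Or.inr he
      · exact Or.inl (hsub e he)
  · rw [Walk.mem_support_append_iff, Walk.mem_support_append_iff]
    exact Or.inl (Or.inl P2.end_mem_support)
  · intro x hx
    have hv'x : E2 (H.deleteEdges F) v' x := (E2.symm hv').trans (hs x hx)
    have hbig : E2 ((H.deleteEdges F).deleteEdges {e | e ∈ W'.edges}) v' x := by
      intro f
      obtain ⟨p0⟩ := hv'x f
      have hp0 := p0.bypass_isPath
      generalize p0.bypass = p at hp0
      have hp1 : (p.mapLe (deleteEdges_le {f})).IsPath := (Walk.isPath_mapLe _).2 hp0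
      rw [deleteEdges_deleteEdges, Set.union_comm, ← deleteEdges_deleteEdges]
      refine reach_del _ p ?_
      intro e he heW
      obtain ⟨y, hy, hyS⟩ := hW' e heW
      have hyp : y ∈ (p.mapLe (deleteEdges_le {f})).support := by
        rw [Walk.support_mapLe_eq_support]
        exact mem_support_of_edge p he hy
      exact hyS (E2.trans hv' (E2_of_path hv'x _ hp1 hyp))
    refine hbig.mono ?_
    rw [deleteEdges_deleteEdges]
    refine deleteEdges_anti ?_
    intro e he
    simp only [Set.mem_ofPred_eq, Walk.edges_append, List.mem_append, Walk.edges_mapLe_eq_edges] at he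
    rcases he with (he | he) | he
    · exact Or.inl ((hF e).2 (Or.inr he))
    · refine Or.inl ((hF e).2 (Or.inl ?_))
      have := P1.reverse.edges_takeUntil_subset_edges hz' he
      simpa using this
    · exact Or.inr he

theorem step_s11 {H : SimpleGraph V} {v : V} (S : Set V) (hS : S.Infinite)
    (hvS : ∀ x ∈ S, E2 H v x) (t : V) (ht : t ∈ S) :
    ∃ v', ∃ Q : H.Walk v v', Q.IsTrail ∧ t ∈ Q.support ∧ ∃ S' ⊆ S, S'.Infinite ∧
      ∀ x ∈ S', E2 (H.deleteEdges {e | e ∈ Q.edges}) v' x := by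
  obtain ⟨P1, P2, hP1, hP2, hd⟩ := (hvS t ht).twoPaths
  obtain ⟨S', hS', hi, hE⟩ := split (P1.edges ++ P2.edges) S hS
    (fun u hu w hw => (hvS u hu).symm.trans (hvS w hw))
  set F : Set (Sym2 V) := {e | e ∈ P1.edges ++ P2.edges} with hFdef
  have hF : ∀ e, e ∈ F ↔ e ∈ P1.edges ∨ e ∈ P2.edges := by
    intro e; simp [hFdef]
  obtain ⟨s, hs⟩ := hi.nonempty
  obtain ⟨p⟩ := (hvS s (hS' hs)).symm.reach
  obtain ⟨z, hz, q, -, -, -, hq⟩ := hit {x | x ∈ P1.support ∨ x ∈ P2.support} p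
    (Or.inl P1.start_mem_support)
  have hqF : ∀ e ∈ q.edges, e ∉ F := by
    intro e he heF
    obtain ⟨x, hx, hxS⟩ := hq e he
    rcases (hF e).1 heF with h | h
    · exact hxS (Or.inl (mem_support_of_edge _ h hx))
    · exact hxS (Or.inr (mem_support_of_edge _ h hx))
  have W := (q.toDeleteEdges F hqF).reverse
  rcases hz with hz | hz
  · obtain ⟨v', Q, h1, h2, h3⟩ := step_core S' P1 P2 hP1 hP2 hd F hF (fun x hx => hE s hs x hx) hz W
    exact ⟨v', Q, h1, h2, S', hS', hi, h3⟩
  · obtain ⟨v', Q, h1, h2, h3⟩ := step_core S' P2 P1 hP2 hP1 (fun e h h' => hd e h' h) F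
      (fun e => (hF e).trans or_comm) (fun x hx => hE s hs x hx) hz W
    exact ⟨v', Q, h1, h2, S', hS', hi, h3⟩

/-- invariant of the construction of the infinite trail -/
def Good_s11 (G : SimpleGraph V) (T : Set V) {r v : V} (w : G.Walk r v) : Prop :=
  w.IsTrail ∧ {x | x ∈ T ∧ E2 (G.deleteEdges {e | e ∈ w.edges}) v x}.Infinite

theorem Good_s11.step_s11 {G : SimpleGraph V} {T : Set V} {r v : V} {w : G.Walk r v} (hw : Good_s11 G T w) :
    ∃ v', ∃ Q : G.Walk v v', Good_s11 G T (w.append Q) ∧ ∃ t ∈ T, t ∈ Q.support ∧ t ∉ w.support := by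
  obtain ⟨hw1, hw2⟩ := hw
  obtain ⟨t, ht, htw⟩ := (hw2.sdiff (List.finite_toSet w.support)).nonempty
  obtain ⟨v', Q, hQ, htQ, S', hS', hi, hE⟩ := TJ.step_s11 _ hw2 (fun x hx => hx.2) t ht
  refine ⟨v', Q.mapLe (deleteEdges_le _), ⟨?_, ?_⟩, t, ht.1, ?_, htw⟩
  · rw [Walk.isTrail_append]
    refine ⟨hw1, ?_, ?_⟩
    · rw [Walk.isTrail_def, Walk.edges_mapLe_eq_edges]
      exact hQ.edges_nodup
    · intro e he he'
      rw [Walk.edges_mapLe_eq_edges] at he'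
      have h1 := Q.edges_subset_edgeSet he'
      rw [edgeSet_deleteEdges] at h1
      exact h1.2 he
  · refine hi.mono ?_
    intro x hx
    refine ⟨(hS' hx).1, ?_⟩
    have h1 := hE x hx
    rw [deleteEdges_deleteEdges] at h1
    refine h1.mono (deleteEdges_anti ?_)
    intro e he
    simp only [Set.mem_ofPred_eq, Walk.edges_append, List.mem_append,
      Walk.edges_mapLe_eq_edges] at he
    exact he
  · rw [Walk.support_mapLe_eq_support]; exact htQ

theorem edges_getElem_eq {G : SimpleGraph V} {a b : V} (w : G.Walk a b) :
    ∀ i (hi : i < w.edges.length), w.edges[i] = s(w.getVert i, w.getVert (i + 1)) := by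
  induction w with
  | nil => intro i hi; simp at hi
  | cons h p ih =>
    intro i hi
    cases i with
    | zero => simp
    | succ i =>
      simp only [Walk.edges_cons, List.getElem_cons_succ, Walk.getVert_cons_succ]
      exact ih _ _

theorem edge_idx {G : SimpleGraph V} {a b : V} (w : G.Walk a b) (hw : w.IsTrail) {i j : ℕ}
    (hi : i < w.length) (hj : j < w.length)
    (e : s(w.getVert i, w.getVert (i + 1)) = s(w.getVert j, w.getVert (j + 1))) : i = j := by
  rw [← edges_getElem_eq w i (by simpa using hi), ← edges_getElem_eq w j (by simpa using hj)] at e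
  exact (List.Nodup.getElem_inj_iff hw.edges_nodup).1 e

theorem exists_trail (G : SimpleGraph V) (T : Set V) (hT : T.Infinite)
    (hG : ∀ u v, E2 G u v) : ∃ f : ℕ → V, (∀ i, G.Adj (f i) (f (i + 1))) ∧
      (Function.Injective fun i => s(f i, f (i + 1))) ∧ (T ∩ Set.range f).Infinite := by
  obtain ⟨r, -⟩ := hT.nonempty
  let St := {a : Σ v, G.Walk r v // Good_s11 G T a.2}
  have s0 : St := ⟨⟨r, .nil⟩, by simp, by
    refine hT.mono fun x hx => ⟨hx, ?_⟩
    simpa using hG r x⟩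
  have hst : ∀ a : St, ∃ b : St, (∃ Q : G.Walk a.1.1 b.1.1, b.1.2 = a.1.2.append Q) ∧
      ∃ t ∈ T, t ∈ b.1.2.support ∧ t ∉ a.1.2.support := by
    rintro ⟨⟨v, w⟩, hw⟩
    obtain ⟨v', Q, hQ, t, htT, htQ, htw⟩ := hw.step_s11
    refine ⟨⟨⟨v', w.append Q⟩, hQ⟩, ⟨Q, rfl⟩, t, htT, ?_, htw⟩
    exact Walk.mem_support_append_iff _ _ |>.2 (Or.inr htQ)
  choose nx hnx t htT htn hto using hst
  let a : ℕ → St := fun n => Nat.rec s0 (fun _ b => nx b) n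
  have ha : ∀ n, a (n + 1) = nx (a n) := fun n => rfl
  have hlen1 : ∀ n, (a n).1.2.length < (a (n + 1)).1.2.length := by
    intro n
    obtain ⟨Q, hQ⟩ := hnx (a n)
    rw [ha, hQ, Walk.length_append]
    have : Q.length ≠ 0 := by
      intro h0
      have h1 := htn (a n)
      rw [hQ, Walk.mem_support_append_iff] at h1
      rcases h1 with h1 | h1
      · exact hto _ h1
      · obtain ⟨i, hi, hi'⟩ := Walk.mem_support_iff_exists_getVert.1 h1
        have : i = 0 := by omega
        rw [this, Walk.getVert_zero] at hi
        exact hto (a n) (hi ▸ Walk.end_mem_support _)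
    omega
  have hpre1 : ∀ n i, i ≤ (a n).1.2.length → (a (n + 1)).1.2.getVert i = (a n).1.2.getVert i := by
    intro n i hi
    obtain ⟨Q, hQ⟩ := hnx (a n)
    rw [ha, hQ, Walk.getVert_append']
    rw [if_pos hi]
  have hlen : ∀ n, n ≤ (a n).1.2.length := by
    intro n
    induction n with
    | zero => simp
    | succ n ih => have := hlen1 n; omega
  have hlenm : StrictMono fun n => (a n).1.2.length := strictMono_nat_of_lt_succ hlen1
  have hpre : ∀ n m i, n ≤ m → i ≤ (a n).1.2.length →
      (a m).1.2.getVert i = (a n).1.2.getVert i := by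
    intro n m i hnm hi
    induction m, hnm using Nat.le_induction with
    | base => rfl
    | succ m hm ih => rw [hpre1 m i (hi.trans (hlenm.monotone hm)), ih]
  let f : ℕ → V := fun i => (a i).1.2.getVert i
  have hf : ∀ n i, i ≤ (a n).1.2.length → f i = (a n).1.2.getVert i := by
    intro n i hi
    rcases le_total n i with h | h
    · exact hpre n i i h hi
    · exact (hpre i n i h (hlen i)).symm
  refine ⟨f, ?_, ?_, ?_⟩
  · intro i
    have h1 := hlen (i + 1)
    rw [hf (i + 1) i (by omega), hf (i + 1) (i + 1) h1]
    exact Walk.adj_getVert_succ _ (by omega)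
  · intro i j e
    have h1 := hlen (i + j + 1)
    simp only [] at e
    rw [hf (i + j + 1) i (by omega), hf (i + j + 1) (i + 1) (by omega),
      hf (i + j + 1) j (by omega), hf (i + j + 1) (j + 1) (by omega)] at e
    exact edge_idx _ (a (i + j + 1)).2.1 (by omega) (by omega) e
  · have hsup : ∀ n m, n ≤ m → (a n).1.2.support ⊆ (a m).1.2.support := by
      intro n m hnm x hx
      obtain ⟨i, hi, hi'⟩ := Walk.mem_support_iff_exists_getVert.1 hx
      rw [← hi, ← hpre n m i hnm hi']
      exact Walk.getVert_mem_support _ _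
    have hlt : ∀ n m, n < m → t (a n) ≠ t (a m) := by
      intro n m hnm e
      apply hto (a m)
      rw [← e]
      exact hsup (n + 1) m hnm (htn (a n))
    refine Set.infinite_of_injective_forall_mem (f := fun n => t (a n)) ?_ ?_
    · intro n m e
      by_contra hne
      rcases lt_or_gt_of_ne hne with h | h
      · exact hlt _ _ h e
      · exact hlt _ _ h e.symm
    · intro n
      refine ⟨htT _, ?_⟩
      obtain ⟨i, hi, hi'⟩ := Walk.mem_support_iff_exists_getVert.1 (htn (a n))
      exact ⟨i, (hf (n + 1) i hi').trans hi⟩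
end Trail
end TJ

namespace TJ

theorem pairing_type {B : Type*} (hB : Even (Nat.card B)) :
    ∃ s : B → B, ∀ x, s (s x) = x ∧ s x ≠ x := by
  have key : ∃ γ : Type _, Nonempty (B ≃ γ × Bool) := by
    rcases finite_or_infinite B with hf | hi
    · obtain ⟨n, hn⟩ := hB
      refine ⟨ULift (Fin n), ?_⟩
      have : Nat.card B = Nat.card (ULift (Fin n) × Bool) := by
        simp [hn]; omega
      exact (Finite.card_eq).1 this
    · refine ⟨B, ?_⟩
      have : Cardinal.lift.{0} (Cardinal.mk B) = Cardinal.mk (B × Bool) := by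
        have h0 := Cardinal.aleph0_le_mk B
        rw [Cardinal.mk_prod]
        simp only [Cardinal.mk_bool, Cardinal.lift_ofNat, Cardinal.lift_uzero]
        have h2 := Cardinal.natCast_lt_aleph0 (n := 2)
        push_cast at h2
        rw [Cardinal.mul_eq_left h0 (h2.le.trans h0) (by norm_num)]
      simp only [Cardinal.lift_uzero] at this
      exact Cardinal.eq.1 this
  obtain ⟨γ, ⟨φ⟩⟩ := key
  refine ⟨fun x => φ.symm ((φ x).1, !(φ x).2), fun x => ⟨by simp, ?_⟩⟩
  intro h
  have := congrArg (fun y => (φ y).2) h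
  simp at this

theorem pairing_s11 {V : Type*} (A : Set V) (hA : Even A.ncard) :
    ∃ s : V → V, ∀ x ∈ A, s x ∈ A ∧ s (s x) = x ∧ s x ≠ x := by
  classical
  obtain ⟨s, hs⟩ := pairing_type (B := A) hA
  refine ⟨fun x => if h : x ∈ A then s ⟨x, h⟩ else x, fun x hx => ?_⟩
  have h1 := hs ⟨x, hx⟩
  simp only [hx, dif_pos, Subtype.coe_prop, Subtype.coe_eta, h1.1, true_and]
  intro h
  exact h1.2 (Subtype.ext h)

theorem natPair (N : Set ℕ) (hN : N.Infinite) : ∃ τ : ℕ → ℕ, ∀ n ∈ N, τ n ∈ N ∧ τ (τ n) = n ∧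
    τ n ≠ n ∧ ∀ m ∈ N, ∀ x, min n (τ n) ≤ x → x < max n (τ n) → min m (τ m) ≤ x →
      x < max m (τ m) → m = n ∨ m = τ n := by
  classical
  have hN' : {x | x ∈ N}.Infinite := hN
  have hmono := Nat.nth_strictMono (p := (· ∈ N)) hN'
  let sw : ℕ → ℕ := fun k => if k % 2 = 0 then k + 1 else k - 1
  have hsw : ∀ k, sw (sw k) = k := by intro k; simp only [sw]; split_ifs <;> omega
  have hsw1 : ∀ k, sw k ≠ k := by intro k; simp only [sw]; split_ifs <;> omega
  let τ : ℕ → ℕ := fun n => Nat.nth (· ∈ N) (sw (Nat.count (· ∈ N) n))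
  have hc : ∀ k, Nat.count (· ∈ N) (Nat.nth (· ∈ N) k) = k :=
    fun k => Nat.count_nth_of_infinite (p := (· ∈ N)) hN' k
  have hτ : ∀ k, τ (Nat.nth (· ∈ N) k) = Nat.nth (· ∈ N) (sw k) := by
    intro k; simp only [τ, hc]
  have hmem : ∀ k, Nat.nth (· ∈ N) k ∈ N := fun k => Nat.nth_mem_of_infinite (p := (· ∈ N)) hN' k
  have hsurj : ∀ n ∈ N, ∃ k, n = Nat.nth (· ∈ N) k := fun n hn =>
    ⟨Nat.count (· ∈ N) n, (Nat.nth_count (p := (· ∈ N)) hn).symm⟩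
  refine ⟨τ, fun n hn => ?_⟩
  obtain ⟨k, rfl⟩ := hsurj n hn
  refine ⟨?_, ?_, ?_, ?_⟩
  · rw [hτ]; exact hmem _
  · rw [hτ k, hτ (sw k), hsw]
  · rw [hτ]; exact fun h => hsw1 k (hmono.injective h)
  · intro m hm x h1 h2 h3 h4
    obtain ⟨j, rfl⟩ := hsurj m hm
    rw [hτ] at *
    rw [← hmono.monotone.map_min] at h1 h3
    rw [← hmono.monotone.map_max] at h2 h4
    have h5 := hmono.lt_iff_lt.1 (h1.trans_lt h4)
    have h6 := hmono.lt_iff_lt.1 (h3.trans_lt h2)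
    have : j = k ∨ j = sw k := by
      simp only [sw] at h5 h6 ⊢
      split_ifs at h5 h6 ⊢ <;> omega
    rcases this with h | h
    · exact Or.inl (by rw [h])
    · exact Or.inr (by rw [h])

theorem chooseL {V : Type*} [Nonempty V] (A : Set V) : ∃ (x : V) (L : Set V), L ⊆ A ∧
    (A.Nonempty → L.Nonempty) ∧ Even (A \ L).ncard ∧
    ∀ y ∈ L, ∀ z ∈ L, (y = x ↔ z = x) → y = z := by
  rcases A.eq_empty_or_nonempty with rfl | ⟨x, hx⟩
  · exact ⟨Classical.arbitrary V, ∅, by simp⟩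
  · by_cases he : Even (A \ {x}).ncard
    · refine ⟨x, {x}, by simpa using hx, by simp, he, ?_⟩
      rintro y rfl z rfl -; rfl
    · have hne : (A \ {x}).ncard ≠ 0 := by intro h; rw [h] at he; simp at he
      obtain ⟨y, hy⟩ := Set.nonempty_of_ncard_ne_zero hne
      have h1 := Set.ncard_sdiff_singleton_add_one hy (Set.finite_of_ncard_ne_zero hne)
      refine ⟨x, {x, y}, ?_, by simp, ?_, ?_⟩
      · rintro z (rfl | rfl); exacts [hx, hy.1]
      · have h2 : A \ {x, y} = (A \ {x}) \ {y} := by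
          ext z; simp [not_or, and_assoc]
        rw [h2]
        rw [← h1] at he
        by_contra h3
        exact he (by rw [Nat.even_add_one]; exact h3)
      · have : y ≠ x := hy.2
        rintro a (rfl | rfl) b (rfl | rfl) h <;> simp_all

open SimpleGraph in
theorem final {V : Type*} (G : SimpleGraph V) (T : Set V) (σ : V → V) (E : V → Set (Sym2 V))
    (h : ∀ t ∈ T, σ t ∈ T ∧ σ (σ t) = t ∧ σ t ≠ t ∧ ∃ w : G.Walk t (σ t), ∀ e ∈ w.edges, e ∈ E t)
    (hE : ∀ t ∈ T, ∀ t' ∈ T, t' ≠ t → t' ≠ σ t → ∀ e ∈ E t, e ∉ E t') : G.HasTJoin T := by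
  classical
  have : ∀ t : T, ∃ w : G.Walk t (σ t), w.IsPath ∧ ∀ e ∈ w.edges, e ∈ E t := by
    intro t
    obtain ⟨-, -, -, w, hw⟩ := h t t.2
    exact ⟨w.bypass, w.bypass_isPath, fun e he => hw e (w.edges_bypass_subset_edges he)⟩
  choose w hw hwE using this
  let r : V → V → Prop := WellOrderingRel
  have tri : ∀ a b, a ≠ b → r a b ∨ r b a := fun a b hab => by
    rcases trichotomous_of r a b with h | h | h
    exacts [Or.inl h, absurd h hab, Or.inr h]
  have asy : ∀ a b, r a b → ¬ r b a := fun a b => asymm_of r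
  let F : T → Σ u : V, Σ v : V, G.Walk u v := fun t => ⟨t, σ t, w t⟩
  refine ⟨{p | ∃ t : T, r t (σ t) ∧ p = F t}, ?_, ?_, ?_⟩
  · rintro p ⟨t, -, rfl⟩
    exact ⟨hw t, (h t t.2).2.2.1.symm, t.2, (h t t.2).1⟩
  · rintro p ⟨t, ht, rfl⟩ q ⟨t', ht', rfl⟩ hne e he he'
    refine hE t t.2 t' t'.2 ?_ ?_ e (hwE t e he) (hwE t' e he')
    · intro hh; apply hne; rw [Subtype.ext hh]
    · intro hh
      rw [hh, (h t t.2).2.1] at ht'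
      exact asy _ _ ht ht'
  · intro t ht
    obtain ⟨h1, h2, h3, -⟩ := h t ht
    rcases tri _ _ h3 with h4 | h4
    · refine ⟨F ⟨σ t, h1⟩, ⟨⟨⟨σ t, h1⟩, by rw [h2]; exact h4, rfl⟩, Or.inr h2⟩, ?_⟩
      rintro p ⟨⟨t', ht', rfl⟩, rfl | hh⟩
      · exact absurd h4 (asy _ _ ht')
      · have : t' = ⟨σ t, h1⟩ := by
          have hh : σ t' = t := hh
          subst hh
          exact Subtype.ext (h t' t'.2).2.1.symm
        rw [this]
    · refine ⟨F ⟨t, ht⟩, ⟨⟨⟨t, ht⟩, h4, rfl⟩, Or.inl rfl⟩, ?_⟩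
      rintro p ⟨⟨t', ht', rfl⟩, rfl | hh⟩
      · rfl
      · exfalso
        have hh : σ t' = t := hh
        rw [← hh, (h t' t'.2).2.1] at h4
        exact asy _ _ h4 ht'

end TJ

namespace TJ
open SimpleGraph

theorem exists_desc {V : Type*} (G : SimpleGraph V) (hc : G.Connected) (D : Set V)
    (hD : D.Nonempty) : ∃ (h : V → ℕ) (π : V → V), (∀ v, h v = 0 ↔ v ∈ D) ∧
      (∀ v, v ∉ D → h (π v) + 1 = h v) ∧ (∀ d ∈ D, π d = d) ∧ (∀ v, v ∉ D → G.Adj v (π v)) := by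
  classical
  let S : V → Set ℕ := fun v => {n | ∃ d ∈ D, ∃ w : G.Walk v d, w.length = n}
  let h : V → ℕ := fun v => sInf (S v)
  have hne : ∀ v, (S v).Nonempty := by
    intro v
    obtain ⟨d, hd⟩ := hD
    obtain ⟨w⟩ := hc.preconnected v d
    exact ⟨_, d, hd, w, rfl⟩
  have hmem : ∀ v, ∃ d ∈ D, ∃ w : G.Walk v d, w.length = h v := fun v => Nat.sInf_mem (hne v)
  have hle : ∀ v d, d ∈ D → ∀ w : G.Walk v d, h v ≤ w.length := fun v d hd w =>
    Nat.sInf_le ⟨d, hd, w, rfl⟩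
  have h0 : ∀ v, h v = 0 ↔ v ∈ D := by
    intro v
    constructor
    · intro hv
      obtain ⟨d, hd, w, hw⟩ := hmem v
      rw [hv] at hw
      rwa [Walk.eq_of_length_eq_zero hw]
    · intro hv
      have := hle v v hv Walk.nil
      simpa using this
  have hst : ∀ v, ∃ y, (v ∉ D → h y + 1 = h v ∧ G.Adj v y) ∧ (v ∈ D → y = v) := by
    intro v
    by_cases hv : v ∈ D
    · exact ⟨v, fun h => absurd hv h, fun _ => rfl⟩
    · obtain ⟨d, hd, w, hw⟩ := hmem v
      cases w with
      | nil => exact absurd hd hv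
      | @cons _ y _ hadj p =>
        refine ⟨y, fun _ => ⟨?_, hadj⟩, fun h => absurd h hv⟩
        have h1 := hle y d hd p
        obtain ⟨d', hd', w', hw'⟩ := hmem y
        have h2 := hle v d' hd' (Walk.cons hadj w')
        simp only [Walk.length_cons] at hw h2
        omega
  choose π h1 h2 using hst
  exact ⟨h, π, h0, fun v hv => (h1 v hv).1, h2, fun v hv => (h1 v hv).2⟩

theorem legWalk {V : Type*} (G : SimpleGraph V) (D : Set V) (π : V → V)
    (hadj : ∀ v, v ∉ D → G.Adj v (π v)) (t : V) (k : ℕ) (hk : ∀ i < k, π^[i] t ∉ D) :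
    ∃ w : G.Walk t (π^[k] t), ∀ e ∈ w.edges, ∃ i < k, e = s(π^[i] t, π (π^[i] t)) := by
  induction k with
  | zero => exact ⟨Walk.nil, by simp⟩
  | succ k ih =>
    obtain ⟨w, hw⟩ := ih fun i hi => hk i (by omega)
    have ha := hadj _ (hk k (by omega))
    rw [Function.iterate_succ_apply']
    refine ⟨w.concat ha, fun e he => ?_⟩
    rw [Walk.edges_concat] at he
    simp only [List.concat_eq_append, List.mem_append, List.mem_singleton] at he
    rcases he with he | rfl
    · obtain ⟨i, hi, rfl⟩ := hw e he
      exact ⟨i, by omega, rfl⟩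
    · exact ⟨k, by omega, rfl⟩

theorem trailWalk {V : Type*} (G : SimpleGraph V) (f : ℕ → V) (hf : ∀ i, G.Adj (f i) (f (i + 1)))
    (a b : ℕ) (hab : a ≤ b) :
    ∃ w : G.Walk (f a) (f b), ∀ e ∈ w.edges, ∃ i, a ≤ i ∧ i < b ∧ e = s(f i, f (i + 1)) := by
  induction b, hab using Nat.le_induction with
  | base => exact ⟨Walk.nil, by simp⟩
  | succ b hb ih =>
    obtain ⟨w, hw⟩ := ih
    refine ⟨w.concat (hf b), fun e he => ?_⟩
    rw [Walk.edges_concat] at he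
    simp only [List.concat_eq_append, List.mem_append, List.mem_singleton] at he
    rcases he with he | rfl
    · obtain ⟨i, hi, hi', rfl⟩ := hw e he
      exact ⟨i, hi, by omega, rfl⟩
    · exact ⟨b, hb, by omega, rfl⟩

theorem connected_case {V : Type*} (G : SimpleGraph V) (T : Set V) (hG : G.TwoEdgeConnected)
    (hT : T.Infinite) : G.HasTJoin T := by
  classical
  have hc := hG.1
  have := hc.nonempty
  have hE2 : ∀ u v, E2 G u v := by
    intro u v e
    by_cases he : e ∈ G.edgeSet
    · exact (hG.2 e he).preconnected u v
    · have : G.deleteEdges {e} = G := by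
        rw [deleteEdges_eq_self]
        exact Set.disjoint_singleton_right.2 he
      rw [this]
      exact hc.preconnected u v
  obtain ⟨f, hfa, hfi, hfT⟩ := exists_trail G T hT hE2
  set D : Set V := Set.range f with hDdef
  obtain ⟨h, π, h0, h1, h2, h3⟩ := exists_desc G hc D ⟨f 0, 0, rfl⟩
  obtain ⟨k, hk1, hk2, hk3⟩ := absorb (T := T) h0 h1 h2
  set e : V → V := fun t => π^[k t] t with hedef
  let A : V → Set V := fun v => {t | t ∈ T ∧ e t = v}
  choose x L hLA hLne hLe hLx using fun v => chooseL (A v)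
  let M : V → Set V := fun v => if v ∈ D then A v \ L v else A v
  have hM : ∀ v, Even (M v).ncard := by
    intro v
    by_cases hv : v ∈ D
    · simp only [M, if_pos hv]; exact hLe v
    · simp only [M, if_neg hv]; exact hk3 v hv
  choose s hs using fun v => pairing_s11 (M v) (hM v)
  let Lt : Set V := {t | t ∈ T ∧ e t ∈ D ∧ t ∈ L (e t)}
  have hMt : ∀ t v, t ∈ M v ↔ t ∈ T ∧ t ∉ Lt ∧ e t = v := by
    intro t v
    by_cases hv : v ∈ D
    · simp only [M, if_pos hv]
      constructor
      · rintro ⟨⟨h1, rfl⟩, h2⟩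
        exact ⟨h1, fun h => h2 h.2.2, rfl⟩
      · rintro ⟨h1, h2, rfl⟩
        exact ⟨⟨h1, rfl⟩, fun h => h2 ⟨h1, hv, h⟩⟩
    · simp only [M, if_neg hv]
      constructor
      · rintro ⟨h1, rfl⟩
        exact ⟨h1, fun h => hv h.2.1, rfl⟩
      · rintro ⟨h1, h2, rfl⟩
        exact ⟨h1, rfl⟩
  have hpos : ∀ v, ∃ i, v ∈ D → f i = v := by
    intro v
    by_cases hv : v ∈ D
    · obtain ⟨i, hi⟩ := hv
      exact ⟨i, fun _ => hi⟩
    · exact ⟨0, fun h => absurd h hv⟩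
  choose pos hpos using hpos
  let code : V → ℕ := fun t => 2 * pos (e t) + if t = x (e t) then 0 else 1
  have hcode2 : ∀ t, code t / 2 = pos (e t) := by
    intro t; simp only [code]; split_ifs <;> omega
  have hcinj : ∀ t ∈ Lt, ∀ t' ∈ Lt, code t = code t' → t = t' := by
    rintro t ⟨htT, htD, htL⟩ t' ⟨htT', htD', htL'⟩ hh
    have hp : pos (e t) = pos (e t') := by rw [← hcode2, ← hcode2, hh]
    have he : e t = e t' := by rw [← hpos _ htD, ← hpos _ htD', hp]
    refine hLx (e t) t htL t' (he ▸ htL') ?_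
    simp only [code, ← he] at hh
    constructor
    · intro h5
      by_contra h6
      rw [if_pos h5, if_neg h6] at hh
      omega
    · intro h5
      by_contra h6
      rw [if_pos h5, if_neg h6] at hh
      omega
  have hLtinf : Lt.Infinite := by
    refine Set.Infinite.of_image e (hfT.mono ?_)
    rintro t ⟨htT, htD⟩
    have hk0 : k t = 0 := by
      by_contra hk
      exact hk1 t htT 0 (by omega) htD
    have het : e t = t := by simp only [hedef, hk0, Function.iterate_zero, id]
    obtain ⟨y, hy⟩ := hLne t ⟨t, htT, het⟩
    obtain ⟨hyT, hye⟩ := hLA t hy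
    exact ⟨y, ⟨hyT, by rw [hye]; exact htD, by rw [hye]; exact hy⟩, hye⟩
  obtain ⟨τ, hτ⟩ := natPair (code '' Lt)
    (hLtinf.image fun t ht t' ht' => hcinj t ht t' ht')
  have hinv : ∀ n, ∃ t, n ∈ code '' Lt → t ∈ Lt ∧ code t = n := by
    intro n
    by_cases hn : n ∈ code '' Lt
    · obtain ⟨t, ht, ht'⟩ := hn
      exact ⟨t, fun _ => ⟨ht, ht'⟩⟩
    · exact ⟨Classical.arbitrary V, fun h => absurd h hn⟩
  choose inv hinv using hinv
  let σ : V → V := fun t => if t ∈ Lt then inv (τ (code t)) else s (e t) t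
  have hσL : ∀ t ∈ Lt, σ t ∈ Lt ∧ code (σ t) = τ (code t) := by
    intro t ht
    simp only [σ, if_pos ht]
    exact hinv _ (hτ (code t) ⟨t, ht, rfl⟩).1
  have hσM : ∀ t ∈ T, t ∉ Lt → σ t ∈ T ∧ σ t ∉ Lt ∧ e (σ t) = e t := by
    intro t ht ht'
    simp only [σ, if_neg ht']
    exact (hMt _ _).1 (hs (e t) t ((hMt _ _).2 ⟨ht, ht', rfl⟩)).1
  have hσ : ∀ t ∈ T, σ t ∈ T ∧ σ (σ t) = t ∧ σ t ≠ t := by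
    intro t ht
    by_cases htL : t ∈ Lt
    · obtain ⟨h5, h6⟩ := hσL t htL
      obtain ⟨h7, h8⟩ := hσL _ h5
      obtain ⟨-, h9, h10, -⟩ := hτ (code t) ⟨t, htL, rfl⟩
      refine ⟨h5.1, hcinj _ h7 _ htL (by rw [h8, h6, h9]), fun hh => h10 ?_⟩
      rw [← h6, hh]
    · obtain ⟨h5, h6, h7⟩ := hσM t ht htL
      obtain ⟨-, h8, h9⟩ := hs (e t) t ((hMt _ _).2 ⟨ht, htL, rfl⟩)
      have h10 : σ t = s (e t) t := by simp only [σ, if_neg htL]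
      have h11 : σ (σ t) = s (e (σ t)) (σ t) := by
        show (if σ t ∈ Lt then _ else _) = _
        rw [if_neg h6]
      refine ⟨h5, ?_, ?_⟩
      · rw [h11, h7, h10, h8]
      · rw [h10]; exact h9
  let Leg : V → Set (Sym2 V) := fun t => {d | ∃ i < k t, d = s(π^[i] t, π (π^[i] t))}
  let C : V → Set (Sym2 V) := fun t => {d | t ∈ Lt ∧ ∃ i, min (code t) (τ (code t)) ≤ 2 * i + 1 ∧
    2 * i + 1 < max (code t) (τ (code t)) ∧ d = s(f i, f (i + 1))}
  have hLegD : ∀ t ∈ T, ∀ t' ∈ T, ∀ d, d ∈ Leg t → d ∈ Leg t' → t = t' := by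
    rintro t ht t' ht' d ⟨i, hi, rfl⟩ ⟨j, hj, hd⟩
    refine hk2 t ht t' ht' i hi j hj ?_
    have h5 := h1 _ (hk1 t ht i hi)
    have h6 := h1 _ (hk1 t' ht' j hj)
    rcases Sym2.eq_iff.1 hd with h7 | h7
    · exact h7.1
    · exfalso
      rw [h7.2, h7.1] at h5
      omega
  have hLegC : ∀ t ∈ T, ∀ t', ∀ d, d ∈ Leg t → d ∉ C t' := by
    rintro t ht t' d ⟨i, hi, rfl⟩ ⟨-, j, -, -, hd⟩
    apply hk1 t ht i hi
    rcases Sym2.eq_iff.1 hd with h7 | h7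
    · exact ⟨j, h7.1.symm⟩
    · exact ⟨j + 1, h7.1.symm⟩
  have hlegw : ∀ t ∈ T, ∃ w : G.Walk t (e t), ∀ d ∈ w.edges, d ∈ Leg t := by
    intro t ht
    exact legWalk G D π h3 t (k t) (hk1 t ht)
  refine final G T σ (fun t => Leg t ∪ Leg (σ t) ∪ C t) ?_ ?_
  · intro t ht
    obtain ⟨h5, h6, h7⟩ := hσ t ht
    refine ⟨h5, h6, h7, ?_⟩
    obtain ⟨w1, hw1⟩ := hlegw t ht
    obtain ⟨w2, hw2⟩ := hlegw _ h5
    have hmid : ∃ w : G.Walk (e t) (e (σ t)), ∀ d ∈ w.edges, d ∈ C t := by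
      by_cases htL : t ∈ Lt
      · obtain ⟨h8, h9⟩ := hσL t htL
        rw [← hpos _ htL.2.1, ← hpos _ h8.2.1, ← hcode2, ← hcode2, h9]
        rcases le_total (code t) (τ (code t)) with hle | hle
        · obtain ⟨w, hw⟩ := trailWalk G f hfa (code t / 2) (τ (code t) / 2) (by omega)
          refine ⟨w, fun d hd => ?_⟩
          obtain ⟨i, hi, hi', rfl⟩ := hw d hd
          exact ⟨htL, i, by omega, by omega, rfl⟩
        · obtain ⟨w, hw⟩ := trailWalk G f hfa (τ (code t) / 2) (code t / 2) (by omega)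
          refine ⟨w.reverse, fun d hd => ?_⟩
          rw [Walk.edges_reverse, List.mem_reverse] at hd
          obtain ⟨i, hi, hi', rfl⟩ := hw d hd
          exact ⟨htL, i, by omega, by omega, rfl⟩
      · rw [(hσM t ht htL).2.2]
        exact ⟨Walk.nil, by simp⟩
    obtain ⟨w3, hw3⟩ := hmid
    refine ⟨(w1.append w3).append w2.reverse, fun d hd => ?_⟩
    rw [Walk.edges_append, Walk.edges_append, List.mem_append, List.mem_append,
      Walk.edges_reverse, List.mem_reverse] at hd
    rcases hd with (hd | hd) | hd
    · exact Or.inl (Or.inl (hw1 d hd))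
    · exact Or.inr (hw3 d hd)
    · exact Or.inl (Or.inr (hw2 d hd))
  · intro t ht t' ht' hne hne' d hd hd'
    obtain ⟨h5, h6, h7⟩ := hσ t ht
    obtain ⟨h5', h6', h7'⟩ := hσ t' ht'
    have hne2 : σ t' ≠ t := fun hh => hne' (by rw [← hh, h6'])
    have hne3 : σ t' ≠ σ t := fun hh => hne (by rw [← h6', hh, h6])
    rcases hd with (hd | hd) | hd <;> rcases hd' with (hd' | hd') | hd'
    · exact hne (hLegD _ ht' _ ht _ hd' hd)
    · exact hne2 (hLegD _ h5' _ ht _ hd' hd)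
    · exact hLegC _ ht _ _ hd hd'
    · exact hne' (hLegD _ ht' _ h5 _ hd' hd)
    · exact hne3 (hLegD _ h5' _ h5 _ hd' hd)
    · exact hLegC _ h5 _ _ hd hd'
    · exact hLegC _ ht' _ _ hd' hd
    · exact hLegC _ h5' _ _ hd' hd
    · obtain ⟨hL1, i, hi1, hi2, rfl⟩ := hd
      obtain ⟨hL2, j, hj1, hj2, hd⟩ := hd'
      have hij : i = j := hfi hd
      subst hij
      rcases (hτ (code t) ⟨t, hL1, rfl⟩).2.2.2 (code t') ⟨t', hL2, rfl⟩ _ hi1 hi2 hj1 hj2 with hh | hh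
      · exact hne (hcinj _ hL2 _ hL1 hh)
      · rw [← (hσL t hL1).2] at hh
        exact hne' (hcinj _ hL2 _ (hσL t hL1).1 hh)

theorem main_s11 {V : Type*} (G : SimpleGraph V) (T : Set V)
    (h2ec : ∀ C : G.ConnectedComponent, (G.induce C.supp).TwoEdgeConnected)
    (hinf : ∀ C : G.ConnectedComponent, (C.supp ∩ T).Infinite) :
    G.HasTJoin T := by
  have hJ : ∀ C : G.ConnectedComponent, (G.induce C.supp).HasTJoin (Subtype.val ⁻¹' T) := by
    intro C
    refine connected_case _ _ (h2ec C) ?_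
    refine Set.Infinite.of_image Subtype.val ?_
    rw [Subtype.image_preimage_coe]
    exact hinf C
  choose P hP1 hP2 hP3 using hJ
  let φ : ∀ C : G.ConnectedComponent, G.induce C.supp ↪g G := fun C => Embedding.induce C.supp
  let F : ∀ C : G.ConnectedComponent, (Σ u v, (G.induce C.supp).Walk u v) →
      Σ u : V, Σ v : V, G.Walk u v := fun C p => ⟨p.1.1, p.2.1.1, p.2.2.map (φ C).toHom⟩
  have hsup : ∀ C p, ∀ d ∈ (F C p).2.2.edges, ∀ x ∈ d, x ∈ C.supp := by
    intro C p d hd x hx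
    have hd : d ∈ (p.2.2.map (φ C).toHom).edges := hd
    rw [Walk.edges_map, List.mem_map] at hd
    obtain ⟨d', -, rfl⟩ := hd
    obtain ⟨y, -, rfl⟩ := Sym2.mem_map.1 hx
    exact y.2
  have hedge : ∀ C p q, ∀ d ∈ (F C p).2.2.edges, d ∈ (F C q).2.2.edges →
      ∃ d', d' ∈ p.2.2.edges ∧ d' ∈ q.2.2.edges := by
    intro C p q d hd hd'
    have hd : d ∈ (p.2.2.map (φ C).toHom).edges := hd
    have hd' : d ∈ (q.2.2.map (φ C).toHom).edges := hd'
    rw [Walk.edges_map, List.mem_map] at hd hd'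
    obtain ⟨d1, h1, rfl⟩ := hd
    obtain ⟨d2, h2, hh⟩ := hd'
    have := Sym2.map.injective (φ C).injective hh
    subst this
    exact ⟨_, h1, h2⟩
  refine ⟨{p | ∃ C, ∃ q ∈ P C, p = F C q}, ?_, ?_, ?_⟩
  · rintro p ⟨C, q, hq, rfl⟩
    obtain ⟨h1, h2, h3, h4⟩ := hP1 C q hq
    exact ⟨Walk.IsPath.map (φ C).injective h1, fun h => h2 (Subtype.ext h), h3, h4⟩
  · rintro p ⟨C, q, hq, rfl⟩ p' ⟨C', q', hq', rfl⟩ hne d hd hd'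
    have hCC : C = C' := by
      induction d with
      | h a b =>
        have h1 := hsup C q _ hd a (Sym2.mem_mk_left _ _)
        have h2 := hsup C' q' _ hd' a (Sym2.mem_mk_left _ _)
        rw [ConnectedComponent.mem_supp_iff] at h1 h2
        rw [← h1, ← h2]
    subst hCC
    obtain ⟨d', h1, h2⟩ := hedge C q q' d hd hd'
    exact hP2 C q hq q' hq' (fun h => hne (by rw [h])) d' h1 h2
  · intro t ht
    obtain ⟨p, ⟨hp, hpt⟩, hu⟩ := hP3 (G.connectedComponentMk t) ⟨t, rfl⟩ ht
    refine ⟨F _ p, ⟨⟨_, p, hp, rfl⟩, ?_⟩, ?_⟩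
    · rcases hpt with h | h
      · exact Or.inl (congrArg Subtype.val h)
      · exact Or.inr (congrArg Subtype.val h)
    · rintro p' ⟨⟨C', q', hq', rfl⟩, hh⟩
      have hC : C' = G.connectedComponentMk t := by
        rcases hh with h | h
        · have h1 := q'.1.2
          rw [ConnectedComponent.mem_supp_iff] at h1
          rw [← h1]; exact congrArg _ h
        · have h1 := q'.2.1.2
          rw [ConnectedComponent.mem_supp_iff] at h1
          rw [← h1]; exact congrArg _ h
      subst hC
      rw [hu q' ⟨hq', hh.imp (fun h => Subtype.ext h) (fun h => Subtype.ext h)⟩]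

end TJ

/-- If every connected component of `G` is 2-edge-connected and contains infinitely many
vertices of `T`, then `G` contains a `T`-join. -/
theorem hasTJoin_of_components {V : Type*} (G : SimpleGraph V) (T : Set V)
    (h2ec : ∀ C : G.ConnectedComponent, (G.induce C.supp).TwoEdgeConnected)
    (hinf : ∀ C : G.ConnectedComponent, (C.supp ∩ T).Infinite) :
    G.HasTJoin T := by
  exact TJ.main_s11 G T h2ec hinf
end
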